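/- For every f ∈ 𝒮 with logarithmic coefficients γ_n, the inequality ∑_{n=1}^∞ (n²/(n² + 4/3)) |γ_n|² ≤ ((2π/√3) coth(2π/√3) − 1)/(8/3) holds (the right-hand side equals ∑_{n=1}^∞ 1/(n² + 4/3) ≈ 0.98727); the inequality is strict unless f is a rotation z/(1−e^{iθ}z)² of the Koebe function. -/

import Mathlib

/-!
The inequality is proved by a de Branges type argument for the coefficients `c_k = 2 γ_k` of
`log (f z / z)`, run along slit maps instead of a full Löwner chain.

*Weights.* Let `w = ww t s` be the flow line of `∂ₜ w = - w (1 - w)/(1 + w)` with `w = e^{-s}` at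
`t = 0`. The cosine transforms at frequency `2/√3` of `wᵏ` and of `wᵏ (1 - w)/(1 + w)` give
functions `T_k`, `S_k` with `T_k' = - k S_k`, `T_k - T_{k+1} = S_k + S_{k+1}` and
`T_k(0) = k/(k² + 4/3)`. The crucial point is `S_k ≥ 0`: the kernels are compared with one explicit
kernel `bker`, whose cosine transform is bounded below by its pairing with a Taylor polynomial of
the cosine. For `k = 1` there is room to spare, so `T_1(0)` may be lowered by some `ε > 0`
(`exists_weightSystem`).

*Monotonicity.* Composing `g z = z exp (G z)` with the slit map `v/(1 + v)² = e^{-δ} z/(1 + z)²`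
moves the coefficients by `c_k' = -(B_k + B_{k-1})`, `B_k = 1 + ∑_{j ≤ k} j c_j`. Abel summation
then shows that `∑ (k T_k |c_k|² - 4 T_k / k)` does not increase when the time of the weights runs
backwards along the evolution (`dissipation`, `EE_step`). The package `PP` contains this estimate
together with `|a₂| ≤ 2` and `|a₃ - a₂²| ≤ 1`, and is preserved by slit steps (`PP_step`).

*All univalent functions.* Let `f` be univalent on a larger disk, and consider the factorizations
`f = g ∘ ω` with `g = α z exp G` univalent, uniformly bounded and satisfying `PP`. One exists with
`G = 0`. By normal families and Hurwitz's theorem `|α|` attains its minimum. If `|α| > 1`, the image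
of `f` stays away from some boundary point of the image of `g`, so by the length-area principle `ω`
stays away from a point of the unit circle (`free_point`), and a slit map can be split off `ω`,
which lowers `|α|` (`Tri.step`). Hence `|α| = 1`, `ω` is a rotation, and `f` satisfies `PP`. The
general case follows by dilation (`PP_of_univalent`).

*Equality.* The deficit `ε` turns the estimate into
`∑ n²/(n² + 4/3) |γ_n|² ≤ ∑ 1/(n² + 4/3) - ε (1 - |γ₁|²)`, so equality forces `|a₂| = 2`. After a
rotation `a₂ = 2`. The second coefficient `y(x)` of the translate of `f` by the disk automorphism
`(z + x)/(1 + x z)` satisfies `(1 - x²) y' = 3 (a₃ - a₂²) + y² - 1`, with the coefficients on the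
right those of the translate. Since `|a₃ - a₂²| ≤ 1` and `|y| ≤ 2`, Grönwall's inequality gives
`y = 2` on `[0, 1)`, a differential equation whose only normalized solution is the Koebe function
(`koebe_of_norm_two`).

The closed form of the right-hand side is the Mittag-Leffler expansion of the cotangent
(`tsum_weights`).
-/


open Complex Metric Real

/-- The class `𝒮` of normalized univalent (analytic and injective) functions
on the unit disk. -/
def InClassS (f : ℂ → ℂ) : Prop :=
  AnalyticOnNhd ℂ f (ball (0 : ℂ) 1) ∧ Set.InjOn f (ball (0 : ℂ) 1) ∧
    f 0 = 0 ∧ deriv f 0 = 1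

/-- `γ` are the logarithmic coefficients of `f`: there is an analytic branch `g`
of `log (f z / z)` on the unit disk with `g 0 = 0` whose Taylor coefficients at `0`
are `2 * γ n` for `n ≥ 1`. -/
def IsLogCoeffs (f : ℂ → ℂ) (γ : ℕ → ℂ) : Prop :=
  ∃ g : ℂ → ℂ, AnalyticOnNhd ℂ g (ball (0 : ℂ) 1) ∧ g 0 = 0 ∧
    (∀ z ∈ ball (0 : ℂ) 1, z ≠ 0 → Complex.exp (g z) = f z / z) ∧
    ∀ n : ℕ, 1 ≤ n → iteratedDeriv n g 0 = (n.factorial : ℂ) * (2 * γ n)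

/-- `f` coincides on the unit disk with a rotation `z / (1 - e^{iθ} z)^2`
of the Koebe function. -/
def IsKoebeRotation (f : ℂ → ℂ) : Prop :=
  ∃ θ : ℝ, Set.EqOn f
    (fun z => z / (1 - Complex.exp (θ * Complex.I) * z) ^ 2) (ball (0 : ℂ) 1)

/-! ### The flow lines carrying the weights -/

/-- The scale variable `e^{t/2} sinh(s/2)`. -/
noncomputable def wx (t s : ℝ) : ℝ := Real.exp (t / 2) * Real.sinh (s / 2)

/-- With `w = ww t s` one has `wa t s = (1 - w)/(1 + w)`; at `t = 0` it is `tanh (s/2)`. -/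
noncomputable def wa (t s : ℝ) : ℝ := wx t s / √(1 + wx t s ^ 2)

/-- The flow line `w` of `∂ₜ w = - w (1 - w)/(1 + w)` starting from `w = e^{-s}` at `t = 0`. -/
noncomputable def ww (t s : ℝ) : ℝ := (1 - wa t s) / (1 + wa t s)

lemma wa_sq (t s : ℝ) : 1 - wa t s ^ 2 = 1 / (1 + wx t s ^ 2) := by
  have h : 0 < 1 + wx t s ^ 2 := by positivity
  rw [wa, div_pow, Real.sq_sqrt h.le]
  field_simp
  ring

lemma wa_abs_lt (t s : ℝ) : -1 < wa t s ∧ wa t s < 1 := by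
  have h : 0 < 1 - wa t s ^ 2 := by rw [wa_sq]; positivity
  constructor <;> nlinarith

lemma wx_nonneg {t s : ℝ} (hs : 0 ≤ s) : 0 ≤ wx t s := by
  have : 0 ≤ Real.sinh (s / 2) := Real.sinh_nonneg_iff.2 (by linarith)
  exact mul_nonneg (Real.exp_pos _).le this

lemma wa_nonneg {t s : ℝ} (hs : 0 ≤ s) : 0 ≤ wa t s :=
  div_nonneg (wx_nonneg hs) (Real.sqrt_nonneg _)

lemma wx_pos {t s : ℝ} (hs : 0 < s) : 0 < wx t s := by
  have : 0 < Real.sinh (s / 2) := Real.sinh_pos_iff.2 (by linarith)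
  exact mul_pos (Real.exp_pos _) this

lemma wa_pos {t s : ℝ} (hs : 0 < s) : 0 < wa t s :=
  div_pos (wx_pos hs) (Real.sqrt_pos.2 (by positivity))

/-- Derivative of `x / √(1 + x²)` along a curve `x` with logarithmic derivative `l`. -/
lemma hasDerivAt_wa_aux {x : ℝ → ℝ} {l r : ℝ} (h : HasDerivAt x (l * x r) r) :
    HasDerivAt (fun r => x r / √(1 + x r ^ 2))
      (l * ((x r / √(1 + x r ^ 2)) * (1 - (x r / √(1 + x r ^ 2)) ^ 2))) r := by
  have hp : 0 < 1 + x r ^ 2 := by positivity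
  have h1 : HasDerivAt (fun r => 1 + x r ^ 2) (2 * x r * (l * x r)) r := by
    simpa using (h.pow 2).const_add 1
  have h2 := h.div (h1.sqrt hp.ne') (Real.sqrt_pos.2 hp).ne'
  refine h2.congr_deriv ?_
  have hs : √(1 + x r ^ 2) ^ 2 = 1 + x r ^ 2 := Real.sq_sqrt hp.le
  have hs0 : √(1 + x r ^ 2) ≠ 0 := (Real.sqrt_pos.2 hp).ne'
  field_simp

lemma hasDerivAt_wa_t (t s : ℝ) :
    HasDerivAt (fun t => wa t s) (wa t s * (1 - wa t s ^ 2) / 2) t := by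
  have h : HasDerivAt (fun t => wx t s) ((1 / 2) * wx t s) t := by
    have h1 : HasDerivAt (fun t : ℝ => Real.exp (t / 2)) (Real.exp (t / 2) * (1 / 2)) t :=
      ((hasDerivAt_id t).div_const 2).exp
    refine (h1.mul_const (Real.sinh (s / 2))).congr_deriv ?_
    simp only [wx]; ring
  refine (hasDerivAt_wa_aux h).congr_deriv ?_
  simp only [wa]; ring

lemma wa_zero (s : ℝ) : wa 0 s = Real.sinh (s / 2) / Real.cosh (s / 2) := by
  have h : 1 + Real.sinh (s / 2) ^ 2 = Real.cosh (s / 2) ^ 2 := by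
    rw [Real.cosh_sq]; ring
  simp only [wa, wx]
  rw [zero_div, Real.exp_zero, one_mul, h, Real.sqrt_sq (Real.cosh_pos _).le]

lemma hasDerivAt_wa_s (t : ℝ) {s : ℝ} (hs : 0 < s) :
    HasDerivAt (fun s => wa t s) (wa t s * (1 - wa t s ^ 2) / (2 * wa 0 s)) s := by
  have hsh : 0 < Real.sinh (s / 2) := Real.sinh_pos_iff.2 (by linarith)
  have hch : 0 < Real.cosh (s / 2) := Real.cosh_pos _
  have h : HasDerivAt (fun s => wx t s) ((1 / (2 * wa 0 s)) * wx t s) s := by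
    have h1 : HasDerivAt (fun s : ℝ => Real.sinh (s / 2)) (Real.cosh (s / 2) * (1 / 2)) s :=
      ((hasDerivAt_id s).div_const 2).sinh
    refine (h1.const_mul (Real.exp (t / 2))).congr_deriv ?_
    rw [wa_zero]
    simp only [wx]
    field_simp
  refine (hasDerivAt_wa_aux h).congr_deriv ?_
  simp only [wa]; ring

lemma wa_mono_t {s : ℝ} (hs : 0 ≤ s) : Monotone (fun t => wa t s) := by
  refine monotone_of_deriv_nonneg (fun t => (hasDerivAt_wa_t t s).differentiableAt) fun t => ?_
  rw [(hasDerivAt_wa_t t s).deriv]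
  have h1 := wa_nonneg (t := t) hs
  have h2 : 0 ≤ 1 - wa t s ^ 2 := by rw [wa_sq]; positivity
  positivity

lemma ww_pos (t s : ℝ) : 0 < ww t s := by
  obtain ⟨h1, h2⟩ := wa_abs_lt t s
  exact div_pos (by linarith) (by linarith)

lemma ww_le_one {t s : ℝ} (hs : 0 ≤ s) : ww t s ≤ 1 := by
  have h1 := wa_nonneg (t := t) hs
  rw [ww, div_le_one (by linarith)]; linarith

lemma ww_rel (t s : ℝ) : wa t s * (1 + ww t s) = 1 - ww t s := by
  obtain ⟨h1, h2⟩ := wa_abs_lt t s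
  have : 1 + wa t s ≠ 0 := by linarith
  rw [ww]; field_simp; ring

lemma ww_eq (t s : ℝ) : ww t s = ((√(1 + wx t s ^ 2) + wx t s) ^ 2)⁻¹ := by
  have hp : 0 < 1 + wx t s ^ 2 := by positivity
  have hq : 0 < √(1 + wx t s ^ 2) := Real.sqrt_pos.2 hp
  have hs : √(1 + wx t s ^ 2) ^ 2 = 1 + wx t s ^ 2 := Real.sq_sqrt hp.le
  have hlt : |wx t s| < √(1 + wx t s ^ 2) := by
    rw [← Real.sqrt_sq_eq_abs]; exact Real.sqrt_lt_sqrt (sq_nonneg _) (by linarith)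
  have h1 : 0 < √(1 + wx t s ^ 2) + wx t s := by linarith [(abs_lt.1 hlt).1]
  rw [ww, wa]
  rw [eq_comm, inv_eq_one_div]
  field_simp
  nlinarith

lemma ww_zero (s : ℝ) : ww 0 s = Real.exp (-s) := by
  have h : 1 + Real.sinh (s / 2) ^ 2 = Real.cosh (s / 2) ^ 2 := by
    rw [Real.cosh_sq]; ring
  rw [ww_eq]
  simp only [wx]
  rw [zero_div, Real.exp_zero, one_mul, h, Real.sqrt_sq (Real.cosh_pos _).le,
    Real.cosh_add_sinh, ← Real.exp_nat_mul, ← Real.exp_neg]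
  congr 1; push_cast; ring

lemma ww_le (t : ℝ) {s : ℝ} (hs : 0 ≤ s) : ww t s ≤ Real.exp |t| * Real.exp (-s) := by
  have h : 1 + Real.sinh (s / 2) ^ 2 = Real.cosh (s / 2) ^ 2 := by
    rw [Real.cosh_sq]; ring
  have he : Real.exp (-|t| / 2) ≤ Real.exp (t / 2) :=
    Real.exp_le_exp.2 (by linarith [neg_abs_le t])
  have he1 : Real.exp (-|t| / 2) ≤ 1 := by
    rw [Real.exp_le_one_iff]; linarith [abs_nonneg t]
  have hpos := Real.exp_pos (-|t| / 2)
  have hsh : 0 ≤ Real.sinh (s / 2) := Real.sinh_nonneg_iff.2 (by linarith)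
  have hx : Real.exp (-|t| / 2) * Real.sinh (s / 2) ≤ wx t s := by
    rw [wx]; gcongr
  have hq : Real.exp (-|t| / 2) * Real.cosh (s / 2) ≤ √(1 + wx t s ^ 2) := by
    apply Real.le_sqrt_of_sq_le
    rw [mul_pow, ← h, mul_add, mul_one, ← mul_pow]
    have := pow_le_pow_left₀ (by positivity) hx 2
    have h2 : Real.exp (-|t| / 2) ^ 2 ≤ 1 := pow_le_one₀ hpos.le he1
    linarith
  have hsum : Real.exp (-|t| / 2) * Real.exp (s / 2) ≤ √(1 + wx t s ^ 2) + wx t s := by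
    rw [← Real.cosh_add_sinh (s / 2), mul_add]; linarith
  rw [ww_eq]
  have h3 : (Real.exp |t| * Real.exp (-s)) = ((Real.exp (-|t| / 2) * Real.exp (s / 2)) ^ 2)⁻¹ := by
    rw [← Real.exp_add, ← Real.exp_add, ← Real.exp_nat_mul, ← Real.exp_neg]
    congr 1; push_cast; ring
  rw [h3]
  gcongr

lemma hasDerivAt_ww_aux {a : ℝ → ℝ} {a' r : ℝ} (h : HasDerivAt a a' r) (h1 : 1 + a r ≠ 0) :
    HasDerivAt (fun r => (1 - a r) / (1 + a r)) (-2 * a' / (1 + a r) ^ 2) r := by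
  refine ((h.const_sub 1).div (h.const_add 1) h1).congr_deriv ?_
  ring

lemma hasDerivAt_ww_t (t s : ℝ) :
    HasDerivAt (fun t => ww t s) (-(wa t s * ww t s)) t := by
  obtain ⟨h1, h2⟩ := wa_abs_lt t s
  have h3 : 1 + wa t s ≠ 0 := by linarith
  refine (hasDerivAt_ww_aux (hasDerivAt_wa_t t s) h3).congr_deriv ?_
  simp only [ww]
  field_simp
  ring

lemma hasDerivAt_ww_s (t : ℝ) {s : ℝ} (hs : 0 < s) :
    HasDerivAt (fun s => ww t s) (ww t s * (-2 * wa t s) / (2 * wa 0 s)) s := by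
  obtain ⟨h1, h2⟩ := wa_abs_lt t s
  have h3 : 1 + wa t s ≠ 0 := by linarith
  have h4 := (wa_pos (t := 0) hs).ne'
  refine (hasDerivAt_ww_aux (hasDerivAt_wa_s t hs) h3).congr_deriv ?_
  simp only [ww]
  field_simp
  ring

lemma continuous_wa (t : ℝ) : Continuous (fun s => wa t s) := by
  unfold wa wx
  refine Continuous.div (by fun_prop) (by fun_prop) fun s => ?_
  exact (Real.sqrt_pos.2 (by positivity)).ne'

lemma continuous_ww (t : ℝ) : Continuous (fun s => ww t s) := by
  unfold ww
  refine Continuous.div (continuous_const.sub (continuous_wa t)) ?_ fun s => ?_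
  · exact continuous_const.add (continuous_wa t)
  · linarith [(wa_abs_lt t s).1]

/-! ### Positivity of cosine transforms -/

open MeasureTheory Set

/-- The degree six Taylor polynomial of the cosine as a function of the squared variable. -/
noncomputable def cosq (y : ℝ) : ℝ := 1 - y / 2 + y ^ 2 / 24 - y ^ 3 / 720

lemma cosq_le_cos_aux {z : ℝ} (hz : 0 ≤ z) : cosq (z ^ 2) ≤ Real.cos z := by
  -- successive integration of `sin z ≤ z`
  have key : ∀ (F F' : ℝ → ℝ), (∀ x, HasDerivAt F (F' x) x) → F 0 = 0 → (∀ x, 0 ≤ x → 0 ≤ F' x) →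
      ∀ x, 0 ≤ x → 0 ≤ F x := by
    intro F F' hF h0 hF' x hx
    have : MonotoneOn F (Ici 0) := by
      refine monotoneOn_of_deriv_nonneg (convex_Ici 0)
        (fun x _ => (hF x).continuousAt.continuousWithinAt)
        (fun x _ => (hF x).differentiableAt.differentiableWithinAt) fun x hx => ?_
      rw [(hF x).deriv]; exact hF' x (interior_subset hx)
    rw [← h0]; exact this (mem_Ici.2 le_rfl) hx hx
  have h0 : ∀ x : ℝ, 0 ≤ x → 0 ≤ x - Real.sin x := fun x hx => sub_nonneg.2 (Real.sin_le hx)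
  have h1 : ∀ x : ℝ, 0 ≤ x → 0 ≤ Real.cos x - 1 + x ^ 2 / 2 := by
    refine key _ (fun x => x - Real.sin x) (fun x => ?_) (by simp) h0
    refine (((Real.hasDerivAt_cos x).sub_const 1).add
      ((hasDerivAt_pow 2 x).div_const 2)).congr_deriv ?_
    simp; ring
  have h2 : ∀ x : ℝ, 0 ≤ x → 0 ≤ Real.sin x - x + x ^ 3 / 6 := by
    refine key _ (fun x => Real.cos x - 1 + x ^ 2 / 2) (fun x => ?_) (by simp) h1
    refine (((Real.hasDerivAt_sin x).sub (hasDerivAt_id x)).add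
      ((hasDerivAt_pow 3 x).div_const 6)).congr_deriv ?_
    simp; ring
  have h3 : ∀ x : ℝ, 0 ≤ x → 0 ≤ 1 - Real.cos x - x ^ 2 / 2 + x ^ 4 / 24 := by
    refine key _ (fun x => Real.sin x - x + x ^ 3 / 6) (fun x => ?_) (by simp) h2
    refine ((((Real.hasDerivAt_cos x).const_sub 1).sub
      ((hasDerivAt_pow 2 x).div_const 2)).add ((hasDerivAt_pow 4 x).div_const 24)).congr_deriv ?_
    simp; ring
  have h4 : ∀ x : ℝ, 0 ≤ x → 0 ≤ x - Real.sin x - x ^ 3 / 6 + x ^ 5 / 120 := by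
    refine key _ (fun x => 1 - Real.cos x - x ^ 2 / 2 + x ^ 4 / 24) (fun x => ?_) (by simp) h3
    refine ((((hasDerivAt_id x).sub (Real.hasDerivAt_sin x)).sub
      ((hasDerivAt_pow 3 x).div_const 6)).add ((hasDerivAt_pow 5 x).div_const 120)).congr_deriv ?_
    simp; ring
  have h5 : ∀ x : ℝ, 0 ≤ x → 0 ≤ Real.cos x - 1 + x ^ 2 / 2 - x ^ 4 / 24 + x ^ 6 / 720 := by
    refine key _ (fun x => x - Real.sin x - x ^ 3 / 6 + x ^ 5 / 120) (fun x => ?_) (by simp) h4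
    refine (((((Real.hasDerivAt_cos x).sub_const 1).add
      ((hasDerivAt_pow 2 x).div_const 2)).sub ((hasDerivAt_pow 4 x).div_const 24)).add
      ((hasDerivAt_pow 6 x).div_const 720)).congr_deriv ?_
    simp; ring
  have := h5 z hz
  unfold cosq
  nlinarith [this]

lemma cosq_antitone : Antitone cosq := by
  intro x y hxy
  unfold cosq
  have : 0 ≤ (y - x) * (1 / 2 - (x + y) / 24 + (x ^ 2 + x * y + y ^ 2) / 720) := by
    apply mul_nonneg (by linarith)
    nlinarith [sq_nonneg (x - y), sq_nonneg (x + y - 20)]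
  nlinarith [this]

/-- The frequency `β = 2/√3`. -/
noncomputable def bet : ℝ := 2 / √3

lemma bet_sq : bet ^ 2 = 4 / 3 := by
  rw [bet, div_pow, Real.sq_sqrt (by norm_num)]; norm_num

lemma bet_pos : 0 < bet := by unfold bet; positivity

lemma cosq_le_cos {s : ℝ} (hs : 0 ≤ s) : cosq (4 / 3 * s ^ 2) ≤ Real.cos (bet * s) := by
  have := cosq_le_cos_aux (mul_nonneg bet_pos.le hs)
  rwa [mul_pow, bet_sq] at this

lemma exists_cosq_zero : ∃ s₀ : ℝ, 0 < s₀ ∧ cosq (4 / 3 * s₀ ^ 2) = 0 := by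
  have h : (0 : ℝ) ∈ (fun s : ℝ => cosq (4 / 3 * s ^ 2)) '' Icc 0 3 := by
    refine intermediate_value_Icc' (by norm_num) ?_ ?_
    · unfold cosq; fun_prop
    · constructor <;> norm_num [cosq]
  obtain ⟨s, hs, h⟩ := h
  refine ⟨s, lt_of_le_of_ne hs.1 ?_, h⟩
  rintro rfl
  norm_num [cosq] at h

/-- The base kernel `u² (1 - u) (1 - u/2)⁵`, `u = e^{-s}`. -/
noncomputable def bker (s : ℝ) : ℝ :=
  Real.exp (-s) ^ 2 * (1 - Real.exp (-s)) * (1 - Real.exp (-s) / 2) ^ 5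

lemma bker_pos {s : ℝ} (hs : 0 < s) : 0 < bker s := by
  have h1 : Real.exp (-s) < 1 := by rw [Real.exp_lt_one_iff]; linarith
  have h2 := Real.exp_pos (-s)
  unfold bker
  have : 0 < 1 - Real.exp (-s) := by linarith
  have : 0 < 1 - Real.exp (-s) / 2 := by linarith
  positivity

/-- The logarithmic derivative of `bker` with respect to `log sinh (s/2)`. -/
noncomputable def phiB (a : ℝ) : ℝ := 1 - 5 * a + 10 * a * (1 - a) / (1 + 3 * a)

lemma hasDerivAt_bker {s : ℝ} (hs : 0 < s) :
    HasDerivAt bker (bker s * phiB (wa 0 s) / (2 * wa 0 s)) s := by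
  have ha := wa_pos (t := 0) hs
  have h1 : HasDerivAt (fun s : ℝ => Real.exp (-s)) (-Real.exp (-s)) s := by
    simpa using (hasDerivAt_neg s).exp
  have hB := ((h1.pow 2).mul (h1.const_sub 1)).mul (((h1.div_const 2).const_sub 1).pow 5)
  refine hB.congr_deriv ?_
  have h2 : Real.exp (-s) = (1 - wa 0 s) / (1 + wa 0 s) := by rw [← ww_zero]; rfl
  have h3 : 1 + wa 0 s ≠ 0 := by positivity
  have h4 : 1 + 3 * wa 0 s ≠ 0 := by positivity
  have e1 : 1 - Real.exp (-s) = 2 * wa 0 s / (1 + wa 0 s) := by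
    rw [h2]; field_simp; ring
  have e2 : 1 - Real.exp (-s) / 2 = (1 + 3 * wa 0 s) / (2 * (1 + wa 0 s)) := by
    rw [h2]; field_simp; ring
  simp only [bker, phiB, Pi.mul_apply, Pi.pow_apply]
  rw [e2, e1, h2]
  generalize wa 0 s = a at *
  norm_num
  field_simp
  ring

lemma moment (j : ℕ) {k : ℝ} (hk : 0 < k) :
    IntegrableOn (fun s : ℝ => s ^ j * Real.exp (-(k * s))) (Ioi 0) ∧
    ∫ s in Ioi (0 : ℝ), s ^ j * Real.exp (-(k * s)) = j.factorial / k ^ (j + 1) := by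
  have hj : (0 : ℝ) < (j : ℝ) + 1 := by positivity
  constructor
  · have := integrableOn_rpow_mul_exp_neg_mul_rpow (p := 1) (s := j) (b := k) (by linarith)
      one_pos hk
    refine this.congr_fun (fun s hs => ?_) measurableSet_Ioi
    simp
  · have := Real.integral_rpow_mul_exp_neg_mul_Ioi hj hk
    rw [Real.Gamma_nat_eq_factorial] at this
    have e : ∫ s in Ioi (0 : ℝ), s ^ j * Real.exp (-(k * s)) =
        ∫ t in Ioi (0 : ℝ), t ^ ((j : ℝ) + 1 - 1) * Real.exp (-(k * t)) := by simp
    rw [e, this, show ((j : ℝ) + 1) = ((j + 1 : ℕ) : ℝ) by push_cast; ring, Real.rpow_natCast,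
      one_div, inv_pow]
    ring

lemma cosq_moment {k : ℝ} (hk : 0 < k) :
    IntegrableOn (fun s : ℝ => Real.exp (-(k * s)) * cosq (4 / 3 * s ^ 2)) (Ioi 0) ∧
    ∫ s in Ioi (0 : ℝ), Real.exp (-(k * s)) * cosq (4 / 3 * s ^ 2) =
      1 / k - (4 / 3) / k ^ 3 + (16 / 9) / k ^ 5 - (64 / 27) / k ^ 7 := by
  have e : ∀ s : ℝ, Real.exp (-(k * s)) * cosq (4 / 3 * s ^ 2) =
      s ^ 0 * Real.exp (-(k * s)) + (-2 / 3) * (s ^ 2 * Real.exp (-(k * s)))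
      + (2 / 27) * (s ^ 4 * Real.exp (-(k * s))) + (-64 / 27 / 720) * (s ^ 6 * Real.exp (-(k * s))) := by
    intro s; unfold cosq; ring
  simp_rw [e]
  have i0 := (moment 0 hk)
  have i2 := (moment 2 hk)
  have i4 := (moment 4 hk)
  have i6 := (moment 6 hk)
  have j2 := i2.1.const_mul (-2 / 3)
  have j4 := i4.1.const_mul (2 / 27)
  have j6 := i6.1.const_mul (-64 / 27 / 720)
  refine ⟨((i0.1.add j2).add j4).add j6, ?_⟩
  have a1 := integral_add i0.1 j2
  have a2 := integral_add (i0.1.add j2) j4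
  have a3 := integral_add ((i0.1.add j2).add j4) j6
  simp only [Pi.add_apply] at a1 a2 a3
  rw [a3, a2, a1, integral_const_mul, integral_const_mul, integral_const_mul,
    i0.2, i2.2, i4.2, i6.2]
  norm_num [Nat.factorial]
  ring

lemma bker_cosq :
    IntegrableOn (fun s : ℝ => bker s * cosq (4 / 3 * s ^ 2)) (Ioi 0) ∧
    0 ≤ ∫ s in Ioi (0 : ℝ), bker s * cosq (4 / 3 * s ^ 2) := by
  have ex : ∀ (n : ℕ) (s : ℝ), Real.exp (-s) ^ n = Real.exp (-((n : ℝ) * s)) := by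
    intro n s; rw [← Real.exp_nat_mul]; congr 1; ring
  have e : ∀ s : ℝ, bker s * cosq (4 / 3 * s ^ 2) =
      ∑ i ∈ Finset.range 7, (![1, -7/2, 5, -15/4, 25/16, -11/32, 1/32] : Fin 7 → ℝ) (Fin.ofNat 7 i) *
        (Real.exp (-(((i + 2 : ℕ) : ℝ) * s)) * cosq (4 / 3 * s ^ 2)) := by
    intro s
    simp_rw [← ex]
    simp [Finset.sum_range_succ, bker, Fin.ofNat]
    ring
  simp_rw [e]
  have hi : ∀ i : ℕ, (0 : ℝ) < ((i + 2 : ℕ) : ℝ) := fun i => by positivity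
  have hintg : ∀ i ∈ Finset.range 7, IntegrableOn (fun s : ℝ =>
      (![1, -7/2, 5, -15/4, 25/16, -11/32, 1/32] : Fin 7 → ℝ) (Fin.ofNat 7 i) *
        (Real.exp (-(((i + 2 : ℕ) : ℝ) * s)) * cosq (4 / 3 * s ^ 2))) (Ioi 0) :=
    fun i _ => ((cosq_moment (hi i)).1).const_mul _
  refine ⟨integrable_finsetSum _ hintg, ?_⟩
  rw [integral_finsetSum _ hintg]
  simp_rw [integral_const_mul, fun i => (cosq_moment (hi i)).2]
  simp [Finset.sum_range_succ, Fin.ofNat]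
  norm_num

/-- A nonnegative kernel whose logarithmic derivative is dominated by that of `bker` has a
nonnegative cosine transform at frequency `bet`. -/
lemma cos_integral_nonneg {Ψ φ : ℝ → ℝ} (hΨ : ∀ s, 0 < s → 0 ≤ Ψ s)
    (hd : ∀ s, 0 < s → HasDerivAt Ψ (Ψ s * φ s / (2 * wa 0 s)) s)
    (hφ : ∀ s, 0 < s → φ s ≤ phiB (wa 0 s))
    (hintg : IntegrableOn (fun s => Ψ s * Real.cos (bet * s)) (Ioi 0)) :
    0 ≤ ∫ s in Ioi (0 : ℝ), Ψ s * Real.cos (bet * s) := by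
  have hanti : AntitoneOn (fun s => Ψ s / bker s) (Ioi 0) := by
    have hD : ∀ s, 0 < s → HasDerivAt (fun s => Ψ s / bker s)
        (Ψ s / bker s * (φ s - phiB (wa 0 s)) / (2 * wa 0 s)) s := by
      intro s hs
      have hb := bker_pos hs
      have ha := wa_pos (t := 0) hs
      refine ((hd s hs).div (hasDerivAt_bker hs) hb.ne').congr_deriv ?_
      field_simp
    refine antitoneOn_of_deriv_nonpos (convex_Ioi 0)
      (fun s hs => (hD s hs).continuousAt.continuousWithinAt)
      (fun s hs => (hD s (interior_subset hs)).differentiableAt.differentiableWithinAt) fun s hs => ?_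
    have hs' : 0 < s := interior_subset hs
    rw [(hD s hs').deriv]
    have h1 := div_nonneg (hΨ s hs') (bker_pos hs').le
    have h2 := wa_pos (t := 0) hs'
    have h3 := hφ s hs'
    apply div_nonpos_of_nonpos_of_nonneg _ (by positivity)
    exact mul_nonpos_of_nonneg_of_nonpos h1 (by linarith)
  -- `Ψ / bker` is decreasing and `cosq` changes sign once, at `s₀`, so replacing `Ψ / bker` by its
  -- value at `s₀` only lowers the integral
  obtain ⟨s₀, hs₀, hz⟩ := exists_cosq_zero
  set ρ := Ψ s₀ / bker s₀ with hρ
  have hρ0 : 0 ≤ ρ := div_nonneg (hΨ _ hs₀) (bker_pos hs₀).le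
  calc 0 ≤ ρ * ∫ s in Ioi (0 : ℝ), bker s * cosq (4 / 3 * s ^ 2) := mul_nonneg hρ0 bker_cosq.2
    _ = ∫ s in Ioi (0 : ℝ), ρ * (bker s * cosq (4 / 3 * s ^ 2)) := (integral_const_mul _ _).symm
    _ ≤ _ := by
      refine setIntegral_mono_on (bker_cosq.1.const_mul _) hintg measurableSet_Ioi fun s hs => ?_
      have hs' : 0 < s := hs
      have hb := bker_pos hs'
      have h1 : Ψ s * cosq (4 / 3 * s ^ 2) ≤ Ψ s * Real.cos (bet * s) :=
        mul_le_mul_of_nonneg_left (cosq_le_cos hs'.le) (hΨ s hs')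
      refine le_trans ?_ h1
      have h2 : 0 ≤ (Ψ s / bker s - ρ) * cosq (4 / 3 * s ^ 2) := by
        rcases le_total s s₀ with h | h
        · have h3 : ρ ≤ Ψ s / bker s := hanti hs hs₀ h
          have h4 : 0 ≤ cosq (4 / 3 * s ^ 2) := by
            rw [← hz]; apply cosq_antitone; gcongr
          exact mul_nonneg (by linarith) h4
        · have h3 : Ψ s / bker s ≤ ρ := hanti hs₀ hs h
          have h4 : cosq (4 / 3 * s ^ 2) ≤ 0 := by
            rw [← hz]; apply cosq_antitone; gcongr
          exact mul_nonneg_of_nonpos_of_nonpos (by linarith) h4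
      have h5 : bker s * ((Ψ s / bker s - ρ) * cosq (4 / 3 * s ^ 2)) =
          Ψ s * cosq (4 / 3 * s ^ 2) - ρ * (bker s * cosq (4 / 3 * s ^ 2)) := by
        field_simp
      nlinarith [mul_nonneg hb.le h2]

/-! ### The cosine transforms `τ_k`, `σ_k` -/

lemma integrableOn_exp_neg_nat {k : ℝ} (hk : 0 < k) (C : ℝ) :
    IntegrableOn (fun s : ℝ => C * Real.exp (-(k * s))) (Ioi 0) := by
  have := (moment 0 hk).1.const_mul C
  simpa [IntegrableOn] using this

/-- Domination of a kernel `b · wᵏ · cos`, `|b| ≤ C`. -/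
lemma integrableOn_kernel {t C : ℝ} {k : ℕ} (hk : 1 ≤ k) {b : ℝ → ℝ} (hb : Continuous b)
    (hC : ∀ s, 0 ≤ s → |b s| ≤ C) :
    IntegrableOn (fun s => b s * ww t s ^ k * Real.cos (bet * s)) (Ioi 0) := by
  have hk' : (0 : ℝ) < k := by exact_mod_cast hk
  have hc := continuous_ww t
  refine Integrable.mono' (integrableOn_exp_neg_nat hk' (C * Real.exp |t| ^ k)) ?_ ?_
  · exact Continuous.aestronglyMeasurable (by fun_prop)
  · refine (ae_restrict_iff' measurableSet_Ioi).2 (Filter.Eventually.of_forall fun s hs => ?_)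
    have hs' : 0 ≤ s := le_of_lt hs
    rw [norm_mul, norm_mul, norm_pow, Real.norm_eq_abs, Real.norm_eq_abs, Real.norm_eq_abs,
      abs_of_pos (ww_pos t s)]
    have h1 := hC s hs'
    have h2 : ww t s ^ k ≤ (Real.exp |t| * Real.exp (-s)) ^ k :=
      pow_le_pow_left₀ (ww_pos t s).le (ww_le t hs') k
    have h3 := Real.abs_cos_le_one (bet * s)
    have hC0 : 0 ≤ C := (abs_nonneg _).trans h1
    calc |b s| * ww t s ^ k * |Real.cos (bet * s)|
        ≤ C * (Real.exp |t| * Real.exp (-s)) ^ k * 1 := by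
          have := pow_nonneg (ww_pos t s).le k
          gcongr
      _ = _ := by
          rw [mul_pow, mul_one, ← Real.exp_nat_mul (-s)]
          rw [show (k : ℝ) * -s = -(k * s) by ring]; ring

lemma wa_abs_le_one (t : ℝ) {s : ℝ} (_ : 0 ≤ s) : |wa t s| ≤ 1 :=
  abs_le.2 ⟨(wa_abs_lt t s).1.le, (wa_abs_lt t s).2.le⟩

/-- The cosine transform of `wᵏ` at frequency `bet`, where `w = ww t s`. -/
noncomputable def tau (k : ℕ) (t : ℝ) : ℝ := ∫ s in Ioi (0 : ℝ), ww t s ^ k * Real.cos (bet * s)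

/-- The cosine transform of `a wᵏ` at frequency `bet`, where `w = ww t s` and
`a = wa t s = (1 - w)/(1 + w)`. -/
noncomputable def sig (k : ℕ) (t : ℝ) : ℝ :=
  ∫ s in Ioi (0 : ℝ), wa t s * ww t s ^ k * Real.cos (bet * s)

lemma tau_int {k : ℕ} (hk : 1 ≤ k) (t : ℝ) :
    IntegrableOn (fun s => ww t s ^ k * Real.cos (bet * s)) (Ioi 0) := by
  simpa using integrableOn_kernel (t := t) hk (b := fun _ => 1) continuous_const
    (C := 1) (by simp)

lemma sig_int {k : ℕ} (hk : 1 ≤ k) (t : ℝ) :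
    IntegrableOn (fun s => wa t s * ww t s ^ k * Real.cos (bet * s)) (Ioi 0) :=
  integrableOn_kernel hk (continuous_wa t) (C := 1) fun _ hs => wa_abs_le_one t hs

lemma tau_sub {k : ℕ} (hk : 1 ≤ k) (t : ℝ) : tau k t - tau (k + 1) t = sig k t + sig (k + 1) t := by
  unfold tau sig
  rw [← integral_sub (tau_int hk t) (tau_int (by lia) t),
    ← integral_add (sig_int hk t) (sig_int (by lia) t)]
  congr 1
  ext s
  have := ww_rel t s
  have h : ww t s ^ k * (wa t s * (1 + ww t s)) = ww t s ^ k * (1 - ww t s) := by rw [this]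
  linear_combination (-Real.cos (bet * s)) * h

/-- Differentiation in `t` under the integral sign. -/
lemma hasDerivAt_kernel {k : ℕ} (hk : 1 ≤ k) (t₀ : ℝ) {b b' : ℝ → ℝ → ℝ} {C : ℝ}
    (hbc : ∀ t, Continuous (b t)) (hbc' : ∀ t, Continuous (b' t))
    (hbC : ∀ t s, 0 ≤ s → |b t s| ≤ C) (hbC' : ∀ t s, 0 ≤ s → |b' t s| ≤ C)
    (hd : ∀ t s, 0 ≤ s → HasDerivAt (fun t => b t s * ww t s ^ k) (b' t s * ww t s ^ k) t) :
    HasDerivAt (fun t => ∫ s in Ioi (0 : ℝ), b t s * ww t s ^ k * Real.cos (bet * s))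
      (∫ s in Ioi (0 : ℝ), b' t₀ s * ww t₀ s ^ k * Real.cos (bet * s)) t₀ := by
  have hk' : (0 : ℝ) < k := by exact_mod_cast hk
  refine (hasDerivAt_integral_of_dominated_loc_of_deriv_le (s := ball t₀ 1)
    (bound := fun s => (C * Real.exp (|t₀| + 1) ^ k) * Real.exp (-(k * s)))
    (F' := fun t s => b' t s * ww t s ^ k * Real.cos (bet * s)) (ball_mem_nhds _ one_pos)
    (Filter.Eventually.of_forall fun t => (integrableOn_kernel hk (hbc t) (hbC t)).1)
    (integrableOn_kernel hk (hbc t₀) (hbC t₀)) (integrableOn_kernel hk (hbc' t₀) (hbC' t₀)).1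
    ?_ (integrableOn_exp_neg_nat hk' _) ?_).2
  · refine (ae_restrict_iff' measurableSet_Ioi).2 (Filter.Eventually.of_forall fun s hs t ht => ?_)
    have hs' : 0 ≤ s := le_of_lt hs
    have ht' : |t| ≤ |t₀| + 1 := by
      rw [mem_ball, Real.dist_eq] at ht
      have := abs_sub_abs_le_abs_sub t t₀
      linarith
    rw [norm_mul, norm_mul, norm_pow, Real.norm_eq_abs, Real.norm_eq_abs, Real.norm_eq_abs,
      abs_of_pos (ww_pos t s)]
    have h1 := hbC' t s hs'
    have h2 : ww t s ^ k ≤ (Real.exp |t| * Real.exp (-s)) ^ k :=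
      pow_le_pow_left₀ (ww_pos t s).le (ww_le t hs') k
    have h3 := Real.abs_cos_le_one (bet * s)
    have hC0 : 0 ≤ C := (abs_nonneg _).trans h1
    calc |b' t s| * ww t s ^ k * |Real.cos (bet * s)|
        ≤ C * (Real.exp |t| * Real.exp (-s)) ^ k * 1 := by
          have := pow_nonneg (ww_pos t s).le k
          gcongr
      _ ≤ C * (Real.exp (|t₀| + 1) * Real.exp (-s)) ^ k * 1 := by gcongr
      _ = _ := by
          rw [mul_pow, mul_one, ← Real.exp_nat_mul (-s)]
          rw [show (k : ℝ) * -s = -(k * s) by ring]; ring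
  · refine (ae_restrict_iff' measurableSet_Ioi).2 (Filter.Eventually.of_forall fun s hs t _ => ?_)
    exact (hd t s (le_of_lt hs)).mul_const _

lemma hasDerivAt_tau {k : ℕ} (hk : 1 ≤ k) (t : ℝ) : HasDerivAt (tau k) (-(k * sig k t)) t := by
  have h := hasDerivAt_kernel hk t (b := fun _ _ => 1) (b' := fun t s => -(k * wa t s)) (C := k)
    (fun _ => continuous_const) (fun t => ((continuous_wa t).const_mul _).neg)
    (fun _ _ _ => by simpa using hk)
    (fun t s hs => by
      rw [abs_neg, abs_mul, Nat.abs_cast]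
      exact mul_le_of_le_one_right (by positivity) (wa_abs_le_one t hs)) ?_
  · have e : -(k * sig k t) =
        ∫ s in Ioi (0 : ℝ), -(k * wa t s) * ww t s ^ k * Real.cos (bet * s) := by
      rw [sig, ← neg_mul, ← integral_const_mul]
      congr 1; ext s; ring
    rw [e]
    simpa [tau] using! h
  · intro t s _
    have := (hasDerivAt_ww_t t s).pow k
    simp only [one_mul]
    refine this.congr_deriv ?_
    obtain ⟨m, rfl⟩ : ∃ m, k = m + 1 := ⟨k - 1, by lia⟩
    simp only [Nat.add_sub_cancel]; ring

lemma tau_le {k : ℕ} (hk : 1 ≤ k) {t : ℝ} (ht : 0 ≤ t) {b : ℝ → ℝ} (hb : Continuous b)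
    (hC : ∀ s, 0 ≤ s → |b s| ≤ 1) :
    ∫ s in Ioi (0 : ℝ), b s * ww t s ^ k * Real.cos (bet * s) ≤ 1 / k := by
  have hk' : (0 : ℝ) < k := by exact_mod_cast hk
  have h := (moment 0 hk').2
  have hi := (moment 0 hk').1
  simp only [pow_zero, one_mul, zero_add, pow_one, Nat.factorial_zero, Nat.cast_one] at h hi
  rw [← h]
  refine setIntegral_mono_on (integrableOn_kernel hk hb hC) hi measurableSet_Ioi fun s hs => ?_
  have hs' : 0 ≤ s := le_of_lt hs
  have hw : ww t s ≤ Real.exp (-s) := by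
    have h1 : ww t s ≤ ww 0 s := by
      have h2 : wa 0 s ≤ wa t s := wa_mono_t hs' ht
      have h3 := wa_nonneg (t := 0) hs'
      rw [ww, ww, div_le_div_iff₀ (by linarith) (by linarith)]
      nlinarith
    rwa [ww_zero] at h1
  refine (le_abs_self _).trans ?_
  rw [abs_mul, abs_mul, abs_pow, abs_of_pos (ww_pos t s)]
  have h3 := Real.abs_cos_le_one (bet * s)
  have h1 := hC s hs'
  calc |b s| * ww t s ^ k * |Real.cos (bet * s)| ≤ 1 * Real.exp (-s) ^ k * 1 := by
        have := (ww_pos t s).le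
        gcongr
    _ = _ := by
        rw [one_mul, mul_one, ← Real.exp_nat_mul]; congr 1; ring

lemma tau_zero {k : ℕ} (hk : 1 ≤ k) : tau k 0 = k / (k ^ 2 + 4 / 3) := by
  have hk' : (0 : ℝ) < k := by exact_mod_cast hk
  have hre : (-(k : ℂ) + bet * I).re < 0 := by simp [hk']
  have h := integral_exp_mul_complex_Ioi hre 0
  have hi := integrableOn_exp_mul_complex_Ioi hre 0
  have e : ∀ s : ℝ, ww 0 s ^ k * Real.cos (bet * s) =
      RCLike.re (Complex.exp ((-(k : ℂ) + bet * I) * s)) := by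
    intro s
    rw [ww_zero, ← Real.exp_nat_mul, RCLike.re_to_complex, Complex.exp_re]
    simp
  unfold tau
  simp_rw [e]
  rw [integral_re hi, h]
  have hb := bet_sq
  have hn : ((k : ℝ) ^ 2 + 4 / 3) ≠ 0 := by positivity
  rw [RCLike.re_to_complex]
  simp [Complex.div_re, Complex.normSq_apply]
  rw [← sq, ← sq, hb]

/-! ### Existence of a weight system -/

/-- The logarithmic derivative, with respect to `log sinh (s/2)`, of the kernel
`a (1 - a) (3 + a) w` as a function of `a = wa t s`. It also bounds that of `a wᵏ` for `k ≥ 2`. -/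
noncomputable def phiK (a : ℝ) : ℝ := 1 - 3 * a - 2 * a ^ 2 + a * (1 - a ^ 2) / (3 + a)

lemma phiK_le_phiB {a : ℝ} (h0 : 0 ≤ a) (h1 : a ≤ 1) : phiK a ≤ phiB a := by
  have h3 : (0 : ℝ) < 3 + a := by linarith
  have h4 : (0 : ℝ) < 1 + 3 * a := by linarith
  have e : phiB a - phiK a = a * (1 - a) ^ 2 * (23 + 9 * a) / ((3 + a) * (1 + 3 * a)) := by
    unfold phiB phiK; field_simp; ring
  have : 0 ≤ phiB a - phiK a := by rw [e]; positivity
  linarith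

lemma phiK_antitone {a b : ℝ} (h0 : 0 ≤ a) (hab : a ≤ b) (h1 : b ≤ 1) : phiK b ≤ phiK a := by
  have h3 : (0 : ℝ) < 3 + a := by linarith
  have h4 : (0 : ℝ) < 3 + b := by linarith
  have e : phiK a - phiK b = (b - a) * (3 + 2 * (a + b) -
      (3 - 3 * (a ^ 2 + a * b + b ^ 2) - a * b * (a + b)) / ((3 + a) * (3 + b))) := by
    unfold phiK; field_simp; ring
  have h5 : (3 - 3 * (a ^ 2 + a * b + b ^ 2) - a * b * (a + b)) / ((3 + a) * (3 + b)) ≤ 3 := by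
    have hb : 0 ≤ b := h0.trans hab
    rw [div_le_iff₀ (by positivity)]
    have : 0 ≤ a * b * (a + b) := by positivity
    have : 0 ≤ a * b := by positivity
    nlinarith [sq_nonneg (a + b), sq_nonneg (a - b)]
  have : 0 ≤ phiK a - phiK b := by
    rw [e]
    apply mul_nonneg (by linarith)
    nlinarith
  linarith

lemma phiK_wa_le {t s : ℝ} (ht : 0 ≤ t) (hs : 0 < s) : phiK (wa t s) ≤ phiB (wa 0 s) :=
  (phiK_antitone (wa_nonneg hs.le) (wa_mono_t hs.le ht) (wa_abs_lt t s).2.le).trans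
    (phiK_le_phiB (wa_nonneg hs.le) (wa_abs_lt 0 s).2.le)

lemma sig_nonneg {k : ℕ} (hk : 2 ≤ k) {t : ℝ} (ht : 0 ≤ t) : 0 ≤ sig k t := by
  refine cos_integral_nonneg (Ψ := fun s => wa t s * ww t s ^ k)
    (φ := fun s => 1 - wa t s ^ 2 - 2 * k * wa t s)
    (fun s hs => mul_nonneg (wa_nonneg hs.le) (pow_nonneg (ww_pos t s).le _)) (fun s hs => ?_)
    (fun s hs => ?_) (sig_int (by lia) t)
  · have ha := (wa_pos (t := 0) hs).ne'
    refine ((hasDerivAt_wa_s t hs).mul ((hasDerivAt_ww_s t hs).pow k)).congr_deriv ?_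
    obtain ⟨m, rfl⟩ : ∃ m, k = m + 1 := ⟨k - 1, by lia⟩
    simp only [Nat.add_sub_cancel, Pi.pow_apply]
    push_cast
    field_simp
    ring
  · refine le_trans ?_ (phiK_wa_le ht hs)
    have h0 := wa_nonneg (t := t) hs.le
    have h1 := (wa_abs_lt t s).2
    have hk' : (2 : ℝ) ≤ k := by exact_mod_cast hk
    unfold phiK
    have h2 : 0 ≤ wa t s * (1 - wa t s ^ 2) / (3 + wa t s) := by
      have : 0 ≤ 1 - wa t s ^ 2 := by nlinarith
      positivity
    nlinarith [mul_nonneg h0 (by linarith : 0 ≤ (k : ℝ) - 2), mul_nonneg h0 (by linarith : 0 ≤ 1 - wa t s)]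

/-- The integral is `e^{-t} d/dt (e^t σ₁)`, so `e^t σ₁(t)` is nondecreasing. -/
lemma sigOne_deriv_nonneg {t : ℝ} (ht : 0 ≤ t) :
    0 ≤ ∫ s in Ioi (0 : ℝ), (wa t s * (1 - wa t s) * (3 + wa t s) / 2) * ww t s ^ 1 *
      Real.cos (bet * s) := by
  have hc := continuous_wa t
  refine cos_integral_nonneg (Ψ := fun s => (wa t s * (1 - wa t s) * (3 + wa t s) / 2) * ww t s ^ 1)
    (φ := fun s => phiK (wa t s)) (fun s hs => ?_) (fun s hs => ?_)
    (fun s hs => phiK_wa_le ht hs) (integrableOn_kernel le_rfl (by fun_prop) (C := 2) ?_)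
  · have h0 := wa_nonneg (t := t) hs.le
    have h1 : 0 ≤ 1 - wa t s := by linarith [(wa_abs_lt t s).2]
    have := (ww_pos t s).le
    positivity
  · have ha := (wa_pos (t := 0) hs).ne'
    have h0 := wa_nonneg (t := t) hs.le
    have h3 : 3 + wa t s ≠ 0 := by positivity
    have hA := hasDerivAt_wa_s t hs
    refine ((((hA.mul (hA.const_sub 1)).mul (hA.const_add 3)).div_const 2).mul
      ((hasDerivAt_ww_s t hs).pow 1)).congr_deriv ?_
    simp only [phiK, Pi.mul_apply, Pi.pow_apply]
    norm_num
    field_simp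
    ring
  · intro s hs
    have h0 := wa_nonneg (t := t) hs
    have h1 := (wa_abs_lt t s).2
    have h2 : 0 ≤ 1 - wa t s := by linarith
    rw [abs_of_nonneg (by positivity)]
    nlinarith [mul_nonneg h0 h2]

lemma hasDerivAt_exp_sigOne (t : ℝ) :
    HasDerivAt (fun t => Real.exp t * sig 1 t) (Real.exp t *
      ∫ s in Ioi (0 : ℝ), (wa t s * (1 - wa t s) * (3 + wa t s) / 2) * ww t s ^ 1 *
      Real.cos (bet * s)) t := by
  have h := hasDerivAt_kernel (k := 1) le_rfl t (b := wa)
    (b' := fun t s => wa t s * (1 - wa t s ^ 2) / 2 - wa t s ^ 2) (C := 2)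
    continuous_wa (fun t => by have := continuous_wa t; fun_prop)
    (fun t s hs => (wa_abs_le_one t hs).trans (by norm_num)) (fun t s hs => ?_) (fun t s hs => ?_)
  · refine ((Real.hasDerivAt_exp t).mul h).congr_deriv ?_
    have e : (∫ s in Ioi (0 : ℝ), (wa t s * (1 - wa t s) * (3 + wa t s) / 2) * ww t s ^ 1 *
        Real.cos (bet * s)) = sig 1 t + ∫ s in Ioi (0 : ℝ),
          (wa t s * (1 - wa t s ^ 2) / 2 - wa t s ^ 2) * ww t s ^ 1 * Real.cos (bet * s) := by
      have hc := continuous_wa t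
      rw [sig, ← integral_add (sig_int le_rfl t) (integrableOn_kernel le_rfl (by fun_prop) (C := 2) ?_)]
      · congr 1; ext s; ring
      · intro s hs
        have h0 := wa_nonneg (t := t) hs
        have h1 := (wa_abs_lt t s).2
        rw [abs_le]; constructor <;> nlinarith [pow_nonneg h0 2, pow_nonneg h0 3]
    rw [e]
    simp only [sig]
    ring
  · have h0 := wa_nonneg (t := t) hs
    have h1 := (wa_abs_lt t s).2
    rw [abs_le]; constructor <;> nlinarith [pow_nonneg h0 2, pow_nonneg h0 3]
  · refine ((hasDerivAt_wa_t t s).mul ((hasDerivAt_ww_t t s).pow 1)).congr_deriv ?_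
    simp; ring

lemma sigOne_ge {t : ℝ} (ht : 0 ≤ t) : sig 1 0 * Real.exp (-t) ≤ sig 1 t := by
  have hm : MonotoneOn (fun t => Real.exp t * sig 1 t) (Ici 0) := by
    refine monotoneOn_of_deriv_nonneg (convex_Ici 0)
      (fun t _ => (hasDerivAt_exp_sigOne t).continuousAt.continuousWithinAt)
      (fun t _ => (hasDerivAt_exp_sigOne t).differentiableAt.differentiableWithinAt) fun t ht => ?_
    rw [(hasDerivAt_exp_sigOne t).deriv]
    exact mul_nonneg (Real.exp_pos t).le (sigOne_deriv_nonneg (interior_subset ht))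
  have h := hm (mem_Ici.2 le_rfl) (mem_Ici.2 ht) ht
  simp only [Real.exp_zero, one_mul] at h
  rw [Real.exp_neg, ← div_eq_mul_inv, div_le_iff₀ (Real.exp_pos t)]
  linarith

lemma sigOne_pos : 0 < sig 1 0 := by
  have h : ∀ k : ℕ, 1 ≤ k → sig k 0 = k / ((k : ℝ) ^ 2 + 4 / 3)
      - ((k + 1 : ℕ) : ℝ) / (((k + 1 : ℕ) : ℝ) ^ 2 + 4 / 3) - sig (k + 1) 0 := by
    intro k hk
    have := tau_sub hk 0
    rw [tau_zero hk, tau_zero (by lia)] at this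
    linarith
  have h11 := sig_nonneg (k := 11) (by norm_num) le_rfl
  rw [h 1 (by norm_num), h 2 (by norm_num), h 3 (by norm_num), h 4 (by norm_num),
    h 5 (by norm_num), h 6 (by norm_num), h 7 (by norm_num), h 8 (by norm_num),
    h 9 (by norm_num), h 10 (by norm_num)]
  norm_num at h11 ⊢
  linarith

/-- A weight system: time-dependent weights `T k`, `S k` (`k ≥ 1`) compatible with the
slit-map flow, normalised at time `0` by `T k 0 = k/(k² + 4/3)` with a deficit `ε` at `k = 1`. -/
structure WeightSystem (ε : ℝ) (T S : ℕ → ℝ → ℝ) : Prop where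
  deriv : ∀ k, 1 ≤ k → ∀ t, HasDerivAt (T k) (-(k * S k t)) t
  rel : ∀ k, 1 ≤ k → ∀ t, T k t - T (k + 1) t = S k t + S (k + 1) t
  nonneg : ∀ k, 1 ≤ k → ∀ t, 0 ≤ t → 0 ≤ S k t
  S_le : ∀ k, 1 ≤ k → ∀ t, 0 ≤ t → S k t ≤ 1 / k
  T_le : ∀ k, 1 ≤ k → ∀ t, 0 ≤ t → T k t ≤ 1 / k
  T_nonneg : ∀ k, 1 ≤ k → ∀ t, 0 ≤ t → 0 ≤ T k t
  T_zero : ∀ k, 1 ≤ k → T k 0 = k / ((k : ℝ) ^ 2 + 4 / 3) - if k = 1 then ε else 0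

lemma exists_weightSystem : ∃ ε : ℝ, 0 < ε ∧ ε ≤ 1 / 4 ∧ ∃ T S, WeightSystem ε T S := by
  set ε := min (sig 1 0) (1 / 4) with hε
  have hε0 : 0 < ε := lt_min sigOne_pos (by norm_num)
  have hε1 : ε ≤ sig 1 0 := min_le_left _ _
  refine ⟨ε, hε0, min_le_right _ _,
    fun k t => tau k t - if k = 1 then ε * Real.exp (-t) else 0,
    fun k t => sig k t - if k = 1 then ε * Real.exp (-t) else 0, ?_⟩
  have hS : ∀ k, 1 ≤ k → ∀ t, 0 ≤ t → 0 ≤ sig k t - if k = 1 then ε * Real.exp (-t) else 0 := by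
    intro k hk t ht
    split_ifs with h
    · subst h
      have := sigOne_ge ht
      have := mul_le_mul_of_nonneg_right hε1 (Real.exp_pos (-t)).le
      linarith
    · have := sig_nonneg (k := k) (by lia) ht
      linarith
  have hrel : ∀ k, 1 ≤ k → ∀ t, (tau k t - if k = 1 then ε * Real.exp (-t) else 0) -
      (tau (k + 1) t - if k + 1 = 1 then ε * Real.exp (-t) else 0) =
      (sig k t - if k = 1 then ε * Real.exp (-t) else 0) +
      (sig (k + 1) t - if k + 1 = 1 then ε * Real.exp (-t) else 0) := by
    intro k hk t
    have := tau_sub hk t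
    rw [if_neg (by lia : ¬ k + 1 = 1)]
    linarith
  have hif : ∀ (k : ℕ) (t : ℝ), 0 ≤ if k = 1 then ε * Real.exp (-t) else 0 := by
    intro k t; split_ifs <;> positivity
  have htau : ∀ k, 1 ≤ k → ∀ t, 0 ≤ t → tau k t ≤ 1 / k := fun k hk t ht => by
    simpa [tau] using! tau_le hk ht (b := fun _ => 1) continuous_const (by simp)
  refine ⟨fun k hk t => ?_, hrel, hS, fun k hk t ht => ?_, fun k hk t ht => ?_,
    fun k hk t ht => ?_, fun k hk => ?_⟩
  · by_cases h : k = 1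
    · subst h
      simp only [if_true]
      have h1 : HasDerivAt (fun t : ℝ => Real.exp (-t)) (-Real.exp (-t)) t := by
        simpa using (hasDerivAt_neg t).exp
      refine ((hasDerivAt_tau le_rfl t).sub (h1.const_mul ε)).congr_deriv ?_
      push_cast; ring
    · simp only [if_neg h, sub_zero]
      exact hasDerivAt_tau hk t
  · have := tau_le hk ht (b := wa t) (continuous_wa t) (fun s hs => wa_abs_le_one t hs)
    have h2 := hif k t
    change sig k t ≤ _ at this
    linarith
  · linarith [htau k hk t ht, hif k t]
  · -- the sequence `T k t` decreases to a limit which is at least `lim (-1/k)`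
    have hneg : ∀ j : ℕ, 1 ≤ j → -(1 / (j : ℝ)) ≤ tau j t := by
      intro j hj
      have := tau_le hj ht (b := fun _ => -1) continuous_const (by simp)
      have e : ∫ s in Ioi (0 : ℝ), -1 * ww t s ^ j * Real.cos (bet * s) = -tau j t := by
        rw [tau, ← integral_neg]; congr 1; ext s; ring
      rw [e] at this; linarith
    have hmono : ∀ m, tau (k + 1 + m) t ≤ tau k t - if k = 1 then ε * Real.exp (-t) else 0 := by
      intro m
      induction m with
      | zero =>
        have h1 := hrel k hk t
        have h2 := hS k hk t ht
        have h3 := hS (k + 1) (by lia) t ht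
        rw [if_neg (by lia : ¬ k + 1 = 1)] at h1 h3
        simp only [add_zero]
        linarith
      | succ m ih =>
        have h1 := tau_sub (k := k + 1 + m) (by lia) t
        have h2 := sig_nonneg (k := k + 1 + m) (by lia) ht
        have h3 := sig_nonneg (k := k + 1 + m + 1) (by lia) ht
        rw [← add_assoc]
        linarith
    have hlim : Filter.Tendsto (fun m : ℕ => -(1 / ((k + 1 + m : ℕ) : ℝ))) Filter.atTop (nhds (-0)) := by
      refine Filter.Tendsto.neg ?_
      have := tendsto_one_div_add_atTop_nhds_zero_nat (𝕜 := ℝ)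
      refine squeeze_zero (fun m => by positivity) (fun m => ?_) this
      apply one_div_le_one_div_of_le (by positivity)
      push_cast
      have : (0 : ℝ) ≤ k := by positivity
      linarith
    rw [neg_zero] at hlim
    exact le_of_tendsto' hlim fun m => (hneg _ (by lia)).trans (hmono m)
  · rw [tau_zero hk]
    simp

/-! ### Slit maps -/

/-- The principal branch of the square root, `exp (log z / 2)`. -/
noncomputable def csq (z : ℂ) : ℂ := Complex.exp (Complex.log z / 2)

lemma csq_sq {z : ℂ} (hz : z ≠ 0) : csq z ^ 2 = z := by
  unfold csq
  rw [← Complex.exp_nat_mul]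
  push_cast
  rw [mul_div_cancel₀ _ two_ne_zero, Complex.exp_log hz]

lemma csq_ne_zero (z : ℂ) : csq z ≠ 0 := Complex.exp_ne_zero _

lemma csq_re_pos {z : ℂ} (hz : z ∈ slitPlane) : 0 < (csq z).re := by
  unfold csq
  rw [Complex.exp_re]
  apply mul_pos (Real.exp_pos _)
  have h1 : (Complex.log z / 2).im = z.arg / 2 := by
    rw [← Complex.log_im]; simp
  rw [h1]
  have h2 := Complex.mem_slitPlane_iff_arg.1 hz
  have h3 : z.arg < π := lt_of_le_of_ne (Complex.arg_le_pi z) h2.1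
  have h4 := Complex.neg_pi_lt_arg z
  exact Real.cos_pos_of_mem_Ioo ⟨by linarith, by linarith⟩

lemma csq_hasDerivAt {z : ℂ} (hz : z ∈ slitPlane) : HasDerivAt csq (1 / (2 * csq z)) z := by
  have h := ((Complex.hasDerivAt_log hz).div_const 2).cexp
  refine h.congr_deriv ?_
  have h1 : csq z ^ 2 = z := csq_sq (slitPlane_ne_zero hz)
  have h2 := csq_ne_zero z
  change csq z * _ = _
  have h3 := slitPlane_ne_zero hz
  field_simp
  rw [h1]

lemma sq_mem_slitPlane {s : ℂ} (hs : 0 < s.re) : s ^ 2 ∈ slitPlane := by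
  rw [Complex.mem_slitPlane_iff]
  by_cases h : s.im = 0
  · left; simp [pow_two, h]; positivity
  · right; simp only [pow_two, Complex.mul_im]
    intro h2; apply h; nlinarith

lemma csq_of_sq {s : ℂ} (hs : 0 < s.re) : csq (s ^ 2) = s := by
  have h := csq_sq (slitPlane_ne_zero (sq_mem_slitPlane hs))
  rcases sq_eq_sq_iff_eq_or_eq_neg.1 h with h | h
  · exact h
  · have := csq_re_pos (sq_mem_slitPlane hs)
    rw [h] at this; simp at this; linarith

lemma slitPlane_add_real {z : ℂ} (hz : z ∈ slitPlane) {a : ℝ} (ha : 0 ≤ a) :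
    (a : ℂ) + z ∈ slitPlane := by
  rw [Complex.mem_slitPlane_iff] at *
  simp only [add_re, ofReal_re, add_im, ofReal_im, zero_add]
  rcases hz with h | h
  · left; linarith
  · right; exact h

lemma slitPlane_smul {z : ℂ} (hz : z ∈ slitPlane) {a : ℝ} (ha : 0 < a) :
    (a : ℂ) * z ∈ slitPlane := by
  rw [Complex.mem_slitPlane_iff] at *
  simp only [mul_re, ofReal_re, mul_im, ofReal_im, zero_mul, sub_zero, add_zero]
  rcases hz with h | h
  · left; positivity
  · right; exact mul_ne_zero ha.ne' h

/-- The Cayley involution exchanging the unit disk and the right half plane. -/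
noncomputable def cay (z : ℂ) : ℂ := (1 - z) / (1 + z)

lemma one_add_ne_of_re {s : ℂ} (hs : 0 < s.re) : 1 + s ≠ 0 := by
  intro h
  have := congrArg Complex.re h
  simp at this; linarith

lemma one_add_ne_of_norm {z : ℂ} (hz : ‖z‖ < 1) : 1 + z ≠ 0 := by
  intro h
  have : z = -1 := by linear_combination h
  rw [this] at hz; simp at hz

lemma one_sub_ne_of_norm {z : ℂ} (hz : ‖z‖ < 1) : 1 - z ≠ 0 := by
  intro h
  have : z = 1 := by linear_combination -h
  rw [this] at hz; simp at hz

lemma cay_norm_lt {s : ℂ} (hs : 0 < s.re) : ‖cay s‖ < 1 := by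
  unfold cay
  have h0 := one_add_ne_of_re hs
  rw [norm_div, div_lt_one (norm_pos_iff.2 h0)]
  apply lt_of_pow_lt_pow_left₀ 2 (norm_nonneg _)
  rw [Complex.sq_norm, Complex.sq_norm, Complex.normSq_apply, Complex.normSq_apply]
  simp; nlinarith

lemma cay_re_pos {z : ℂ} (hz : ‖z‖ < 1) : 0 < (cay z).re := by
  unfold cay
  have h0 := one_add_ne_of_norm hz
  rw [Complex.div_re, ← add_div]
  apply div_pos _ (Complex.normSq_pos.2 h0)
  have h1 : ‖z‖ ^ 2 < 1 := by nlinarith [norm_nonneg z]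
  rw [Complex.sq_norm, Complex.normSq_apply] at h1
  simp; nlinarith

lemma cay_cay {z : ℂ} (hz : 1 + z ≠ 0) : cay (cay z) = z := by
  unfold cay
  have : (1 : ℂ) + (1 - z) / (1 + z) ≠ 0 := by
    have : (1 : ℂ) + (1 - z) / (1 + z) = 2 / (1 + z) := by field_simp; ring
    rw [this]; exact div_ne_zero two_ne_zero hz
  field_simp; ring

lemma cay_hasDerivAt {z : ℂ} (hz : 1 + z ≠ 0) : HasDerivAt cay (-2 / (1 + z) ^ 2) z := by
  have h := ((hasDerivAt_id z).const_sub 1).div ((hasDerivAt_id z).const_add 1) hz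
  refine h.congr_deriv ?_
  simp only [id]; ring

/-- `uu z w = 1 - 4 w z / (1 + z) ^ 2`, the square of the right half plane version of the slit
map. -/
noncomputable def uu (z w : ℂ) : ℂ := 1 - 4 * w * z / (1 + z) ^ 2

/-- The right half plane version of the slit map. -/
noncomputable def ss (z w : ℂ) : ℂ := csq (uu z w)

/-- The slit map of the unit disk: `v = vv z w` solves
`v / (1 + v) ^ 2 = w * z / (1 + z) ^ 2`. -/
noncomputable def vv (z w : ℂ) : ℂ := cay (ss z w)

lemma uu_eq {z : ℂ} (hz : 1 + z ≠ 0) (w : ℂ) : uu z w = (1 - w) + w * cay z ^ 2 := by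
  unfold uu cay; field_simp; ring

lemma uu_slit {z : ℂ} (hz : ‖z‖ < 1) {w : ℝ} (h0 : 0 < w) (h1 : w ≤ 1) :
    uu z w ∈ slitPlane := by
  rw [uu_eq (one_add_ne_of_norm hz)]
  have := slitPlane_add_real (slitPlane_smul (sq_mem_slitPlane (cay_re_pos hz)) h0)
    (sub_nonneg.2 h1)
  simpa using this

/-- On a small disk the slit map also makes sense for `w` slightly larger than `1`. -/
lemma uu_slit' {z : ℂ} (hz : ‖z‖ ≤ 1 / 20) {w : ℝ} (h0 : 0 < w) (h1 : w ≤ 2) :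
    uu z w ∈ slitPlane := by
  have hz1 : ‖z‖ < 1 := by linarith
  have h2 : (19 : ℝ) / 20 ≤ ‖1 + z‖ := by
    have := norm_sub_norm_le (1 : ℂ) (-z)
    rw [norm_one, norm_neg, sub_neg_eq_add] at this
    linarith
  have h3 : ‖4 * (w : ℂ) * z / (1 + z) ^ 2‖ < 1 := by
    rw [norm_div, norm_mul, norm_mul, norm_pow, div_lt_one (by positivity)]
    simp only [Complex.norm_ofNat, Complex.norm_real, Real.norm_eq_abs, abs_of_pos h0]
    have : w * ‖z‖ ≤ 2 * (1 / 20) := by gcongr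
    nlinarith
  rw [Complex.mem_slitPlane_iff]
  left
  unfold uu
  have := (Complex.abs_re_le_norm (4 * (w : ℂ) * z / (1 + z) ^ 2)).trans_lt h3
  rw [Complex.sub_re, Complex.one_re]
  linarith [(abs_lt.1 this).2]

lemma ss_sq {z w : ℂ} (h : uu z w ∈ slitPlane) : ss z w ^ 2 = uu z w :=
  csq_sq (slitPlane_ne_zero h)

lemma ss_re_pos {z w : ℂ} (h : uu z w ∈ slitPlane) : 0 < (ss z w).re := csq_re_pos h

lemma vv_norm_lt {z w : ℂ} (h : uu z w ∈ slitPlane) : ‖vv z w‖ < 1 := cay_norm_lt (ss_re_pos h)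

lemma cay_vv {z w : ℂ} (h : uu z w ∈ slitPlane) : cay (vv z w) = ss z w :=
  cay_cay (one_add_ne_of_re (ss_re_pos h))

lemma vv_one {z : ℂ} (hz : ‖z‖ < 1) : vv z 1 = z := by
  unfold vv ss
  rw [uu_eq (one_add_ne_of_norm hz), sub_self, zero_add, one_mul, csq_of_sq (cay_re_pos hz),
    cay_cay (one_add_ne_of_norm hz)]

lemma uu_zero (w : ℂ) : uu 0 w = 1 := by simp [uu]
lemma vv_zero (w : ℂ) : vv 0 w = 0 := by simp [vv, ss, uu_zero, csq, cay]

lemma vv_koebe {z w : ℂ} (h : uu z w ∈ slitPlane) :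
    vv z w / (1 + vv z w) ^ 2 = w * z / (1 + z) ^ 2 := by
  have h1 := ss_sq h
  have h2 := one_add_ne_of_re (ss_re_pos h)
  have h3 : 1 + vv z w = 2 / (1 + ss z w) := by unfold vv cay; field_simp; ring
  have h4 : vv z w / (1 + vv z w) ^ 2 = (1 - ss z w ^ 2) / 4 := by
    rw [h3]; unfold vv cay; field_simp; ring
  rw [h4, h1]; unfold uu; ring

lemma vv_hasDerivAt_z {z w : ℂ} (h : uu z w ∈ slitPlane) (hz : 1 + z ≠ 0) :
    HasDerivAt (fun z => vv z w)
      (4 * w * (1 - z) / ((1 + ss z w) ^ 2 * ss z w * (1 + z) ^ 3)) z := by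
  have hu : HasDerivAt (fun z => uu z w) (-(4 * w) * (1 - z) / (1 + z) ^ 3) z := by
    have h := (((hasDerivAt_id z).const_mul (4 * w)).div
      (((hasDerivAt_id z).const_add 1).pow 2) (pow_ne_zero 2 hz)).const_sub 1
    refine h.congr_deriv ?_
    simp only [id, Pi.pow_apply]
    field_simp; ring
  have hs : HasDerivAt (fun z => ss z w) _ z := (csq_hasDerivAt h).comp z hu
  have h2 := one_add_ne_of_re (ss_re_pos h)
  have hv := (cay_hasDerivAt h2).comp z hs
  refine hv.congr_deriv ?_
  have h3 : csq (uu z w) ≠ 0 := csq_ne_zero _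
  unfold ss at *
  field_simp

lemma vv_hasDerivAt_w {z w : ℂ} (h : uu z w ∈ slitPlane) (hz : 1 + z ≠ 0) :
    HasDerivAt (fun w => vv z w)
      (4 * z / ((1 + ss z w) ^ 2 * ss z w * (1 + z) ^ 2)) w := by
  have hu : HasDerivAt (fun w => uu z w) (-(4 * z) / (1 + z) ^ 2) w := by
    have h := ((((hasDerivAt_id w).const_mul 4).mul_const z).div_const ((1 + z) ^ 2)).const_sub 1
    refine h.congr_deriv ?_
    ring
  have hs : HasDerivAt (fun w => ss z w) _ w := (csq_hasDerivAt h).comp w hu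
  have h2 := one_add_ne_of_re (ss_re_pos h)
  have hv := (cay_hasDerivAt h2).comp w hs
  refine hv.congr_deriv ?_
  have h3 : csq (uu z w) ≠ 0 := csq_ne_zero _
  unfold ss at *
  field_simp

/-- If `v` is the image of `z` under the slit map then this is `log (g v / (w * z))`, where
`g v = v * exp (G v)`: the logarithm of one step of the evolution. -/
noncomputable def LL (G : ℂ → ℂ) (w z : ℂ) : ℂ :=
  G (vv z w) + 2 * Complex.log (1 + vv z w) - 2 * Complex.log (1 + z)

lemma one_add_slit {z : ℂ} (hz : ‖z‖ < 1) : 1 + z ∈ slitPlane := by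
  rw [Complex.mem_slitPlane_iff]; left
  have := (abs_lt.1 ((Complex.abs_re_le_norm z).trans_lt hz)).1
  simp; linarith

lemma log1_hasDerivAt {z : ℂ} (hz : ‖z‖ < 1) :
    HasDerivAt (fun v : ℂ => 2 * Complex.log (1 + v)) (2 * (1 / (1 + z))) z :=
  (((hasDerivAt_id' z).const_add 1).clog (one_add_slit hz)).const_mul 2

lemma LL_zero {G : ℂ → ℂ} (hG0 : G 0 = 0) (w : ℂ) : LL G w 0 = 0 := by
  simp [LL, vv_zero, hG0]

lemma LL_one {G : ℂ → ℂ} {z : ℂ} (hz : ‖z‖ < 1) : LL G 1 z = G z := by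
  simp [LL, vv_one hz]

/-- The right-hand side `h` of the evolution equation `∂_δ L = -h`, `w = exp (-δ)`. -/
noncomputable def hh (G : ℂ → ℂ) (w z : ℂ) : ℂ :=
  (deriv G (vv z w) + 2 / (1 + vv z w)) * (vv z w / ss z w)

lemma LL_hasDerivAt_delta {G : ℂ → ℂ} (hG : AnalyticOnNhd ℂ G (ball 0 1)) {z : ℂ}
    (hz : ‖z‖ < 1) {δ : ℝ} (h : uu z (Real.exp (-δ) : ℝ) ∈ slitPlane) :
    HasDerivAt (fun δ : ℝ => LL G (Real.exp (-δ) : ℝ) z) (-hh G (Real.exp (-δ) : ℝ) z) δ := by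
  have hw : HasDerivAt (fun δ : ℝ => ((Real.exp (-δ) : ℝ) : ℂ)) (-(Real.exp (-δ) : ℝ)) δ := by
    have := ((hasDerivAt_id δ).neg.exp).ofReal_comp
    simpa using this
  set w : ℂ := ((Real.exp (-δ) : ℝ) : ℂ) with hwdef
  have hz1 := one_add_ne_of_norm hz
  have hv := (vv_hasDerivAt_w h hz1).comp δ hw
  have hvn := vv_norm_lt h
  have hM1 : HasDerivAt G (deriv G (vv z w)) (vv z w) :=
    (hG _ (by simpa using hvn)).differentiableAt.hasDerivAt
  have hM2 : HasDerivAt (fun v : ℂ => 2 * Complex.log (1 + v)) (2 * (1 / (1 + vv z w))) (vv z w) :=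
    log1_hasDerivAt hvn
  have hM := ((hM1.add hM2).comp_of_eq δ hv rfl).sub_const (2 * Complex.log (1 + z))
  refine hM.congr_deriv ?_
  have e1 := vv_koebe h
  have h2 := one_add_ne_of_re (ss_re_pos h)
  have h3 : ss z w ≠ 0 := csq_ne_zero _
  have h5 : vv z w = (1 - ss z w) / (1 + ss z w) := rfl
  have h4 : 4 * w * z / (1 + z) ^ 2 = 1 - ss z w ^ 2 := by rw [ss_sq h]; unfold uu; ring
  have h6 : 4 * z / ((1 + ss z w) ^ 2 * ss z w * (1 + z) ^ 2) * -w = - (vv z w / ss z w) := by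
    rw [h5]
    calc _ = -(4 * w * z / (1 + z) ^ 2) / ((1 + ss z w) ^ 2 * ss z w) := by field_simp
      _ = _ := by rw [h4]; field_simp; ring
  rw [h6]; unfold hh; ring

lemma LL_hasDerivAt_z {G : ℂ → ℂ} (hG : AnalyticOnNhd ℂ G (ball 0 1)) {z w : ℂ}
    (hz : ‖z‖ < 1) (h : uu z w ∈ slitPlane) :
    HasDerivAt (LL G w) ((deriv G (vv z w) + 2 / (1 + vv z w)) *
      (4 * w * (1 - z) / ((1 + ss z w) ^ 2 * ss z w * (1 + z) ^ 3)) - 2 / (1 + z)) z := by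
  have hz1 := one_add_ne_of_norm hz
  have hv := vv_hasDerivAt_z h hz1
  have hvn := vv_norm_lt h
  have hM1 : HasDerivAt G (deriv G (vv z w)) (vv z w) :=
    (hG _ (by simpa using hvn)).differentiableAt.hasDerivAt
  have hM2 : HasDerivAt (fun v : ℂ => 2 * Complex.log (1 + v)) (2 * (1 / (1 + vv z w))) (vv z w) :=
    log1_hasDerivAt hvn
  have hM3 : HasDerivAt (fun v : ℂ => 2 * Complex.log (1 + v)) (2 * (1 / (1 + z))) z :=
    log1_hasDerivAt hz
  have hM := ((hM1.add hM2).comp_of_eq z hv rfl).sub hM3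
  refine hM.congr_deriv ?_
  ring

/-- The evolution equation in the form `(1 - z) h = 2 z + (1 + z) z L'`. -/
lemma hh_pde {G : ℂ → ℂ} (hG : AnalyticOnNhd ℂ G (ball 0 1)) {z w : ℂ}
    (hz : ‖z‖ < 1) (h : uu z w ∈ slitPlane) :
    hh G w z = z * hh G w z + 2 * z + (z * deriv (LL G w) z + z * (z * deriv (LL G w) z)) := by
  rw [(LL_hasDerivAt_z hG hz h).deriv]
  have hz1 := one_add_ne_of_norm hz
  have h2 := one_add_ne_of_re (ss_re_pos h)
  have h3 : ss z w ≠ 0 := csq_ne_zero _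
  have h5 : vv z w = (1 - ss z w) / (1 + ss z w) := rfl
  have h4 : 4 * w * z / (1 + z) ^ 2 = 1 - ss z w ^ 2 := by rw [ss_sq h]; unfold uu; ring
  set D := deriv G (vv z w) + 2 / (1 + vv z w) with hD
  have h6 : z * (4 * w * (1 - z) / ((1 + ss z w) ^ 2 * ss z w * (1 + z) ^ 3)) =
      vv z w / ss z w * ((1 - z) / (1 + z)) := by
    rw [h5]
    calc _ = (4 * w * z / (1 + z) ^ 2) * ((1 - z) / (1 + z)) / ((1 + ss z w) ^ 2 * ss z w) := by
          field_simp
      _ = _ := by rw [h4]; field_simp; ring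
  have h7 : z * (D * (4 * w * (1 - z) / ((1 + ss z w) ^ 2 * ss z w * (1 + z) ^ 3)) - 2 / (1 + z))
      = D * (vv z w / ss z w) * ((1 - z) / (1 + z)) - 2 * z / (1 + z) := by
    calc _ = D * (z * (4 * w * (1 - z) / ((1 + ss z w) ^ 2 * ss z w * (1 + z) ^ 3)))
          - 2 * z / (1 + z) := by ring
      _ = _ := by rw [h6]; ring
  rw [h7]
  unfold hh
  rw [← hD]
  field_simp; ring

/-! ### Taylor coefficients -/

open scoped Topology

/-- The `k`-th Taylor coefficient of `F` at the origin. -/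
noncomputable def tc (F : ℂ → ℂ) (k : ℕ) : ℂ := iteratedDeriv k F 0 / (k.factorial : ℂ)

lemma tc_congr {F H : ℂ → ℂ} (h : F =ᶠ[𝓝 0] H) (k : ℕ) : tc F k = tc H k := by
  unfold tc; rw [h.iteratedDeriv_eq]

lemma tc_add {F H : ℂ → ℂ} (hF : AnalyticAt ℂ F 0) (hH : AnalyticAt ℂ H 0) (k : ℕ) :
    tc (fun z => F z + H z) k = tc F k + tc H k := by
  unfold tc
  rw [iteratedDeriv_fun_add hF.contDiffAt hH.contDiffAt, add_div]

lemma tc_zero (F : ℂ → ℂ) : tc F 0 = F 0 := by simp [tc]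

lemma tc_const_mul {F : ℂ → ℂ} (hF : AnalyticAt ℂ F 0) (a : ℂ) (k : ℕ) :
    tc (fun z => a * F z) k = a * tc F k := by
  unfold tc
  rw [iteratedDeriv_const_mul _ hF.contDiffAt, mul_div_assoc]

lemma iteratedDeriv_id_mul {F : ℂ → ℂ} (hF : AnalyticAt ℂ F 0) (k : ℕ) :
    iteratedDeriv (k + 1) (fun z => z * F z) 0 = (k + 1) * iteratedDeriv k F 0 := by
  induction k generalizing F with
  | zero =>
    simp only [zero_add, iteratedDeriv_one, iteratedDeriv_zero]
    have h := (hasDerivAt_id' (0 : ℂ)).mul hF.differentiableAt.hasDerivAt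
    have := h.deriv
    simp only [Pi.mul_def] at this
    rw [this]; simp
  | succ k ih =>
    have e : deriv (fun z => z * F z) =ᶠ[𝓝 0] fun z => F z + z * deriv F z := by
      filter_upwards [hF.eventually_analyticAt] with z hz
      have h := (hasDerivAt_id' z).mul hz.differentiableAt.hasDerivAt
      have := h.deriv
      simp only [Pi.mul_def] at this
      rw [this]; simp
    rw [iteratedDeriv_succ', e.iteratedDeriv_eq, iteratedDeriv_fun_add, ih hF.deriv,
      ← iteratedDeriv_succ']
    · push_cast; ring
    · exact hF.contDiffAt
    · exact (analyticAt_id.mul hF.deriv).contDiffAt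

lemma tc_id_mul {F : ℂ → ℂ} (hF : AnalyticAt ℂ F 0) (k : ℕ) :
    tc (fun z => z * F z) (k + 1) = tc F k := by
  unfold tc
  rw [iteratedDeriv_id_mul hF, Nat.factorial_succ]
  push_cast
  have : (k : ℂ) + 1 ≠ 0 := by exact_mod_cast Nat.succ_ne_zero k
  have : (k.factorial : ℂ) ≠ 0 := by exact_mod_cast k.factorial_ne_zero
  field_simp

lemma tc_id_mul_deriv {F : ℂ → ℂ} (hF : AnalyticAt ℂ F 0) (k : ℕ) :
    tc (fun z => z * deriv F z) k = k * tc F k := by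
  cases k with
  | zero => simp [tc_zero]
  | succ k =>
    rw [tc_id_mul hF.deriv]
    unfold tc
    rw [← iteratedDeriv_succ', Nat.factorial_succ]
    push_cast
    have : (k : ℂ) + 1 ≠ 0 := by exact_mod_cast Nat.succ_ne_zero k
    have : (k.factorial : ℂ) ≠ 0 := by exact_mod_cast k.factorial_ne_zero
    field_simp

lemma tc_id (k : ℕ) : tc (fun z => z) k = if k = 1 then 1 else 0 := by
  rcases k with _ | _ | k
  · simp [tc]
  · have := tc_id_mul (F := fun _ => 1) analyticAt_const 0
    simp only [mul_one, zero_add] at this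
    rw [this]; simp [tc]
  · have := tc_id_mul (F := fun _ => 1) analyticAt_const (k + 1)
    simp only [mul_one] at this
    rw [this, if_neg (by omega)]
    unfold tc; rw [iteratedDeriv_const, if_neg (by omega), zero_div]

/-- The circle integral expressing the `k`-th Taylor coefficient, parametrized by the angle. -/
lemma tc_eq_integral {F : ℂ → ℂ} {r : ℝ} (hr : 0 < r)
    (hF : DifferentiableOn ℂ F (closedBall 0 r)) (k : ℕ) :
    tc F k = (2 * π * I)⁻¹ * ∫ θ in (0 : ℝ)..2 * π,
      (circleMap 0 r θ * I) * (1 / (circleMap 0 r θ) ^ (k + 1) * F (circleMap 0 r θ)) := by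
  have h := hF.circleIntegral_one_div_sub_center_pow_smul hr k
  unfold circleIntegral at h
  simp only [deriv_circleMap, sub_zero, smul_eq_mul] at h
  rw [h]
  unfold tc
  have := Complex.two_pi_I_ne_zero
  field_simp

/-- `B_k = 1 + ∑_{j ≤ k} j c_j`. -/
noncomputable def BB (c : ℕ → ℂ) (k : ℕ) : ℂ := 1 + ∑ j ∈ Finset.Icc 1 k, (j : ℂ) * c j

lemma BB_zero (c : ℕ → ℂ) : BB c 0 = 1 := by simp [BB]
lemma BB_succ (c : ℕ → ℂ) (k : ℕ) : BB c (k + 1) = BB c k + (k + 1 : ℕ) * c (k + 1) := by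
  unfold BB
  rw [Finset.sum_Icc_succ_top (by omega)]; ring

/-- Taylor coefficients of the right-hand side of the evolution equation. -/
lemma tc_pde {L h : ℂ → ℂ} (hL : AnalyticAt ℂ L 0) (hh : AnalyticAt ℂ h 0) (h0 : h 0 = 0)
    (e : ∀ᶠ z in 𝓝 0, h z = z * h z + 2 * z + (z * deriv L z + z * (z * deriv L z))) (k : ℕ) :
    tc h (k + 1) = BB (tc L) (k + 1) + BB (tc L) k := by
  have hd : AnalyticAt ℂ (fun z => z * deriv L z) 0 := analyticAt_id.mul hL.deriv
  have key : ∀ k, tc h (k + 1) = tc h k + (if k = 0 then 2 else 0) +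
      ((k + 1 : ℕ) * tc L (k + 1) + k * tc L k) := by
    intro k
    have e' : h =ᶠ[𝓝 0] fun z => z * h z + 2 * z + (z * deriv L z + z * (z * deriv L z)) := e
    rw [tc_congr e', tc_add, tc_add, tc_add, tc_const_mul, tc_id_mul hh, tc_id_mul hd,
      tc_id_mul_deriv hL, tc_id_mul_deriv hL, tc_id]
    · by_cases hk : k = 0 <;> simp [hk]
    · exact analyticAt_id
    · exact hd
    · exact analyticAt_id.mul hd
    · exact analyticAt_id.mul hh
    · exact analyticAt_const.mul analyticAt_id
    · exact (analyticAt_id.mul hh).add (analyticAt_const.mul analyticAt_id)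
    · exact hd.add (analyticAt_id.mul hd)
  induction k with
  | zero => rw [key, BB_succ, BB_zero, tc_zero, h0]; simp; ring
  | succ k ih =>
    rw [key, ih, BB_succ _ (k + 1), BB_succ _ k]; simp; ring

/-! ### The evolution of the coefficients -/

lemma exp_half_le_two {δ : ℝ} (h : -(1 / 2) ≤ δ) : Real.exp (-δ) ≤ 2 := by
  have h1 : Real.exp (-δ) ≤ Real.exp (1 / 2) := Real.exp_le_exp.2 (by linarith)
  have h2 : Real.exp (1 / 2) ^ 2 = Real.exp 1 := by rw [← Real.exp_nat_mul]; norm_num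
  have h3 := Real.exp_one_lt_d9
  nlinarith [Real.exp_pos (1 / 2)]

lemma uu_slit_exp {z : ℂ} (hz : ‖z‖ ≤ 1 / 20) {δ : ℝ} (h : -(1 / 2) ≤ δ) :
    uu z (Real.exp (-δ) : ℝ) ∈ slitPlane := uu_slit' hz (Real.exp_pos _) (exp_half_le_two h)

lemma LL_analyticOn {G : ℂ → ℂ} (hG : AnalyticOnNhd ℂ G (ball 0 1)) {w : ℝ} (h0 : 0 < w)
    (h1 : w ≤ 1) : AnalyticOnNhd ℂ (LL G w) (ball 0 1) := by
  apply DifferentiableOn.analyticOnNhd _ isOpen_ball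
  intro z hz
  have hz : ‖z‖ < 1 := by simpa using hz
  exact (LL_hasDerivAt_z hG hz (uu_slit hz h0 h1)).differentiableAt.differentiableWithinAt

lemma LL_diffOn_small {G : ℂ → ℂ} (hG : AnalyticOnNhd ℂ G (ball 0 1)) {δ : ℝ}
    (h : -(1 / 2) ≤ δ) : DifferentiableOn ℂ (LL G (Real.exp (-δ) : ℝ)) (closedBall 0 (1 / 20)) := by
  intro z hz
  have hz : ‖z‖ ≤ 1 / 20 := by simpa using hz
  exact (LL_hasDerivAt_z hG (by linarith) (uu_slit_exp hz h)).differentiableAt.differentiableWithinAt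

lemma hh_diffOn_small {G : ℂ → ℂ} (hG : AnalyticOnNhd ℂ G (ball 0 1)) {δ : ℝ}
    (h : -(1 / 2) ≤ δ) : DifferentiableOn ℂ (hh G (Real.exp (-δ) : ℝ)) (closedBall 0 (1 / 20)) := by
  intro z hz
  have hz : ‖z‖ ≤ 1 / 20 := by simpa using hz
  have hs := uu_slit_exp hz h
  have hz1 := one_add_ne_of_norm (z := z) (by linarith)
  set w : ℂ := ((Real.exp (-δ) : ℝ) : ℂ)
  have hv := (vv_hasDerivAt_z hs hz1).differentiableAt
  have hvn := vv_norm_lt hs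
  have hd : DifferentiableAt ℂ (fun z => deriv G (vv z w)) z :=
    DifferentiableAt.comp z (hG.deriv _ (by simpa using hvn)).differentiableAt hv
  have hu : DifferentiableAt ℂ (fun z => uu z w) z := by
    unfold uu
    have h1 : DifferentiableAt ℂ (fun z : ℂ => 4 * w * z) z := by fun_prop
    have h2 : DifferentiableAt ℂ (fun z : ℂ => (1 + z) ^ 2) z := by fun_prop
    exact (h1.div h2 (pow_ne_zero 2 hz1)).const_sub 1
  have hss : DifferentiableAt ℂ (fun z => ss z w) z :=
    DifferentiableAt.comp z (csq_hasDerivAt hs).differentiableAt hu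
  apply DifferentiableAt.differentiableWithinAt
  unfold hh
  exact (hd.add (DifferentiableAt.div (by fun_prop) (hv.const_add 1) (one_add_ne_of_norm hvn))).mul
    (hv.div hss (csq_ne_zero _))

lemma hh_cont {G : ℂ → ℂ} (hG : AnalyticOnNhd ℂ G (ball 0 1)) {p : ℝ × ℂ}
    (h : -(1 / 2) ≤ p.1) (hz : ‖p.2‖ ≤ 1 / 20) :
    ContinuousAt (fun p : ℝ × ℂ => hh G (Real.exp (-p.1) : ℝ) p.2) p := by
  have hs := uu_slit_exp hz h
  have hz1 := one_add_ne_of_norm (z := p.2) (by linarith)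
  have hvn := vv_norm_lt hs
  have hu : ContinuousAt (fun p : ℝ × ℂ => uu p.2 (Real.exp (-p.1) : ℝ)) p := by
    unfold uu
    exact continuousAt_const.sub
      (ContinuousAt.div (by fun_prop) (by fun_prop) (pow_ne_zero 2 hz1))
  have hss : ContinuousAt (fun p : ℝ × ℂ => ss p.2 (Real.exp (-p.1) : ℝ)) p :=
    ContinuousAt.comp (csq_hasDerivAt hs).continuousAt hu
  have hv : ContinuousAt (fun p : ℝ × ℂ => vv p.2 (Real.exp (-p.1) : ℝ)) p :=
    ContinuousAt.comp (cay_hasDerivAt (one_add_ne_of_re (ss_re_pos hs))).continuousAt hss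
  have hd : ContinuousAt (fun p : ℝ × ℂ => deriv G (vv p.2 (Real.exp (-p.1) : ℝ))) p :=
    ContinuousAt.comp (f := fun p : ℝ × ℂ => vv p.2 (Real.exp (-p.1) : ℝ))
      (hG.deriv _ (by simpa using hvn)).continuousAt hv
  unfold hh
  exact (hd.add (ContinuousAt.div continuousAt_const (continuousAt_const.add hv)
    (one_add_ne_of_norm hvn))).mul (hv.div hss (csq_ne_zero _))

/-- The Taylor coefficients of `L` can be differentiated in time under the Cauchy integral. -/
lemma hasDerivAt_tc_LL {G : ℂ → ℂ} (hG : AnalyticOnNhd ℂ G (ball 0 1)) {δ : ℝ} (hδ : 0 ≤ δ)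
    (k : ℕ) : HasDerivAt (fun δ : ℝ => tc (LL G (Real.exp (-δ) : ℝ)) k)
      (-tc (hh G (Real.exp (-δ) : ℝ)) k) δ := by
  have hr : (0 : ℝ) < 1 / 20 := by norm_num
  set r : ℝ := 1 / 20 with hrdef
  have hcm : ∀ θ, ‖circleMap 0 r θ‖ ≤ 1 / 20 := by
    intro θ; rw [norm_circleMap_zero, abs_of_pos hr]
  have hcm0 : ∀ θ, circleMap 0 r θ ≠ 0 := fun θ => circleMap_ne_center hr.ne'
  have hcc : Continuous (circleMap (0 : ℂ) r) := continuous_circleMap 0 r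
  set s : Set ℝ := Icc (δ - 1 / 2) (δ + 1 / 2) with hs
  have hsn : s ∈ 𝓝 δ := Icc_mem_nhds (by linarith) (by linarith)
  have hsm : ∀ x ∈ s, -(1 / 2) ≤ x := fun x hx => by linarith [hx.1]
  have hker : Continuous fun θ : ℝ => circleMap 0 r θ * I * (1 / circleMap 0 r θ ^ (k + 1)) :=
    (hcc.mul continuous_const).mul
      (continuous_const.div (hcc.pow _) fun θ => pow_ne_zero _ (hcm0 θ))
  have hLc : ∀ x ∈ s, Continuous fun θ : ℝ => LL G (Real.exp (-x) : ℝ) (circleMap 0 r θ) := by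
    intro x hx
    exact (LL_diffOn_small hG (hsm x hx)).continuousOn.comp_continuous hcc
      (fun θ => by simpa using hcm θ)
  have hhc : ∀ x ∈ s, Continuous fun θ : ℝ => hh G (Real.exp (-x) : ℝ) (circleMap 0 r θ) := by
    intro x hx
    exact (hh_diffOn_small hG (hsm x hx)).continuousOn.comp_continuous hcc
      (fun θ => by simpa using hcm θ)
  obtain ⟨M, hM⟩ : ∃ M, ∀ p ∈ s ×ˢ closedBall (0 : ℂ) (1 / 20),
      ‖hh G (Real.exp (-p.1) : ℝ) p.2‖ ≤ M := by
    apply IsCompact.exists_bound_of_continuousOn (isCompact_Icc.prod (isCompact_closedBall _ _))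
    intro p hp
    exact (hh_cont hG (hsm _ hp.1) (by simpa using hp.2)).continuousWithinAt
  have key := (intervalIntegral.hasDerivAt_integral_of_dominated_loc_of_deriv_le (μ := volume)
    (a := 0) (b := 2 * π) (x₀ := δ) (s := s)
    (F := fun x θ => circleMap 0 r θ * I * (1 / circleMap 0 r θ ^ (k + 1) *
      LL G (Real.exp (-x) : ℝ) (circleMap 0 r θ)))
    (F' := fun x θ => circleMap 0 r θ * I * (1 / circleMap 0 r θ ^ (k + 1) *
      -hh G (Real.exp (-x) : ℝ) (circleMap 0 r θ)))
    (bound := fun θ => ‖circleMap 0 r θ * I * (1 / circleMap 0 r θ ^ (k + 1))‖ * M)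
    hsn ?_ ?_ ?_ ?_ ?_ ?_).2
  · have e1 : ∀ x ∈ s, tc (LL G (Real.exp (-x) : ℝ)) k = (2 * π * I)⁻¹ * ∫ θ in (0 : ℝ)..2 * π,
        circleMap 0 r θ * I * (1 / circleMap 0 r θ ^ (k + 1) *
          LL G (Real.exp (-x) : ℝ) (circleMap 0 r θ)) :=
      fun x hx => tc_eq_integral hr (LL_diffOn_small hG (hsm x hx)) k
    have e2 := tc_eq_integral hr (hh_diffOn_small hG (δ := δ) (by linarith)) k
    have key' := key.const_mul ((2 * π * I)⁻¹ : ℂ)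
    have := key'.congr_of_eventuallyEq (Filter.eventually_of_mem hsn e1)
    refine this.congr_deriv ?_
    rw [e2]
    simp only [mul_neg, intervalIntegral.integral_neg]
  · refine Filter.eventually_of_mem hsn fun x hx => ?_
    apply Continuous.aestronglyMeasurable
    simp only [← mul_assoc]
    exact hker.mul (hLc x hx)
  · apply Continuous.intervalIntegrable
    simp only [← mul_assoc]
    exact hker.mul (hLc δ (mem_of_mem_nhds hsn))
  · apply Continuous.aestronglyMeasurable
    simp only [← mul_assoc]
    exact hker.mul (hhc δ (mem_of_mem_nhds hsn)).neg
  · refine Filter.Eventually.of_forall fun θ _ x hx => ?_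
    rw [← mul_assoc, norm_mul, norm_neg]
    exact mul_le_mul_of_nonneg_left (hM (x, circleMap 0 r θ) ⟨hx, by simpa using hcm θ⟩)
      (norm_nonneg _)
  · exact (hker.norm.mul continuous_const).intervalIntegrable _ _
  · refine Filter.Eventually.of_forall fun θ _ x hx => ?_
    have := LL_hasDerivAt_delta hG (z := circleMap 0 r θ) (δ := x) (by linarith [hcm θ])
      (uu_slit_exp (hcm θ) (hsm x hx))
    exact (this.const_mul _).const_mul _

/-- The coefficient form of the evolution: `c_k' = -(B_k + B_{k-1})`. -/
lemma hasDerivAt_tc {G : ℂ → ℂ} (hG : AnalyticOnNhd ℂ G (ball 0 1)) {δ : ℝ} (hδ : 0 ≤ δ)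
    (k : ℕ) : HasDerivAt (fun δ : ℝ => tc (LL G (Real.exp (-δ) : ℝ)) (k + 1))
      (-(BB (tc (LL G (Real.exp (-δ) : ℝ))) (k + 1) + BB (tc (LL G (Real.exp (-δ) : ℝ))) k)) δ := by
  have hn : closedBall (0 : ℂ) (1 / 20) ∈ 𝓝 0 := closedBall_mem_nhds _ (by norm_num)
  have h12 : -(1 / 2) ≤ δ := by linarith
  have h := hasDerivAt_tc_LL hG hδ (k + 1)
  rwa [tc_pde ((LL_diffOn_small hG h12).analyticAt hn) ((hh_diffOn_small hG h12).analyticAt hn)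
    (by simp [hh, vv_zero])] at h
  filter_upwards [hn] with z hz
  have hz : ‖z‖ ≤ 1 / 20 := by simpa using hz
  exact hh_pde hG (by linarith) (uu_slit_exp hz h12)

/-! ### Monotonicity of the quadratic functional -/

/-- The partial sums of the time-dependent quadratic functional
`∑ k T_k(t) |c_k|² - 4 T_k(t) / k`. -/
noncomputable def EE (T : ℕ → ℝ → ℝ) (c : ℕ → ℂ) (N : ℕ) (t : ℝ) : ℝ :=
  ∑ k ∈ Finset.Icc 1 N, (k * T k t * ‖c k‖ ^ 2 - 4 * T k t / k)

/-- The estimates on the Taylor coefficients `c` of `log (f z / z)` that are propagated along the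
evolution. The first two say `|a₂| ≤ 2` and `|a₃ - a₂²| ≤ 1` for the coefficients of `f`. The third
bounds the partial sums `EE` at all times, with an error `4 / N`. -/
structure PP (T : ℕ → ℝ → ℝ) (c : ℕ → ℂ) : Prop where
  one : ‖c 1‖ ≤ 2
  two : ‖c 2 - c 1 ^ 2 / 2‖ ≤ 1
  en : ∀ t, 0 ≤ t → ∀ N : ℕ, 1 ≤ N → EE T c N t ≤ 4 / N

/-- The dissipation inequality behind the monotonicity of the functional, obtained by Abel
summation from the relation `T_k - T_{k+1} = S_k + S_{k+1}`. -/
lemma dissipation {ε : ℝ} {T S : ℕ → ℝ → ℝ} (W : WeightSystem ε T S) {t : ℝ} (ht : 0 ≤ t)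
    (c : ℕ → ℂ) (K : ℕ) :
    ∑ k ∈ Finset.Icc 1 K, (k * (k * S k t) * ‖c k‖ ^ 2 + k * T k t *
      (2 * inner ℝ (c k) (-(BB c k + BB c (k - 1)))) - 4 * (k * S k t) / k) ≤
      -(2 * (‖BB c K‖ ^ 2 - 1) * (T (K + 1) t + S (K + 1) t)) := by
  induction K with
  | zero => simp [BB_zero]
  | succ K ih =>
    rw [Finset.sum_Icc_succ_top (by omega)]
    have hrel := W.rel (K + 1) (by omega) t
    have hS := W.nonneg (K + 1) (by omega) t ht
    have hk : ((K + 1 : ℕ) : ℝ) ≠ 0 := by positivity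
    set q : ℂ := ((K + 1 : ℕ) : ℝ) • c (K + 1) with hq
    have hB : BB c (K + 1) = BB c K + q := by rw [BB_succ, hq]; simp
    have e1 : ((K + 1 : ℕ) : ℝ) * ((K + 1 : ℕ) * S (K + 1) t) * ‖c (K + 1)‖ ^ 2 =
        S (K + 1) t * ‖q‖ ^ 2 := by
      rw [hq, norm_smul, mul_pow, Real.norm_eq_abs, sq_abs]; ring
    have e2 : ((K + 1 : ℕ) : ℝ) * T (K + 1) t *
        (2 * inner ℝ (c (K + 1)) (-(BB c (K + 1) + BB c (K + 1 - 1)))) =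
        -(T (K + 1) t * (2 * inner ℝ q (BB c (K + 1) + BB c K))) := by
      rw [hq, real_inner_smul_left, inner_neg_right]; simp; ring
    have e3 : 4 * (((K + 1 : ℕ) : ℝ) * S (K + 1) t) / ((K + 1 : ℕ) : ℝ) = 4 * S (K + 1) t := by
      field_simp
    rw [e1, e2, e3]
    have h1 : ‖BB c (K + 1)‖ ^ 2 = ‖BB c K‖ ^ 2 + 2 * inner ℝ (BB c K) q + ‖q‖ ^ 2 := by
      rw [hB, norm_add_sq_real]
    have h2 : inner ℝ q (BB c (K + 1) + BB c K) = 2 * inner ℝ (BB c K) q + ‖q‖ ^ 2 := by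
      rw [hB, inner_add_right, inner_add_right, real_inner_self_eq_norm_sq, real_inner_comm]; ring
    have h3 : 0 ≤ ‖BB c K + BB c K + q‖ ^ 2 := by positivity
    rw [norm_add_sq_real, ← two_smul ℝ (BB c K), norm_smul, real_inner_smul_left, mul_pow] at h3
    simp only [Real.norm_ofNat] at h3
    rw [h2, h1]
    set b := ‖BB c K‖ ^ 2
    set i := inner ℝ (BB c K) q
    set n := ‖q‖ ^ 2
    have h4 := mul_nonneg hS h3
    have h5 : T (K + 1 + 1) t + S (K + 1 + 1) t = T (K + 1) t - S (K + 1) t := by linarith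
    rw [h5]
    nlinarith

/-- The functional at time `t` after a slit step of length `δ` is at most the functional at time
`t + δ` before it, up to an error that vanishes as `K → ∞`. -/
lemma EE_step {ε : ℝ} {T S : ℕ → ℝ → ℝ} (W : WeightSystem ε T S) {G : ℂ → ℂ}
    (hG : AnalyticOnNhd ℂ G (ball 0 1)) {δ : ℝ} (hδ : 0 ≤ δ) {t : ℝ} (ht : 0 ≤ t) (K : ℕ) :
    EE T (tc (LL G (Real.exp (-δ) : ℝ))) K t ≤
      EE T (tc (LL G (Real.exp (-0 : ℝ) : ℝ))) K (t + δ) + 4 * δ / (K + 1) := by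
  set c : ℝ → ℕ → ℂ := fun x => tc (LL G (Real.exp (-x) : ℝ)) with hc
  set F : ℝ → ℝ := fun x => EE T (c x) K (t + δ - x) - 4 * x / (K + 1) with hF
  set F' : ℝ → ℝ := fun x => ∑ k ∈ Finset.Icc 1 K, (k * (k * S k (t + δ - x)) * ‖c x k‖ ^ 2 +
      k * T k (t + δ - x) * (2 * inner ℝ (c x k) (-(BB (c x) k + BB (c x) (k - 1))))
       - 4 * (k * S k (t + δ - x)) / k) - 4 / (K + 1) with hF'
  have hder : ∀ x, 0 ≤ x → HasDerivAt F (F' x) x := by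
    intro x hx
    have hlin : HasDerivAt (fun x : ℝ => 4 * x / ((K : ℝ) + 1)) (4 / (K + 1)) x := by
      simpa using ((hasDerivAt_id x).const_mul (4 : ℝ)).div_const ((K : ℝ) + 1)
    refine HasDerivAt.sub ?_ hlin
    unfold EE
    apply HasDerivAt.fun_sum
    intro k hk
    have hk1 : 1 ≤ k := (Finset.mem_Icc.1 hk).1
    have hT : HasDerivAt (fun x => T k (t + δ - x)) (k * S k (t + δ - x)) x := by
      have h := (W.deriv k hk1 (t + δ - x)).comp x ((hasDerivAt_id x).const_sub (t + δ))
      refine h.congr_deriv ?_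
      ring
    have hck : HasDerivAt (fun x => c x k) (-(BB (c x) k + BB (c x) (k - 1))) x := by
      obtain ⟨j, rfl⟩ : ∃ j, k = j + 1 := ⟨k - 1, by omega⟩
      exact hasDerivAt_tc hG hx j
    refine (((hT.const_mul (k : ℝ)).mul hck.norm_sq).sub
      ((hT.const_mul 4).div_const (k : ℝ))).congr_deriv ?_
    ring
  have hanti : AntitoneOn F (Icc 0 δ) := by
    apply antitoneOn_of_deriv_nonpos (convex_Icc 0 δ)
    · exact fun x hx => (hder x hx.1).continuousAt.continuousWithinAt
    · intro x hx
      rw [interior_Icc] at hx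
      exact (hder x hx.1.le).differentiableAt.differentiableWithinAt
    · intro x hx
      rw [interior_Icc] at hx
      rw [(hder x hx.1.le).deriv, hF']
      have ht' : 0 ≤ t + δ - x := by linarith [hx.2]
      have h1 := dissipation W ht' (c x) K
      have h2 := W.T_le (K + 1) (by omega) _ ht'
      have h3 := W.S_le (K + 1) (by omega) _ ht'
      have h4 := W.T_nonneg (K + 1) (by omega) _ ht'
      have h5 := W.nonneg (K + 1) (by omega) _ ht'
      push_cast at h2 h3
      have h6 : (4 : ℝ) / (K + 1) = 2 * (1 / (K + 1) + 1 / (K + 1)) := by ring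
      simp only
      rw [h6]
      nlinarith [mul_nonneg (sq_nonneg ‖BB (c x) K‖) (add_nonneg h4 h5)]
  have := hanti (left_mem_Icc.2 hδ) (right_mem_Icc.2 hδ) hδ
  simp only [hF] at this
  rw [sub_zero, mul_zero, zero_div, sub_zero, add_sub_cancel_right] at this
  exact sub_le_iff_le_add.1 this

/-- Truncating the functional from `N + j` to `N` terms costs at most the discarded negative
terms, which are bounded by a telescoping sum. -/
lemma EE_mono_aux {ε : ℝ} {T S : ℕ → ℝ → ℝ} (W : WeightSystem ε T S) {t : ℝ} (ht : 0 ≤ t)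
    (c : ℕ → ℂ) {N : ℕ} (hN : 1 ≤ N) (j : ℕ) :
    EE T c N t ≤ EE T c (N + j) t + 4 * (1 / N - 1 / ((N + j : ℕ) : ℝ)) := by
  induction j with
  | zero => simp
  | succ j ih =>
    refine ih.trans ?_
    have h : EE T c (N + (j + 1)) t = EE T c (N + j) t +
        (((N + j + 1 : ℕ) : ℝ) * T (N + j + 1) t * ‖c (N + j + 1)‖ ^ 2 -
          4 * T (N + j + 1) t / ((N + j + 1 : ℕ) : ℝ)) := by
      unfold EE; rw [← add_assoc, Finset.sum_Icc_succ_top (by omega)]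
    rw [h]
    have h1 := W.T_nonneg (N + j + 1) (by omega) t ht
    have h2 := W.T_le (N + j + 1) (by omega) t ht
    have h3 : 0 ≤ ((N + j + 1 : ℕ) : ℝ) * T (N + j + 1) t * ‖c (N + j + 1)‖ ^ 2 := by positivity
    set n : ℝ := ((N + j : ℕ) : ℝ) with hn
    have hn0 : 0 < n := by rw [hn]; exact_mod_cast (by omega : 0 < N + j)
    have e1 : ((N + j + 1 : ℕ) : ℝ) = n + 1 := by rw [hn]; push_cast; ring
    have e2 : ((N + (j + 1) : ℕ) : ℝ) = n + 1 := by rw [hn]; push_cast; ring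
    rw [e1] at h2 h3 ⊢
    rw [e2]
    have h4 : 4 * T (N + j + 1) t / (n + 1) ≤ 4 * (1 / n - 1 / (n + 1)) := by
      calc 4 * T (N + j + 1) t / (n + 1) ≤ 4 * (1 / (n + 1)) / (n + 1) := by gcongr
        _ ≤ 4 * (1 / n - 1 / (n + 1)) := by
          have : 4 * (1 / n - 1 / (n + 1)) - 4 * (1 / (n + 1)) / (n + 1) =
              4 / (n * (n + 1) ^ 2) := by field_simp; ring
          have h5 : 0 ≤ 4 / (n * (n + 1) ^ 2) := by positivity
          linarith
    linarith

/-- One slit step preserves the whole package of estimates. -/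
lemma PP_step {ε : ℝ} {T S : ℕ → ℝ → ℝ} (W : WeightSystem ε T S) {G : ℂ → ℂ}
    (hG : AnalyticOnNhd ℂ G (ball 0 1)) (hP : PP T (tc G)) {δ : ℝ} (hδ : 0 ≤ δ) :
    PP T (tc (LL G (Real.exp (-δ) : ℝ))) := by
  set c : ℝ → ℕ → ℂ := fun x => tc (LL G (Real.exp (-x) : ℝ)) with hc
  have hc0 : c 0 = tc G := by
    funext k
    apply tc_congr
    filter_upwards [ball_mem_nhds (0 : ℂ) one_pos] with z hz
    rw [neg_zero, Real.exp_zero, ofReal_one, LL_one (by simpa using hz)]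
  have hd1 : ∀ x, 0 ≤ x → HasDerivAt (fun x => c x 1) (-(2 + c x 1)) x := by
    intro x hx
    refine (hasDerivAt_tc hG hx 0).congr_deriv ?_
    rw [BB_succ, BB_zero]; simp only [hc]; push_cast; ring
  have hd2 : ∀ x, 0 ≤ x → HasDerivAt (fun x => c x 2) (-(2 + 2 * c x 1 + 2 * c x 2)) x := by
    intro x hx
    refine (hasDerivAt_tc hG hx 1).congr_deriv ?_
    rw [BB_succ, BB_succ, BB_zero]; simp only [hc]; push_cast; ring
  -- both `c₁ + 2` and `c₂ - c₁² / 2 + 1` decay exponentially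
  have hexp : ∀ (m : ℝ) (x : ℝ), HasDerivAt (fun x : ℝ => ((Real.exp (m * x) : ℝ) : ℂ))
      ((m * Real.exp (m * x) : ℝ) : ℂ) x := by
    intro m x
    have := (((hasDerivAt_id x).const_mul m).exp).ofReal_comp
    refine this.congr_deriv ?_
    simp [mul_comm]
  have lin : ∀ (y : ℝ → ℂ) (m a : ℝ),
      (∀ x, 0 ≤ x → HasDerivAt y (-(m * (a + y x))) x) → 
      y δ = -(a : ℂ) + Real.exp (-(m * δ)) * (y 0 + a) := by
    intro y m a hy
    have hc : ∀ x ∈ Icc 0 δ, ((Real.exp (m * x) : ℝ) : ℂ) * (y x + a) =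
        ((Real.exp (m * 0) : ℝ) : ℂ) * (y 0 + a) := by
      have hD : ∀ x, 0 ≤ x →
          HasDerivAt (fun x => ((Real.exp (m * x) : ℝ) : ℂ) * (y x + a)) 0 x := by
        intro x hx
        refine ((hexp m x).mul ((hy x hx).add_const (a : ℂ))).congr_deriv ?_
        push_cast; ring
      apply constant_of_has_deriv_right_zero
      · exact fun x hx => (hD x hx.1).continuousAt.continuousWithinAt
      · exact fun x hx => (hD x hx.1).hasDerivWithinAt
    have h := hc δ (right_mem_Icc.2 hδ)
    rw [mul_zero, Real.exp_zero, ofReal_one, one_mul] at h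
    rw [← h, ← mul_assoc, ← ofReal_mul, ← Real.exp_add]
    simp
  have conv : ∀ (y0 : ℂ) (m a : ℝ), 0 ≤ m → 0 ≤ a → ‖y0‖ ≤ a →
      ‖-(a : ℂ) + Real.exp (-(m * δ)) * (y0 + a)‖ ≤ a := by
    intro y0 m a hm ha hy
    set e := Real.exp (-(m * δ)) with he
    have he0 : 0 ≤ e := (Real.exp_pos _).le
    have he1 : e ≤ 1 := Real.exp_le_one_iff.2 (by nlinarith)
    have e1 : -(a : ℂ) + e * (y0 + a) = ((-((1 - e) * a) : ℝ) : ℂ) + (e : ℂ) * y0 := by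
      push_cast; ring
    rw [e1]
    refine (norm_add_le _ _).trans ?_
    rw [norm_mul, Complex.norm_real, Complex.norm_real, norm_neg, norm_mul,
      Real.norm_of_nonneg (sub_nonneg.2 he1), Real.norm_of_nonneg ha, Real.norm_of_nonneg he0]
    nlinarith
  refine ⟨?_, ?_, ?_⟩
  · change ‖c δ 1‖ ≤ 2
    have := lin (fun x => c x 1) 1 2 (fun x hx => (hd1 x hx).congr_deriv (by push_cast; ring))
    rw [this]
    exact conv _ 1 2 (by norm_num) (by norm_num) (by rw [hc0]; exact hP.one)
  · change ‖c δ 2 - c δ 1 ^ 2 / 2‖ ≤ 1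
    have := lin (fun x => c x 2 - c x 1 ^ 2 / 2) 2 1 (fun x hx => by
      refine ((hd2 x hx).sub (((hd1 x hx).pow 2).div_const 2)).congr_deriv ?_
      push_cast; ring)
    rw [this]
    exact conv _ 2 1 (by norm_num) (by norm_num) (by rw [hc0]; exact hP.two)
  · intro t ht N hN
    change EE T (c δ) N t ≤ 4 / N
    have hK : ∀ j : ℕ, EE T (c δ) N t ≤ 4 / N + 4 * δ / (((N + j : ℕ) : ℝ) + 1) := by
      intro j
      have h1 := EE_mono_aux W ht (c δ) hN j
      have h2 : EE T (c δ) (N + j) t ≤ EE T (c 0) (N + j) (t + δ) + 4 * δ / (((N + j : ℕ) : ℝ) + 1) :=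
        EE_step W hG hδ ht (N + j)
      rw [hc0] at h2
      have h3 := hP.en (t + δ) (by linarith) (N + j) (by omega)
      have h4 : (4 : ℝ) / N = 4 * (1 / N - 1 / ((N + j : ℕ) : ℝ)) + 4 / ((N + j : ℕ) : ℝ) := by ring
      linarith
    have hlim : Filter.Tendsto (fun j : ℕ => 4 / (N : ℝ) + 4 * δ / (((N + j : ℕ) : ℝ) + 1))
        Filter.atTop (𝓝 (4 / N + 0)) := by
      apply Filter.Tendsto.const_add
      have := (tendsto_const_div_atTop_nhds_zero_nat (4 * δ)).comp
        (Filter.tendsto_add_atTop_nat (N + 1))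
      refine this.congr fun j => ?_
      simp only [Function.comp]; push_cast; congr 1; ring
    rw [add_zero] at hlim
    exact ge_of_tendsto' hlim hK

/-! ### Injective analytic functions and Hurwitz's theorem -/

section Inverse
variable {f : ℂ → ℂ} {R : ℝ}

lemma injOn_isOpen_image (hR : 0 < R) (hf : AnalyticOnNhd ℂ f (ball 0 R))
    (hi : InjOn f (ball 0 R)) {V : Set ℂ} (hV : V ⊆ ball 0 R) (hVo : IsOpen V) :
    IsOpen (f '' V) := by
  rcases hf.is_constant_or_isOpen (convex_ball 0 R).isPreconnected with ⟨w, hw⟩ | h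
  · exfalso
    have h0 : (0 : ℂ) ∈ ball (0 : ℂ) R := mem_ball_self hR
    have h1 : ((R / 2 : ℝ) : ℂ) ∈ ball (0 : ℂ) R := by
      rw [mem_ball_zero_iff, Complex.norm_real, Real.norm_of_nonneg (by positivity)]; linarith
    have := hi h0 h1 ((hw _ h0).trans (hw _ h1).symm)
    have h2 : (0 : ℝ) = R / 2 := by exact_mod_cast this
    linarith
  · exact h V hV hVo

lemma injOn_inv_continuousAt (hR : 0 < R) (hf : AnalyticOnNhd ℂ f (ball 0 R))
    (hi : InjOn f (ball 0 R)) {x : ℂ} (hx : x ∈ ball (0 : ℂ) R) :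
    ContinuousAt (Function.invFunOn f (ball 0 R)) (f x) := by
  have hl := hi.leftInvOn_invFunOn
  intro V hV
  rw [hl hx] at hV
  obtain ⟨V', hV'V, hV'o, hxV'⟩ := _root_.mem_nhds_iff.1 hV
  have ho : IsOpen (f '' (V' ∩ ball 0 R)) :=
    injOn_isOpen_image hR hf hi inter_subset_right (hV'o.inter isOpen_ball)
  refine Filter.mem_map.2 (Filter.mem_of_superset (ho.mem_nhds ⟨x, ⟨hxV', hx⟩, rfl⟩) ?_)
  rintro _ ⟨y, ⟨hy1, hy2⟩, rfl⟩
  change Function.invFunOn f (ball 0 R) (f y) ∈ V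
  rw [hl hy2]
  exact hV'V hy1

lemma injOn_inv_hasDerivAt (hR : 0 < R) (hf : AnalyticOnNhd ℂ f (ball 0 R))
    (hi : InjOn f (ball 0 R)) {x : ℂ} (hx : x ∈ ball (0 : ℂ) R) (hd : deriv f x ≠ 0) :
    HasDerivAt (Function.invFunOn f (ball 0 R)) (deriv f x)⁻¹ (f x) := by
  have hl := hi.leftInvOn_invFunOn
  refine HasDerivAt.of_local_left_inverse (f := f) (injOn_inv_continuousAt hR hf hi hx) ?_ hd ?_
  · rw [hl hx]; exact (hf x hx).differentiableAt.hasDerivAt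
  · filter_upwards [(injOn_isOpen_image hR hf hi subset_rfl isOpen_ball).mem_nhds
      (mem_image_of_mem f hx)] with y hy
    obtain ⟨z, hz, rfl⟩ := hy
    rw [hl hz]

/-- An injective analytic function has nonvanishing derivative: otherwise the inverse function,
continuous and differentiable away from one point, is differentiable there too. -/
lemma injOn_deriv_ne_zero (hR : 0 < R) (hf : AnalyticOnNhd ℂ f (ball 0 R))
    (hi : InjOn f (ball 0 R)) {x : ℂ} (hx : x ∈ ball (0 : ℂ) R) : deriv f x ≠ 0 := by
  intro h0
  have hl := hi.leftInvOn_invFunOn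
  set ψ := Function.invFunOn f (ball 0 R) with hψ
  rcases (hf x hx).deriv.eventually_eq_zero_or_eventually_ne_zero with h | h
  · obtain ⟨ρ, hρ, hρ'⟩ := Metric.eventually_nhds_iff_ball.1
      (h.and (isOpen_ball.eventually_mem hx))
    have hc : ∀ y ∈ ball x ρ, f y = f x := by
      intro y hy
      refine isOpen_ball.is_const_of_deriv_eq_zero (convex_ball x ρ).isPreconnected
        (fun z hz => (hf z (hρ' z hz).2).differentiableAt.differentiableWithinAt)
        (fun z hz => (hρ' z hz).1) hy (mem_ball_self hρ)
    have hy : x + ((ρ / 2 : ℝ) : ℂ) ∈ ball x ρ := by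
      rw [mem_ball, dist_eq_norm, add_sub_cancel_left, Complex.norm_real,
        Real.norm_of_nonneg (by positivity)]; linarith
    have := hi (hρ' _ hy).2 hx (hc _ hy)
    rw [add_eq_left, ofReal_eq_zero] at this
    linarith
  · obtain ⟨ρ, hρ, hρ'⟩ := Metric.eventually_nhds_iff_ball.1
      ((eventually_nhdsWithin_iff.1 h).and (isOpen_ball.eventually_mem hx))
    have hsub : ball x ρ ⊆ ball 0 R := fun y hy => (hρ' y hy).2
    have hWo : IsOpen (f '' ball x ρ) := injOn_isOpen_image hR hf hi hsub isOpen_ball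
    have hW : f '' ball x ρ ∈ 𝓝 (f x) := hWo.mem_nhds ⟨x, mem_ball_self hρ, rfl⟩
    have hD : DifferentiableOn ℂ ψ (f '' ball x ρ) := by
      rw [← Complex.differentiableOn_compl_singleton_and_continuousAt_iff hW]
      refine ⟨?_, injOn_inv_continuousAt hR hf hi hx⟩
      rintro _ ⟨⟨y, hy, rfl⟩, hne⟩
      have hyx : y ≠ x := fun h => hne (by rw [h]; rfl)
      exact (injOn_inv_hasDerivAt hR hf hi (hsub hy)
        ((hρ' y hy).1 hyx)).differentiableAt.differentiableWithinAt
    have h1 : HasDerivAt (ψ ∘ f) (deriv ψ (f x) * 0) x := by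
      have h2 := (hf x hx).differentiableAt.hasDerivAt
      rw [h0] at h2
      exact (hD.differentiableAt hW).hasDerivAt.comp x h2
    have h3 : HasDerivAt (ψ ∘ f) 1 x := by
      refine (hasDerivAt_id x).congr_of_eventuallyEq ?_
      filter_upwards [isOpen_ball.mem_nhds hx] with y hy
      exact hl hy
    have := h1.unique h3
    simp at this

end Inverse

/-- Hurwitz: a nonconstant locally uniform limit of injective analytic functions is injective. -/
lemma hurwitz_injOn {F : ℕ → ℂ → ℂ} {f : ℂ → ℂ}
    (hF : ∀ n, AnalyticOnNhd ℂ (F n) (ball 0 1)) (hi : ∀ n, InjOn (F n) (ball 0 1))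
    (hlim : TendstoLocallyUniformlyOn F f Filter.atTop (ball 0 1))
    (hf : AnalyticOnNhd ℂ f (ball 0 1)) (hd : deriv f 0 ≠ 0) : InjOn f (ball 0 1) := by
  intro a ha b hb hab
  by_contra hne
  have hnc : ∀ᶠ z in 𝓝[≠] a, f z - f b ≠ 0 := by
    have hA : AnalyticOnNhd ℂ (fun z => f z - f b) (ball 0 1) := hf.sub analyticOnNhd_const
    rcases (hA a ha).eventually_eq_zero_or_eventually_ne_zero with h | h
    · exfalso
      have h1 := hA.eqOn_zero_of_preconnected_of_eventuallyEq_zero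
        (convex_ball 0 1).isPreconnected ha h
      have h2 : f =ᶠ[𝓝 0] fun _ => f b := by
        filter_upwards [ball_mem_nhds (0 : ℂ) one_pos] with z hz
        have := h1 hz
        simpa [sub_eq_zero] using this
      exact hd (by rw [h2.deriv_eq]; simp)
    · exact h
  obtain ⟨ρ, hρ, hρ'⟩ := Metric.eventually_nhds_iff_ball.1
      ((eventually_nhdsWithin_iff.1 hnc).and ((isOpen_ball.eventually_mem ha).and
        (isOpen_ne.eventually_mem hne)))
  set r := ρ / 2 with hr
  have hr0 : 0 < r := by positivity
  have hsub : closedBall a r ⊆ ball a ρ := closedBall_subset_ball (by linarith)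
  have hsub1 : closedBall a r ⊆ ball 0 1 := fun z hz => (hρ' z (hsub hz)).2.1
  obtain ⟨m, hm, hmin⟩ : ∃ m, 0 < m ∧ ∀ z ∈ sphere a r, m ≤ ‖f z - f b‖ := by
    have hne : (sphere a r).Nonempty := NormedSpace.sphere_nonempty.2 hr0.le
    have hc : ContinuousOn (fun z => ‖f z - f b‖) (sphere a r) := by
      intro z hz
      exact ((hf z (hsub1 (sphere_subset_closedBall hz))).continuousAt.sub
        continuousAt_const).norm.continuousWithinAt
    obtain ⟨z0, hz0, hz0'⟩ := (isCompact_sphere a r).exists_isMinOn hne hc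
    refine ⟨‖f z0 - f b‖, norm_pos_iff.2 ((hρ' z0 (hsub (sphere_subset_closedBall hz0))).1 ?_),
      fun z hz => hz0' hz⟩
    rintro rfl
    rw [mem_sphere, dist_self] at hz0; linarith
  have hK : IsCompact (closedBall a r ∪ {b}) := (isCompact_closedBall a r).union isCompact_singleton
  have hKs : closedBall a r ∪ {b} ⊆ ball 0 1 := union_subset hsub1 (by simpa using hb)
  have hu := (tendstoLocallyUniformlyOn_iff_forall_isCompact isOpen_ball).1 hlim _ hKs hK
  rw [Metric.tendstoUniformlyOn_iff] at hu
  obtain ⟨n, hn⟩ := (hu (m / 16) (by positivity)).exists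
  have hnb := hn b (Or.inr rfl)
  have hna := hn a (Or.inl (mem_closedBall_self hr0.le))
  rw [dist_eq_norm] at hnb hna
  have hball := DiffContOnCl.ball_subset_image_closedBall (f := F n) (z₀ := a) (r := r)
    (ε := m / 2) ?_ hr0 ?_ ?_
  · have hmem : F n b ∈ ball (F n a) (m / 2 / 2) := by
      rw [mem_ball, dist_eq_norm]
      have e : F n b - F n a = (f a - F n a) - (f b - F n b) := by rw [hab]; ring
      rw [e]
      refine (norm_sub_le _ _).trans_lt ?_
      linarith
    obtain ⟨z, hz, hzb⟩ := hball hmem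
    exact (hρ' z (hsub hz)).2.2 (hi n (hsub1 hz) hb hzb)
  · apply DifferentiableOn.diffContOnCl
    intro z hz
    exact (hF n z (hsub1 (closure_ball_subset_closedBall hz))).differentiableAt.differentiableWithinAt
  · intro z hz
    have h1 := hmin z hz
    have h2 := hn z (Or.inl (sphere_subset_closedBall hz))
    rw [dist_eq_norm] at h2
    have e : f z - f b = (f z - F n z) + (F n z - F n a) - (f a - F n a) := by rw [hab]; ring
    rw [e] at h1
    have h3 := (norm_sub_le (f z - F n z + (F n z - F n a)) (f a - F n a)).trans
      (add_le_add_left (norm_add_le (f z - F n z) (F n z - F n a)) _)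
    linarith
  · have : ∀ᶠ z in 𝓝[≠] a, F n z ≠ F n a := by
      rw [eventually_nhdsWithin_iff]
      filter_upwards [isOpen_ball.mem_nhds ha] with z hz hza h
      exact hza (hi n hz ha h)
    exact this.frequently.filter_mono nhdsWithin_le_nhds

/-! ### Normal families and closedness of the estimates -/

lemma tc_hasSum {F : ℂ → ℂ} (hF : AnalyticOnNhd ℂ F (ball 0 1)) {z : ℂ}
    (hz : z ∈ ball (0 : ℂ) 1) : HasSum (fun k => tc F k * z ^ k) (F z) := by
  have h := Complex.hasSum_taylorSeries_on_ball hF.differentiableOn hz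
  refine h.congr_fun ?_ |> fun h => h
  intro k
  simp only [tc, sub_zero, smul_eq_mul]
  field_simp

lemma tendsto_tc {F : ℕ → ℂ → ℂ} {f : ℂ → ℂ}
    (hF : ∀ n, AnalyticOnNhd ℂ (F n) (ball 0 1))
    (hlim : TendstoLocallyUniformlyOn F f Filter.atTop (ball 0 1)) (k : ℕ) :
    Filter.Tendsto (fun n => tc (F n) k) Filter.atTop (𝓝 (tc f k)) := by
  have key : ∀ k, TendstoLocallyUniformlyOn (fun n => iteratedDeriv k (F n)) (iteratedDeriv k f)
      Filter.atTop (ball 0 1) := by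
    intro k
    induction k with
    | zero => simpa [iteratedDeriv_zero] using hlim
    | succ k ih =>
      simp only [iteratedDeriv_succ]
      refine ih.deriv (Filter.Eventually.of_forall fun n => ?_) isOpen_ball
      rw [iteratedDeriv_eq_iterate]
      exact ((hF n).iterated_deriv k).differentiableOn
  exact ((key k).tendsto_at (mem_ball_self one_pos)).div_const _

lemma norm_tc_le {F : ℂ → ℂ} (hF : AnalyticOnNhd ℂ F (ball 0 1)) {M : ℝ}
    (hM : ∀ z ∈ ball (0 : ℂ) 1, ‖F z‖ ≤ M) (k : ℕ) : ‖tc F k‖ ≤ M := by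
  have h : ∀ r : ℝ, 0 < r → r < 1 → ‖tc F k‖ * r ^ k ≤ M := by
    intro r h0 h1
    have hsub : closedBall (0 : ℂ) r ⊆ ball 0 1 := closedBall_subset_ball h1
    have := norm_iteratedDeriv_le_of_forall_mem_sphere_norm_le (n := k) (f := F) (c := 0) (C := M)
      h0 ?_ ?_
    · unfold tc
      rw [norm_div, Complex.norm_natCast]
      have hk : (0 : ℝ) < k.factorial := by positivity
      have hr : 0 < r ^ k := by positivity
      rw [le_div_iff₀ hr] at this
      rw [div_mul_eq_mul_div, div_le_iff₀ hk]
      linarith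
    · exact (hF.differentiableOn.mono (by
        rw [closure_ball _ h0.ne']; exact hsub)).diffContOnCl
    · intro z hz
      exact hM z (hsub (sphere_subset_closedBall hz))
  have ht : Filter.Tendsto (fun r : ℝ => ‖tc F k‖ * r ^ k) (𝓝[<] 1) (𝓝 (‖tc F k‖ * 1 ^ k)) :=
    ((continuous_const.mul (continuous_id.pow k)).tendsto 1).mono_left nhdsWithin_le_nhds
  rw [one_pow, mul_one] at ht
  refine le_of_tendsto ht ?_
  filter_upwards [Ioo_mem_nhdsLT (show (0 : ℝ) < 1 by norm_num)] with r hr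
  exact h r hr.1 hr.2

/-- Normal family: analytic functions on the disc with uniformly bounded Taylor coefficients
have a locally uniformly convergent subsequence. -/
lemma exists_subseq {F : ℕ → ℂ → ℂ} (hF : ∀ n, AnalyticOnNhd ℂ (F n) (ball 0 1)) {A : ℝ}
    (hA : ∀ n k, ‖tc (F n) k‖ ≤ A) : ∃ φ : ℕ → ℕ, StrictMono φ ∧ ∃ f : ℂ → ℂ,
      AnalyticOnNhd ℂ f (ball 0 1) ∧
      TendstoLocallyUniformlyOn (fun n => F (φ n)) f Filter.atTop (ball 0 1) := by
  have hK : IsCompact (Set.univ.pi fun _ : ℕ => closedBall (0 : ℂ) A) :=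
    isCompact_univ_pi fun _ => isCompact_closedBall _ _
  obtain ⟨a, ha, φ, hφ, hlim⟩ := hK.tendsto_subseq (x := fun n => tc (F n))
    (fun n k _ => by simpa using hA n k)
  rw [tendsto_pi_nhds] at hlim
  have haA : ∀ k, ‖a k‖ ≤ A := fun k => by simpa using ha k (mem_univ k)
  have hA0 : 0 ≤ A := (norm_nonneg _).trans (haA 0)
  set f : ℂ → ℂ := fun z => ∑' k, a k * z ^ k with hf
  have hu : TendstoLocallyUniformlyOn (fun n => F (φ n)) f Filter.atTop (ball 0 1) := by
    rw [tendstoLocallyUniformlyOn_iff_forall_isCompact isOpen_ball]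
    intro K hK1 hKc
    obtain ⟨r, hr0, hr1, hKr⟩ : ∃ r : ℝ, 0 ≤ r ∧ r < 1 ∧ ∀ z ∈ K, ‖z‖ ≤ r := by
      rcases K.eq_empty_or_nonempty with rfl | hne
      · exact ⟨0, le_rfl, one_pos, by simp⟩
      · obtain ⟨z0, hz0, hz0'⟩ := hKc.exists_isMaxOn hne continuous_norm.continuousOn
        exact ⟨‖z0‖, norm_nonneg _, by simpa using hK1 hz0, fun z hz => hz0' hz⟩
    have hgeo : Summable fun k : ℕ => (2 * A) * r ^ k :=
      (summable_geometric_of_lt_one hr0 hr1).mul_left _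
    have hT : Filter.Tendsto (fun n => ∑' k, ‖a k - tc (F (φ n)) k‖ * r ^ k) Filter.atTop
        (𝓝 (∑' _ : ℕ, (0 : ℝ))) := by
      refine tendsto_tsum_of_dominated_convergence hgeo (fun k => ?_)
        (Filter.Eventually.of_forall fun n k => ?_)
      · have h1 : Filter.Tendsto (fun n => a k - tc (F (φ n)) k) Filter.atTop (𝓝 (a k - a k)) :=
          tendsto_const_nhds.sub (hlim k)
        rw [sub_self] at h1
        simpa using h1.norm.mul_const (r ^ k)
      · rw [norm_mul, norm_norm, norm_pow, Real.norm_of_nonneg hr0]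
        gcongr
        refine (norm_sub_le _ _).trans ?_
        linarith [haA k, hA (φ n) k]
    rw [tsum_zero] at hT
    rw [Metric.tendstoUniformlyOn_iff]
    intro ε hε
    filter_upwards [hT.eventually_lt_const hε] with n hn z hz
    refine lt_of_le_of_lt ?_ hn
    have hzb := hK1 hz
    have hzr := hKr z hz
    have hb : ∀ k, ‖a k - tc (F (φ n)) k‖ ≤ 2 * A := fun k =>
      (norm_sub_le _ _).trans (by linarith [haA k, hA (φ n) k])
    have hs1 : Summable fun k => a k * z ^ k := by
      refine Summable.of_norm_bounded (g := fun k => (2 * A) * r ^ k) hgeo fun k => ?_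
      rw [norm_mul, norm_pow]
      have := haA k
      gcongr
      linarith
    have hs2 := tc_hasSum (hF (φ n)) hzb
    rw [dist_eq_norm, hf, ← hs2.tsum_eq, ← hs1.tsum_sub hs2.summable]
    refine (norm_tsum_le_tsum_norm ?_).trans ?_
    · refine Summable.of_nonneg_of_le (fun _ => norm_nonneg _) (fun k => ?_) hgeo
      rw [← sub_mul, norm_mul, norm_pow]
      have := hb k
      gcongr
    · refine Summable.tsum_le_tsum (fun k => ?_) ?_ ?_
      · rw [← sub_mul, norm_mul, norm_pow]
        gcongr
      · refine Summable.of_nonneg_of_le (fun _ => norm_nonneg _) (fun k => ?_) hgeo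
        rw [← sub_mul, norm_mul, norm_pow]
        have := hb k
        gcongr
      · refine Summable.of_nonneg_of_le (fun _ => by positivity) (fun k => ?_) hgeo
        have := hb k
        gcongr
  refine ⟨φ, hφ, f, ?_, hu⟩
  exact (hu.differentiableOn (Filter.Eventually.of_forall fun n =>
    (hF (φ n)).differentiableOn) isOpen_ball).analyticOnNhd isOpen_ball

section PPlemmas
variable {ε : ℝ} {T S : ℕ → ℝ → ℝ}

/-- The estimates at `t = 0` bound all coefficients uniformly: each weight `k T_k(0)` is bounded
below, and the negative terms have a finite sum. -/
lemma PP_bound (W : WeightSystem ε T S) (h0 : 0 < ε) (h1 : ε ≤ 1 / 4) {c : ℕ → ℂ} (hP : PP T c)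
    {k : ℕ} (hk : 1 ≤ k) : ‖c k‖ ≤ 10 := by
  have hT1 : ∀ j : ℕ, 1 ≤ j → T j 0 / j ≤ 1 / (j : ℝ) ^ 2 := by
    intro j hj
    have hj' : (1 : ℝ) ≤ j := by exact_mod_cast hj
    have : T j 0 ≤ j / ((j : ℝ) ^ 2 + 4 / 3) := by
      rw [W.T_zero j hj]; split_ifs <;> linarith
    calc T j 0 / j ≤ (j / ((j : ℝ) ^ 2 + 4 / 3)) / j := by gcongr
      _ = 1 / ((j : ℝ) ^ 2 + 4 / 3) := by field_simp
      _ ≤ _ := by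
        apply one_div_le_one_div_of_le <;> nlinarith
  have hT2 : ∀ j : ℕ, 1 ≤ j → 1 / 8 ≤ j * T j 0 := by
    intro j hj
    have hj' : (1 : ℝ) ≤ j := by exact_mod_cast hj
    rw [W.T_zero j hj, mul_sub]
    have e : 3 / 7 ≤ (j : ℝ) * (j / ((j : ℝ) ^ 2 + 4 / 3)) := by
      rw [← mul_div_assoc, le_div_iff₀ (by positivity)]; nlinarith
    split_ifs with h
    · subst h; push_cast at e ⊢; linarith
    · linarith
  have hsum : ∀ N : ℕ, ∑ j ∈ Finset.Icc 1 (N + 1), T j 0 / j ≤ 2 - 1 / ((N : ℝ) + 1) := by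
    intro N
    induction N with
    | zero => simp only [zero_add, Finset.Icc_self, Finset.sum_singleton]
              have := hT1 1 le_rfl
              norm_num at this ⊢; linarith
    | succ N ih =>
      rw [Finset.sum_Icc_succ_top (by omega)]
      have := hT1 (N + 1 + 1) (by omega)
      have e : 1 / ((N + 1 + 1 : ℕ) : ℝ) ^ 2 ≤ 1 / ((N : ℝ) + 1) - 1 / ((N : ℝ) + 2) := by
        push_cast
        rw [div_sub_div _ _ (by positivity) (by positivity), div_le_div_iff₀ (by positivity) (by positivity)]
        nlinarith [(Nat.cast_nonneg N : (0 : ℝ) ≤ N)]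
      have e2 : ((N + 1 : ℕ) : ℝ) + 1 = N + 2 := by push_cast; ring
      rw [e2]
      linarith
  have hE := hP.en 0 le_rfl k hk
  unfold EE at hE
  rw [Finset.sum_sub_distrib] at hE
  obtain ⟨N, rfl⟩ : ∃ N, k = N + 1 := ⟨k - 1, by omega⟩
  have hs := hsum N
  have hle : ((N + 1 : ℕ) : ℝ) * T (N + 1) 0 * ‖c (N + 1)‖ ^ 2 ≤
      ∑ k ∈ Finset.Icc 1 (N + 1), (k : ℝ) * T k 0 * ‖c k‖ ^ 2 :=
    Finset.single_le_sum (f := fun k : ℕ => (k : ℝ) * T k 0 * ‖c k‖ ^ 2) (fun j hj => by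
      have := hT2 j (Finset.mem_Icc.1 hj).1
      have h3 : (0 : ℝ) ≤ j * T j 0 := by linarith
      positivity) (Finset.mem_Icc.2 ⟨by omega, le_rfl⟩)
  have e4 : ∑ k ∈ Finset.Icc 1 (N + 1), 4 * T k 0 / k = 4 * ∑ k ∈ Finset.Icc 1 (N + 1), T k 0 / k := by
    rw [Finset.mul_sum]; exact Finset.sum_congr rfl fun _ _ => mul_div_assoc _ _ _
  rw [e4] at hE
  have h5 : (4 : ℝ) / ((N + 1 : ℕ) : ℝ) ≤ 4 := by
    rw [div_le_iff₀ (by positivity)]; push_cast; nlinarith [(Nat.cast_nonneg N : (0 : ℝ) ≤ N)]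
  have h6 : 0 ≤ 1 / ((N : ℝ) + 1) := by positivity
  have h7 := hT2 (N + 1) (by omega)
  have h8 : 1 / 8 * ‖c (N + 1)‖ ^ 2 ≤ ((N + 1 : ℕ) : ℝ) * T (N + 1) 0 * ‖c (N + 1)‖ ^ 2 := by
    gcongr
  nlinarith [norm_nonneg (c (N + 1))]

lemma PP_closed {c : ℕ → ℕ → ℂ} {a : ℕ → ℂ} (hP : ∀ n, PP T (c n))
    (hlim : ∀ k, 1 ≤ k → Filter.Tendsto (fun n => c n k) Filter.atTop (𝓝 (a k))) : PP T a := by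
  refine ⟨?_, ?_, ?_⟩
  · exact le_of_tendsto (hlim 1 le_rfl).norm (Filter.Eventually.of_forall fun n => (hP n).one)
  · exact le_of_tendsto ((hlim 2 (by norm_num)).sub (((hlim 1 le_rfl).pow 2).div_const 2)).norm
      (Filter.Eventually.of_forall fun n => (hP n).two)
  · intro t ht N hN
    refine le_of_tendsto (f := fun n => EE T (c n) N t) (x := Filter.atTop) ?_
      (Filter.Eventually.of_forall fun n => (hP n).en t ht N hN)
    unfold EE
    refine tendsto_finsetSum _ fun k hk => ?_
    exact (((hlim k (Finset.mem_Icc.1 hk).1).norm.pow 2).const_mul _).sub tendsto_const_nhds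

lemma PP_zero (W : WeightSystem ε T S) : PP T (fun _ => 0) := by
  refine ⟨by simp, by simp, ?_⟩
  intro t ht N hN
  refine le_trans ?_ (show (0 : ℝ) ≤ 4 / N by positivity)
  unfold EE
  refine Finset.sum_nonpos fun k hk => ?_
  have := W.T_nonneg k (Finset.mem_Icc.1 hk).1 t ht
  have h : 0 ≤ 4 * T k t / k := by positivity
  simpa using h

lemma PP_rotate {c d : ℕ → ℂ} {ζ : ℂ} (hζ : ‖ζ‖ = 1) (hP : PP T c)
    (hd : ∀ k, 1 ≤ k → d k = ζ ^ k * c k) : PP T d := by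
  have hn : ∀ k, 1 ≤ k → ‖d k‖ = ‖c k‖ := by
    intro k hk; rw [hd k hk, norm_mul, norm_pow, hζ, one_pow, one_mul]
  refine ⟨?_, ?_, ?_⟩
  · rw [hn 1 le_rfl]; exact hP.one
  · have e : d 2 - d 1 ^ 2 / 2 = ζ ^ 2 * (c 2 - c 1 ^ 2 / 2) := by
      rw [hd 1 le_rfl, hd 2 (by norm_num)]; ring
    rw [e, norm_mul, norm_pow, hζ, one_pow, one_mul]; exact hP.two
  · intro t ht N hN
    refine le_trans (le_of_eq ?_) (hP.en t ht N hN)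
    unfold EE
    refine Finset.sum_congr rfl fun k hk => ?_
    rw [hn k (Finset.mem_Icc.1 hk).1]

lemma tc_comp_mul {G : ℂ → ℂ} (hG : AnalyticAt ℂ G 0) (ζ : ℂ) (k : ℕ) :
    tc (fun z => G (ζ * z)) k = ζ ^ k * tc G k := by
  have key : ∀ k : ℕ, ∀ G : ℂ → ℂ, AnalyticAt ℂ G 0 →
      iteratedDeriv k (fun z => G (ζ * z)) 0 = ζ ^ k * iteratedDeriv k G 0 := by
    intro k
    induction k with
    | zero => simp
    | succ k ih =>
      intro G hG
      have hd : AnalyticAt ℂ (fun z => deriv G (ζ * z)) 0 := by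
        have h1 : AnalyticAt ℂ (deriv G) ((fun z => ζ * z) 0) := by simpa using hG.deriv
        exact h1.comp (analyticAt_const.mul analyticAt_id)
      have e : deriv (fun z => G (ζ * z)) = fun z => ζ * deriv G (ζ * z) := by
        ext z; simpa using deriv_comp_mul_left ζ G z
      rw [iteratedDeriv_succ', e, iteratedDeriv_const_mul _ hd.contDiffAt, ih _ hG.deriv,
        ← iteratedDeriv_succ']
      ring
  unfold tc
  rw [key k G hG, mul_div_assoc]

end PPlemmas

/-! ### The length-area principle -/

/-- The area theorem for injective analytic maps: the Dirichlet integral is the image area. -/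
lemma dirichlet_finite {g : ℂ → ℂ} (hg : AnalyticOnNhd ℂ g (ball 0 1)) (hi : InjOn g (ball 0 1))
    {M : ℝ} (hM : ∀ z ∈ ball (0 : ℂ) 1, ‖g z‖ ≤ M) :
    ∫⁻ z in ball (0 : ℂ) 1, ENNReal.ofReal (‖deriv g z‖ ^ 2) ≠ ⊤ := by
  have h := lintegral_abs_det_fderiv_eq_addHaar_image (μ := volume) (f := g)
    (f' := fun z => (ContinuousLinearMap.toSpanSingleton ℂ (deriv g z)).restrictScalars ℝ)
    (s := ball (0 : ℂ) 1) measurableSet_ball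
    (fun z hz => ((hg z hz).differentiableAt.hasDerivAt.hasFDerivAt.restrictScalars
      ℝ).hasFDerivWithinAt) hi
  have e : ∀ z, |((ContinuousLinearMap.toSpanSingleton ℂ (deriv g z)).restrictScalars ℝ).det| =
      ‖deriv g z‖ ^ 2 := by
    intro z
    have : ((ContinuousLinearMap.toSpanSingleton ℂ (deriv g z)).restrictScalars ℝ).det =
        ‖deriv g z‖ ^ 2 := by
      simp [ContinuousLinearMap.det, LinearMap.det_restrictScalars,
        Algebra.norm_complex_eq, Complex.normSq_eq_norm_sq]
    rw [this, abs_of_nonneg (by positivity)]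
  simp only [e] at h
  rw [h]
  refine ne_top_of_le_ne_top ?_ (measure_mono (t := closedBall (0 : ℂ) M) ?_)
  · exact measure_closedBall_lt_top.ne
  · rintro _ ⟨z, hz, rfl⟩
    simpa using hM z hz

lemma arc_mem {ρ θ : ℝ} (hρ : 0 < ρ) :
    (-1 + ρ * Complex.exp (θ * I) : ℂ) ∈ ball (0 : ℂ) 1 ↔ ρ / 2 < Real.cos θ := by
  rw [mem_ball_zero_iff, ← sq_lt_one_iff₀ (norm_nonneg _), ← Complex.normSq_eq_norm_sq,
    Complex.exp_mul_I, Complex.normSq_apply]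
  have e1 : (-1 + (ρ : ℂ) * (Complex.cos θ + Complex.sin θ * I)).re = -1 + ρ * Real.cos θ := by
    simp [Complex.cos_ofReal_re, Complex.cos_ofReal_im, Complex.sin_ofReal_re, Complex.sin_ofReal_im]
  have e2 : (-1 + (ρ : ℂ) * (Complex.cos θ + Complex.sin θ * I)).im = ρ * Real.sin θ := by
    simp [Complex.cos_ofReal_re, Complex.cos_ofReal_im, Complex.sin_ofReal_re, Complex.sin_ofReal_im]
  rw [e1, e2]
  have h := Real.sin_sq_add_cos_sq θ
  have e3 : (-1 + ρ * Real.cos θ) * (-1 + ρ * Real.cos θ) + ρ * Real.sin θ * (ρ * Real.sin θ) =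
      1 + ρ * (ρ - 2 * Real.cos θ) := by linear_combination ρ ^ 2 * h
  rw [e3]
  constructor
  · intro h
    by_contra hh
    push Not at hh
    have := mul_nonneg hρ.le (show 0 ≤ ρ - 2 * Real.cos θ by linarith)
    linarith
  · intro h
    have := mul_pos hρ (show 0 < 2 * Real.cos θ - ρ by linarith)
    nlinarith

/-- The length estimate on one circular arc `|z + 1| = ρ` inside the disc. -/
lemma arc_estimate {g : ℂ → ℂ} (hg : AnalyticOnNhd ℂ g (ball 0 1)) {e ρ θ₁ θ₂ : ℝ} (he : 0 < e)
    (hρ : 0 < ρ) (h1 : θ₁ ∈ Icc (-π) π) (h2 : θ₂ ∈ Icc (-π) π)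
    (hc1 : ρ / 2 < Real.cos θ₁) (hc2 : ρ / 2 < Real.cos θ₂) (h12 : θ₁ ≤ θ₂)
    (hd : e ≤ ‖g (-1 + ρ * Complex.exp (θ₂ * I)) - g (-1 + ρ * Complex.exp (θ₁ * I))‖) :
    ENNReal.ofReal (e ^ 2 / (2 * π * ρ ^ 2)) ≤ ∫⁻ θ in Ioo (-π) π,
      (ball (0 : ℂ) 1).indicator (fun z => ENNReal.ofReal (‖deriv g z‖ ^ 2))
        (-1 + ρ * Complex.exp (θ * I)) := by
  have hmem : ∀ θ ∈ Icc θ₁ θ₂, (-1 + ρ * Complex.exp (θ * I) : ℂ) ∈ ball (0 : ℂ) 1 := by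
    intro θ hθ
    rw [arc_mem hρ]
    have ha : |θ| ≤ max |θ₁| |θ₂| := abs_le_max_abs_abs hθ.1 hθ.2
    rcases le_total |θ₁| |θ₂| with h | h
    · rw [max_eq_right h] at ha
      refine hc2.trans_le ?_
      rw [← Real.cos_abs θ, ← Real.cos_abs θ₂]
      exact Real.cos_le_cos_of_nonneg_of_le_pi (abs_nonneg _) (abs_le.2 h2) ha
    · rw [max_eq_left h] at ha
      refine hc1.trans_le ?_
      rw [← Real.cos_abs θ, ← Real.cos_abs θ₁]
      exact Real.cos_le_cos_of_nonneg_of_le_pi (abs_nonneg _) (abs_le.2 h1) ha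
  set p : ℝ → ℂ := fun θ => -1 + ρ * Complex.exp (θ * I) with hp
  have hpd : ∀ θ : ℝ, HasDerivAt p (ρ * (Complex.exp (θ * I) * I)) θ := by
    intro θ
    have h3 : HasDerivAt (fun t : ℝ => (t : ℂ) * I) I θ := by
      simpa using (Complex.ofRealCLM.hasDerivAt (x := θ)).mul_const I
    exact ((h3.cexp).const_mul (ρ : ℂ)).const_add (-1)
  have hpc : Continuous p := continuous_iff_continuousAt.2 fun θ => (hpd θ).continuousAt
  have hder : ∀ θ ∈ uIcc θ₁ θ₂, HasDerivAt (fun θ => g (p θ))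
      (deriv g (p θ) * (ρ * (Complex.exp (θ * I) * I))) θ := by
    intro θ hθ
    rw [uIcc_of_le h12] at hθ
    exact (hg _ (hmem θ hθ)).differentiableAt.hasDerivAt.comp θ (hpd θ)
  have hcont : ContinuousOn (fun θ => deriv g (p θ)) (uIcc θ₁ θ₂) := by
    intro θ hθ
    rw [uIcc_of_le h12] at hθ
    exact ((hg _ (hmem θ hθ)).deriv.continuousAt.comp (f := p) hpc.continuousAt).continuousWithinAt
  have hc' : ContinuousOn (fun θ : ℝ => deriv g (p θ) * (ρ * (Complex.exp (θ * I) * I)))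
      (uIcc θ₁ θ₂) := hcont.mul (by fun_prop)
  have hftc := intervalIntegral.integral_eq_sub_of_hasDerivAt hder hc'.intervalIntegrable
  have hnorm : ∀ θ : ℝ, ‖deriv g (p θ) * (ρ * (Complex.exp (θ * I) * I))‖ = ‖deriv g (p θ)‖ * ρ := by
    intro θ
    rw [norm_mul, norm_mul, norm_mul, Complex.norm_exp_ofReal_mul_I, Complex.norm_real,
      Real.norm_of_nonneg hρ.le]; simp
  have hπ := Real.pi_pos
  have hI1 : IntervalIntegrable (fun θ => ‖deriv g (p θ)‖ ^ 2) volume θ₁ θ₂ :=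
    (hcont.norm.pow 2).intervalIntegrable
  have hreal : e ^ 2 / (2 * π * ρ ^ 2) ≤ ∫ θ in θ₁..θ₂, ‖deriv g (p θ)‖ ^ 2 := by
    have h3 : e ≤ ∫ θ in θ₁..θ₂, ‖deriv g (p θ)‖ * ρ := by
      calc e ≤ ‖∫ θ in θ₁..θ₂, deriv g (p θ) * (ρ * (Complex.exp (θ * I) * I))‖ := by
            rw [hftc]; exact hd
        _ ≤ ∫ θ in θ₁..θ₂, ‖deriv g (p θ) * (ρ * (Complex.exp (θ * I) * I))‖ :=
            intervalIntegral.norm_integral_le_integral_norm h12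
        _ = _ := by simp only [hnorm]
    have h4 : ∫ θ in θ₁..θ₂, ‖deriv g (p θ)‖ * ρ ≤
        ∫ θ in θ₁..θ₂, ((π / e * ρ ^ 2) * ‖deriv g (p θ)‖ ^ 2 + e / (4 * π)) := by
      refine intervalIntegral.integral_mono_on h12 ?_ ?_ ?_
      · exact (hcont.norm.mul continuousOn_const).intervalIntegrable
      · exact (hI1.const_mul _).add intervalIntegrable_const
      · intro θ _
        have h5 : 0 ≤ (2 * π * (‖deriv g (p θ)‖ * ρ) - e) ^ 2 / (4 * π * e) := by positivity
        have h6 : (2 * π * (‖deriv g (p θ)‖ * ρ) - e) ^ 2 / (4 * π * e) =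
          (π / e * ρ ^ 2) * ‖deriv g (p θ)‖ ^ 2 + e / (4 * π) - ‖deriv g (p θ)‖ * ρ := by
          field_simp; ring
        linarith
    rw [intervalIntegral.integral_add (hI1.const_mul _) intervalIntegrable_const,
      intervalIntegral.integral_const_mul, intervalIntegral.integral_const, smul_eq_mul] at h4
    have h7 : (θ₂ - θ₁) * (e / (4 * π)) ≤ e / 2 := by
      have : (θ₂ - θ₁) * (e / (4 * π)) ≤ (2 * π) * (e / (4 * π)) := by
        gcongr; linarith [h1.1, h2.2]
      refine this.trans (le_of_eq ?_)
      field_simp; ring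
    have h8 : e / 2 ≤ π / e * ρ ^ 2 * ∫ θ in θ₁..θ₂, ‖deriv g (p θ)‖ ^ 2 := by linarith
    rw [div_le_iff₀ (by positivity)]
    have h9 : π / e * ρ ^ 2 * (∫ θ in θ₁..θ₂, ‖deriv g (p θ)‖ ^ 2) * (2 * e) =
      (∫ θ in θ₁..θ₂, ‖deriv g (p θ)‖ ^ 2) * (2 * π * ρ ^ 2) := by field_simp
    rw [← h9]
    have := mul_le_mul_of_nonneg_right h8 (show 0 ≤ 2 * e by positivity)
    linarith [show e / 2 * (2 * e) = e ^ 2 by ring]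
  have hcospos : ∀ θ, θ ∈ Icc (-π) π → ρ / 2 < Real.cos θ → θ ∈ Ioo (-π) π := by
    intro θ hθ hc
    refine ⟨lt_of_le_of_ne hθ.1 ?_, lt_of_le_of_ne hθ.2 ?_⟩
    · rintro rfl; rw [Real.cos_neg, Real.cos_pi] at hc; linarith
    · rintro rfl; rw [Real.cos_pi] at hc; linarith
  have hsub : Ioc θ₁ θ₂ ⊆ Ioo (-π) π := fun θ hθ =>
    ⟨(hcospos _ h1 hc1).1.trans hθ.1, hθ.2.trans_lt (hcospos _ h2 hc2).2⟩
  refine (ENNReal.ofReal_le_ofReal hreal).trans ?_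
  rw [intervalIntegral.integral_of_le h12, ofReal_integral_eq_lintegral_ofReal
    ((intervalIntegrable_iff_integrableOn_Ioc_of_le h12).1 hI1)
    (Filter.Eventually.of_forall fun _ => by positivity)]
  refine le_trans (le_of_eq ?_) (lintegral_mono_set hsub)
  refine setLIntegral_congr_fun measurableSet_Ioc fun θ hθ => ?_
  rw [indicator_of_mem (hmem θ (Ioc_subset_Icc_self hθ))]

lemma exists_arc_point {V : Set ℂ} (hV : IsPreconnected V) (hV1 : V ⊆ ball 0 1)
    (hcl : (-1 : ℂ) ∈ closure V) {ρ : ℝ} (hρ : 0 < ρ) {v₀ : ℂ} (hv₀ : v₀ ∈ V)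
    (hρ0 : ρ ≤ ‖v₀ + 1‖) : ∃ θ ∈ Icc (-π) π, ρ / 2 < Real.cos θ ∧
      (-1 + ρ * Complex.exp (θ * I) : ℂ) ∈ V := by
  obtain ⟨v₁, hv₁, hd⟩ := Metric.mem_closure_iff.1 hcl ρ hρ
  have h1 : ‖v₁ + 1‖ ≤ ρ := by
    rw [dist_comm, dist_eq_norm, sub_neg_eq_add] at hd; exact hd.le
  obtain ⟨v, hv, hvρ⟩ := hV.intermediate_value (f := fun z => ‖z + 1‖) hv₁ hv₀
    (by fun_prop) ⟨h1, hρ0⟩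
  have e : (-1 + ρ * Complex.exp ((v + 1).arg * I) : ℂ) = v := by
    simp only at hvρ
    rw [← hvρ, Complex.norm_mul_exp_arg_mul_I]; ring
  refine ⟨(v + 1).arg, ⟨(Complex.neg_pi_lt_arg _).le, Complex.arg_le_pi _⟩, ?_, ?_⟩
  · rw [← arc_mem hρ, e]; exact hV1 hv
  · rw [e]; exact hv

/-- Length-area principle: two connected sets in the disc accumulating at the same boundary
point cannot have images a positive distance apart under a bounded injective analytic map. -/
lemma length_area {g : ℂ → ℂ} (hg : AnalyticOnNhd ℂ g (ball 0 1)) (hi : InjOn g (ball 0 1))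
    {M : ℝ} (hM : ∀ z ∈ ball (0 : ℂ) 1, ‖g z‖ ≤ M) {U V : Set ℂ} (hU : IsPreconnected U)
    (hV : IsPreconnected V) (hU1 : U ⊆ ball 0 1) (hV1 : V ⊆ ball 0 1)
    (hUc : (-1 : ℂ) ∈ closure U) (hVc : (-1 : ℂ) ∈ closure V) {e : ℝ} (he : 0 < e)
    (hd : ∀ u ∈ U, ∀ v ∈ V, e ≤ ‖g u - g v‖) : False := by
  obtain ⟨u₀, hu₀⟩ := closure_nonempty_iff.1 ⟨_, hUc⟩
  obtain ⟨v₀, hv₀⟩ := closure_nonempty_iff.1 ⟨_, hVc⟩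
  have hpos : ∀ z ∈ ball (0 : ℂ) 1, 0 < ‖z + 1‖ := by
    intro z hz
    rw [norm_pos_iff]
    intro h
    rw [eq_neg_of_add_eq_zero_left h] at hz
    simp at hz
  set r := min ‖u₀ + 1‖ ‖v₀ + 1‖ with hr
  have hr0 : 0 < r := lt_min (hpos _ (hU1 hu₀)) (hpos _ (hV1 hv₀))
  set h : ℂ → ENNReal := (ball (0 : ℂ) 1).indicator (fun z => ENNReal.ofReal (‖deriv g z‖ ^ 2))
    with hh
  have hmeas : Measurable h :=
    ((measurable_deriv g).norm.pow_const 2).ennreal_ofReal.indicator measurableSet_ball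
  have key : ∀ ρ ∈ Ioo 0 r, ENNReal.ofReal (e ^ 2 / (2 * π) * ρ⁻¹) ≤
      ∫⁻ θ in Ioo (-π) π, ENNReal.ofReal ρ * h (-1 + ρ * Complex.exp (θ * I)) := by
    intro ρ hρ
    obtain ⟨θ₁, h1, hc1, hm1⟩ := exists_arc_point hU hU1 hUc hρ.1 hu₀
      (hρ.2.le.trans (min_le_left _ _))
    obtain ⟨θ₂, h2, hc2, hm2⟩ := exists_arc_point hV hV1 hVc hρ.1 hv₀
      (hρ.2.le.trans (min_le_right _ _))
    have hest : ENNReal.ofReal (e ^ 2 / (2 * π * ρ ^ 2)) ≤ ∫⁻ θ in Ioo (-π) π,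
        h (-1 + ρ * Complex.exp (θ * I)) := by
      rcases le_total θ₁ θ₂ with h12 | h12
      · refine arc_estimate hg he hρ.1 h1 h2 hc1 hc2 h12 ?_
        rw [norm_sub_rev]; exact hd _ hm1 _ hm2
      · exact arc_estimate hg he hρ.1 h2 h1 hc2 hc1 h12 (hd _ hm1 _ hm2)
    rw [lintegral_const_mul' _ _ ENNReal.ofReal_ne_top]
    refine le_trans (le_of_eq ?_) (mul_le_mul_right hest _)
    rw [← ENNReal.ofReal_mul hρ.1.le]
    congr 1
    have := hρ.1.ne'
    field_simp
  have hfin := dirichlet_finite hg hi hM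
  rw [← lintegral_indicator measurableSet_ball] at hfin
  have htr : ∫⁻ z, h (-1 + z) = ∫⁻ z, h z := lintegral_add_left_eq_self h (-1)
  have hpol := Complex.lintegral_comp_polarCoord_symm (fun z => h (-1 + z))
  rw [htr] at hpol
  -- the divergent integral of `1/ρ` is bounded by the finite area of the image
  have hlt : ∫⁻ ρ in Ioo 0 r, ENNReal.ofReal (e ^ 2 / (2 * π) * ρ⁻¹) ≠ ⊤ := by
    refine ne_top_of_le_ne_top hfin ?_
    rw [← hh, ← hpol]
    calc ∫⁻ ρ in Ioo 0 r, ENNReal.ofReal (e ^ 2 / (2 * π) * ρ⁻¹)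
        ≤ ∫⁻ ρ in Ioo 0 r, ∫⁻ θ in Ioo (-π) π,
          ENNReal.ofReal ρ * h (-1 + ρ * Complex.exp (θ * I)) :=
          setLIntegral_mono' measurableSet_Ioo key
      _ = ∫⁻ p in Ioo 0 r ×ˢ Ioo (-π) π,
          ENNReal.ofReal p.1 * h (-1 + p.1 * Complex.exp (p.2 * I)) := by
          rw [Measure.volume_eq_prod, setLIntegral_prod]
          refine Measurable.aemeasurable ?_
          refine measurable_fst.ennreal_ofReal.mul (hmeas.comp ?_)
          fun_prop
      _ ≤ ∫⁻ p in polarCoord.target,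
          ENNReal.ofReal p.1 * h (-1 + p.1 * Complex.exp (p.2 * I)) := by
          refine lintegral_mono_set ?_
          exact prod_mono (fun x hx => hx.1) subset_rfl
      _ = _ := by
          refine lintegral_congr fun p => ?_
          rw [Complex.polarCoord_symm_apply, Complex.exp_mul_I, smul_eq_mul, Complex.ofReal_cos,
            Complex.ofReal_sin]
  have hintg : IntegrableOn (fun ρ : ℝ => e ^ 2 / (2 * π) * ρ⁻¹) (Ioo 0 r) := by
    refine ⟨(measurable_inv.const_mul _).aestronglyMeasurable, ?_⟩
    rw [hasFiniteIntegral_iff_ofReal]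
    · exact lt_top_iff_ne_top.2 hlt
    · filter_upwards [ae_restrict_mem measurableSet_Ioo] with ρ hρ
      have := hρ.1
      have := Real.pi_pos
      simp only [Pi.zero_apply]
      positivity
  have hint2 : IntegrableOn (fun ρ : ℝ => ρ⁻¹) (Ioo 0 r) := by
    have h3 := Integrable.const_mul hintg (2 * π / e ^ 2)
    refine h3.congr (Filter.Eventually.of_forall fun ρ => ?_)
    have := Real.pi_pos
    simp only
    field_simp
  rw [← integrableOn_Ioc_iff_integrableOn_Ioo,
    ← intervalIntegrable_iff_integrableOn_Ioc_of_le hr0.le, intervalIntegrable_inv_iff] at hint2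
  rcases hint2 with h4 | h4
  · exact hr0.ne h4
  · exact h4 left_mem_uIcc

/-! ### A free boundary point -/

/-- The length-area principle at an arbitrary boundary point. -/
lemma length_area' {g : ℂ → ℂ} (hg : AnalyticOnNhd ℂ g (ball 0 1)) (hi : InjOn g (ball 0 1))
    {M : ℝ} (hM : ∀ z ∈ ball (0 : ℂ) 1, ‖g z‖ ≤ M) {U V : Set ℂ} (hU : IsPreconnected U)
    (hV : IsPreconnected V) (hU1 : U ⊆ ball 0 1) (hV1 : V ⊆ ball 0 1) {ζ : ℂ} (hζ : ‖ζ‖ = 1)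
    (hUc : ζ ∈ closure U) (hVc : ζ ∈ closure V) {e : ℝ} (he : 0 < e)
    (hd : ∀ u ∈ U, ∀ v ∈ V, e ≤ ‖g u - g v‖) : False := by
  have hζ0 : ζ ≠ 0 := by rintro rfl; simp at hζ
  have hm : ∀ z ∈ ball (0 : ℂ) 1, -ζ * z ∈ ball (0 : ℂ) 1 := by
    intro z hz
    rw [mem_ball_zero_iff] at hz ⊢
    rwa [norm_mul, norm_neg, hζ, one_mul]
  have hcl : ∀ W : Set ℂ, ζ ∈ closure W → (-1 : ℂ) ∈ closure ((fun z => -ζ⁻¹ * z) '' W) := by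
    intro W hW
    have h1 := image_closure_subset_closure_image (f := fun z : ℂ => -ζ⁻¹ * z) (s := W)
      (by fun_prop) (mem_image_of_mem _ hW)
    simpa [hζ0] using h1
  have hsub : ∀ W : Set ℂ, W ⊆ ball 0 1 → (fun z => -ζ⁻¹ * z) '' W ⊆ ball (0 : ℂ) 1 := by
    rintro W hW _ ⟨z, hz, rfl⟩
    have := hW hz
    rw [mem_ball_zero_iff] at this ⊢
    rwa [norm_mul, norm_neg, norm_inv, hζ, inv_one, one_mul]
  refine length_area (g := fun z => g (-ζ * z)) (M := M) ?_ ?_ (fun z hz => hM _ (hm z hz))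
    (hU.image _ (by fun_prop)) (hV.image _ (by fun_prop)) (hsub U hU1) (hsub V hV1)
    (hcl U hUc) (hcl V hVc) he ?_
  · intro z hz
    exact (hg _ (hm z hz)).comp (f := fun z => -ζ * z) (analyticAt_const.mul analyticAt_id)
  · intro a ha b hb hab
    exact mul_left_cancel₀ (neg_ne_zero.2 hζ0) (hi (hm a ha) (hm b hb) hab)
  · rintro _ ⟨u, hu, rfl⟩ _ ⟨v, hv, rfl⟩
    have e1 : ∀ x : ℂ, -ζ * (-ζ⁻¹ * x) = x := by intro x; field_simp
    simp only [e1]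
    exact hd u hu v hv

/-- A proper subdomain `f(𝔻)` of a bounded domain, whose boundary is the Jordan curve `f(∂𝔻)`,
leaves some boundary point of the larger domain uncovered by its closure. -/
lemma exists_frontier_point {f : ℂ → ℂ} {R : ℝ} (hR : 1 < R)
    (hf : AnalyticOnNhd ℂ f (ball 0 R)) (hfi : InjOn f (ball 0 R)) {𝒢 : Set ℂ} (hGo : IsOpen 𝒢)
    (hGc : IsPreconnected 𝒢) (hGb : Bornology.IsBounded 𝒢) (hsub : f '' ball 0 1 ⊆ 𝒢)
    (hne : ¬ 𝒢 ⊆ f '' ball 0 1) :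
    ∃ b ∈ frontier 𝒢, b ∉ f '' closedBall 0 1 := by
  by_contra hcon
  push Not at hcon
  have hR0 : 0 < R := by linarith
  have hcbR : closedBall (0 : ℂ) 1 ⊆ ball 0 R := closedBall_subset_ball hR
  have hbR : ball (0 : ℂ) 1 ⊆ ball 0 R := ball_subset_ball hR.le
  have hfr : frontier 𝒢 ⊆ f '' sphere 0 1 := by
    intro b hb
    obtain ⟨z, hz, rfl⟩ := hcon b hb
    refine ⟨z, ?_, rfl⟩
    rw [mem_closedBall_zero_iff] at hz
    rw [mem_sphere_zero_iff_norm]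
    refine le_antisymm hz (not_lt.1 fun h => ?_)
    have hin : f z ∈ 𝒢 := hsub ⟨z, by simpa using h, rfl⟩
    rw [hGo.frontier_eq] at hb
    exact hb.2 hin
  have hKc : IsCompact (f '' closedBall 0 1) := (isCompact_closedBall 0 1).image_of_continuousOn
    (hf.continuousOn.mono hcbR)
  have hO : IsOpen (f '' ball 0 1) := injOn_isOpen_image hR0 hf hfi hbR isOpen_ball
  -- the curve meets the large domain, as otherwise `f(𝔻)` would be clopen in it
  obtain ⟨ζ, hζ, hζG⟩ : ∃ ζ ∈ sphere (0 : ℂ) 1, f ζ ∈ 𝒢 := by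
    by_contra hno
    push Not at hno
    refine hne (hGc.subset_of_closure_inter_subset hO ?_ ?_)
    · exact ⟨f 0, hsub ⟨0, by simp, rfl⟩, ⟨0, by simp, rfl⟩⟩
    · rintro x ⟨hx1, hx2⟩
      obtain ⟨z, hz, rfl⟩ : x ∈ f '' closedBall 0 1 :=
        closure_minimal (image_mono ball_subset_closedBall) hKc.isClosed hx1
      rw [mem_closedBall_zero_iff] at hz
      rcases hz.lt_or_eq with h | h
      · exact ⟨z, by simpa using h, rfl⟩
      · exact absurd hx2 (hno z (by simpa using h))
  have hpol : ∀ s : ℝ, 0 < s → ∀ ξ : ℂ, ‖ξ‖ = 1 → ‖(s : ℂ) * ξ‖ = s := by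
    intro s hs ξ hξ
    rw [norm_mul, hξ, mul_one, Complex.norm_real, Real.norm_of_nonneg hs.le]
  set A : Set ℂ := (fun p : ℝ × ℝ => f (p.1 * Complex.exp (p.2 * I))) '' (Ioo 1 R ×ˢ univ) with hA
  have hAc : IsPreconnected A := by
    refine (isPreconnected_Ioo.prod isPreconnected_univ).image _ ?_
    refine hf.continuousOn.comp (by fun_prop) ?_
    rintro ⟨s, θ⟩ ⟨hs, -⟩
    rw [mem_ball_zero_iff]
    rw [hpol s (by linarith [hs.1]) _ (Complex.norm_exp_ofReal_mul_I θ)]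
    exact hs.2
  have hAmem : ∀ z : ℂ, 1 < ‖z‖ → ‖z‖ < R → f z ∈ A := by
    intro z h1 h2
    exact ⟨(‖z‖, z.arg), ⟨⟨h1, h2⟩, trivial⟩, by simp only [Complex.norm_mul_exp_arg_mul_I]⟩
  have hnear : ∀ ξ : ℂ, ‖ξ‖ = 1 → ∀ᶠ s : ℝ in 𝓝[>] 1, f (s * ξ) ∈ A := by
    intro ξ hξ
    filter_upwards [Ioo_mem_nhdsGT hR] with s hs
    refine hAmem _ ?_ ?_ <;> rw [hpol s (by linarith [hs.1]) ξ hξ]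
    exacts [hs.1, hs.2]
  have hlim : ∀ ξ : ℂ, ‖ξ‖ = 1 → Filter.Tendsto (fun s : ℝ => f (s * ξ)) (𝓝[>] 1) (𝓝 (f ξ)) := by
    intro ξ hξ
    have h1 : ContinuousAt f ξ := (hf ξ (by rw [mem_ball_zero_iff, hξ]; exact hR)).continuousAt
    have h2 : Filter.Tendsto (fun s : ℝ => (s : ℂ) * ξ) (𝓝[>] 1) (𝓝 ξ) := by
      have h3 : Continuous fun s : ℝ => (s : ℂ) * ξ := by fun_prop
      have h4 := (h3.tendsto 1).mono_left (nhdsWithin_le_nhds (s := Ioi 1))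
      simpa using h4
    exact h1.tendsto.comp h2
  -- the image of the annulus `1 < |z| < R` is connected, meets `𝒢` and avoids its frontier
  have hAG : A ⊆ 𝒢 := by
    refine hAc.subset_of_closure_inter_subset hGo ?_ ?_
    · have hζ1 : ‖ζ‖ = 1 := by simpa using hζ
      obtain ⟨s, hs1, hs2⟩ := ((hnear ζ hζ1).and ((hlim ζ hζ1).eventually_mem
        (hGo.mem_nhds hζG))).exists
      exact ⟨_, hs1, hs2⟩
    · rintro x ⟨hx1, hx2⟩
      by_contra hxG
      have : x ∈ frontier 𝒢 := by rw [hGo.frontier_eq]; exact ⟨hx1, hxG⟩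
      obtain ⟨z, hz, hzx⟩ := hfr this
      obtain ⟨⟨s, θ⟩, ⟨hs, -⟩, hsx⟩ := hx2
      simp only at hsx hs
      have hn := hpol s (by linarith [hs.1]) _ (Complex.norm_exp_ofReal_mul_I θ)
      have h5 := hfi (hcbR (sphere_subset_closedBall hz)) (by
        rw [mem_ball_zero_iff, hn]; exact hs.2) (hzx.trans hsx.symm)
      rw [mem_sphere_zero_iff_norm, h5, hn] at hz
      linarith [hs.1]
  have hall : f '' ball 0 R ⊆ closure 𝒢 := by
    rintro _ ⟨z, hz, rfl⟩
    rw [mem_ball_zero_iff] at hz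
    rcases lt_trichotomy ‖z‖ 1 with h | h | h
    · exact subset_closure (hsub ⟨z, by simpa using h, rfl⟩)
    · refine mem_closure_of_tendsto (hlim z h) ?_
      filter_upwards [hnear z h] with s hs using hAG hs
    · exact subset_closure (hAG (hAmem z h hz))
  have hintg : closure 𝒢 ⊆ interior (closure 𝒢) := by
    have h6 : f '' ball 0 R ⊆ interior (closure 𝒢) :=
      interior_maximal hall (injOn_isOpen_image hR0 hf hfi subset_rfl isOpen_ball)
    rw [closure_eq_self_union_frontier]
    rintro x (hx | hx)
    · rw [← closure_eq_self_union_frontier]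
      exact interior_mono subset_closure (by rwa [hGo.interior_eq])
    · rw [← closure_eq_self_union_frontier]
      obtain ⟨z, hz, rfl⟩ := hfr hx
      exact h6 ⟨z, hcbR (sphere_subset_closedBall hz), rfl⟩
  -- a nonempty clopen subset of the plane is everything, hence unbounded
  have hclop : IsClopen (closure 𝒢) :=
    ⟨isClosed_closure, by rw [← subset_interior_iff_isOpen]; exact hintg⟩
  have huniv := hclop.eq_univ ⟨f 0, subset_closure (hsub ⟨0, by simp, rfl⟩)⟩
  have hb := hGb.closure
  rw [huniv] at hb
  exact NormedSpace.unbounded_univ ℝ ℂ hb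

/-- If `f` is univalent on a larger disk and `f = g ∘ ω` with `|ω'(0)| < 1`, then some boundary
point `ζ` of the disk has positive distance from the image of `ω`: the image of `f` misses a
neighbourhood of a boundary point of the image of `g`, and the length-area principle pulls this
back to the circle. -/
lemma free_point {f g ω : ℂ → ℂ} {R M : ℝ} (hR : 1 < R) (hf : AnalyticOnNhd ℂ f (ball 0 R))
    (hfi : InjOn f (ball 0 R)) (hg : AnalyticOnNhd ℂ g (ball 0 1)) (hi : InjOn g (ball 0 1))
    (hM : ∀ z ∈ ball (0 : ℂ) 1, ‖g z‖ ≤ M) (hω : AnalyticOnNhd ℂ ω (ball 0 1))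
    (hωm : MapsTo ω (ball 0 1) (ball 0 1)) (hω0 : ω 0 = 0)
    (hgω : ∀ z ∈ ball (0 : ℂ) 1, g (ω z) = f z) (hd : ‖deriv ω 0‖ < 1) :
    ∃ ζ : ℂ, ‖ζ‖ = 1 ∧ ∃ η : ℝ, 0 < η ∧ ∀ z ∈ ball (0 : ℂ) 1, η ≤ ‖ω z - ζ‖ := by
  have hbR : ball (0 : ℂ) 1 ⊆ ball 0 R := ball_subset_ball hR.le
  have hωi : InjOn ω (ball 0 1) := by
    intro a ha b hb hab
    exact hfi (hbR ha) (hbR hb) (by rw [← hgω a ha, ← hgω b hb, hab])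
  have h0 : (0 : ℂ) ∈ ball (0 : ℂ) 1 := mem_ball_self one_pos
  -- equal images would make `ω` an automorphism of the disk, with `|ω'(0)| ≥ 1` by the Schwarz lemma
  have hne : ¬ g '' ball 0 1 ⊆ f '' ball 0 1 := by
    intro hsub
    have hsurj : ∀ w ∈ ball (0 : ℂ) 1, ∃ z ∈ ball (0 : ℂ) 1, ω z = w := by
      intro w hw
      obtain ⟨z, hz, hzw⟩ := hsub ⟨w, hw, rfl⟩
      exact ⟨z, hz, hi (hωm hz) hw (by rw [hgω z hz, hzw])⟩
    have hωd : ∀ z ∈ ball (0 : ℂ) 1, deriv ω z ≠ 0 := fun z hz =>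
      injOn_deriv_ne_zero one_pos hω hωi hz
    set ψ := Function.invFunOn ω (ball 0 1) with hψ
    have hl : LeftInvOn ψ ω (ball 0 1) := hωi.leftInvOn_invFunOn
    have hψ0 : ψ 0 = 0 := by have := hl h0; rwa [hω0] at this
    have h1 : ‖deriv ψ 0‖ ≤ 1 := by
      refine Complex.norm_deriv_le_one_of_mapsTo_ball (R := 1) ?_ ?_ one_pos
      · intro w hw
        obtain ⟨z, hz, rfl⟩ := hsurj w hw
        exact (injOn_inv_hasDerivAt one_pos hω hωi hz
          (hωd z hz)).differentiableAt.differentiableWithinAt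
      · intro w hw
        obtain ⟨z, hz, rfl⟩ := hsurj w hw
        rw [hl hz, hψ0]
        exact ball_subset_closedBall hz
    have h2 := (injOn_inv_hasDerivAt one_pos hω hωi h0 (hωd 0 h0)).deriv
    rw [hω0] at h2
    rw [h2, norm_inv] at h1
    have h3 : 0 < ‖deriv ω 0‖ := norm_pos_iff.2 (hωd 0 h0)
    have h4 := (one_lt_inv₀ h3).2 hd
    linarith
  have hGo : IsOpen (g '' ball 0 1) := injOn_isOpen_image one_pos hg hi subset_rfl isOpen_ball
  have hsubG : f '' ball 0 1 ⊆ g '' ball 0 1 := by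
    rintro _ ⟨z, hz, rfl⟩
    exact ⟨ω z, hωm hz, hgω z hz⟩
  obtain ⟨b, hbf, hbK⟩ := exists_frontier_point hR hf hfi hGo
    ((convex_ball 0 1).isPreconnected.image g hg.continuousOn)
    ((isBounded_iff_forall_norm_le).2 ⟨M, by rintro _ ⟨z, hz, rfl⟩; exact hM z hz⟩) hsubG hne
  have hKcl : IsClosed (f '' closedBall 0 1) := ((isCompact_closedBall 0 1).image_of_continuousOn
    (hf.continuousOn.mono (closedBall_subset_ball hR))).isClosed
  obtain ⟨r, hr0, hr⟩ := Metric.isOpen_iff.1 hKcl.isOpen_compl b hbK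
  have hbG : b ∉ g '' ball 0 1 := by rw [hGo.frontier_eq] at hbf; exact hbf.2
  obtain ⟨c, hcG, hcb⟩ := Metric.mem_closure_iff.1 (frontier_subset_closure hbf) (r / 3)
    (by positivity)
  -- a disk inside the image of `g` touching its boundary at `b'`, close to `b` and hence far from the
  -- image of `f`; its preimage `V` accumulates at the circle
  obtain ⟨b', hb', hd'⟩ := hGo.isClosed_compl.exists_infDist_eq_dist ⟨b, hbG⟩ c
  set d := dist c b' with hdd
  have hd0 : 0 < d := by
    rw [hdd, dist_pos]; rintro rfl; exact hb' hcG
  have hdr : d < r / 3 := by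
    rw [← hd']
    exact (Metric.infDist_le_dist_of_mem (s := (g '' ball 0 1)ᶜ) hbG).trans_lt (by
      rw [dist_comm]; exact hcb)
  have hBG : ball c d ⊆ g '' ball 0 1 := by
    intro x hx
    by_contra hxG
    have := Metric.infDist_le_dist_of_mem (x := c) (s := (g '' ball 0 1)ᶜ) hxG
    rw [hd', dist_comm] at this
    exact absurd hx (by rw [mem_ball]; linarith)
  have hgl : LeftInvOn (Function.invFunOn g (ball 0 1)) g (ball 0 1) := hi.leftInvOn_invFunOn
  set V := Function.invFunOn g (ball 0 1) '' ball c d with hV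
  have hVc : IsPreconnected V := by
    refine (convex_ball c d).isPreconnected.image _ ?_
    intro x hx
    obtain ⟨z, hz, rfl⟩ := hBG hx
    exact (injOn_inv_continuousAt one_pos hg hi hz).continuousWithinAt
  have hV1 : V ⊆ ball 0 1 := by
    rintro _ ⟨x, hx, rfl⟩
    obtain ⟨z, hz, rfl⟩ := hBG hx
    rw [hgl hz]; exact hz
  have hgV : ∀ v ∈ V, g v ∈ ball c d := by
    rintro _ ⟨x, hx, rfl⟩
    obtain ⟨z, hz, rfl⟩ := hBG hx
    rw [hgl hz]; exact hx
  obtain ⟨ζ, hζV, hζ⟩ : ∃ ζ ∈ closure V, ‖ζ‖ = 1 := by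
    by_contra hno
    push Not at hno
    have hcV : closure V ⊆ closedBall 0 1 :=
      closure_minimal (hV1.trans ball_subset_closedBall) isClosed_closedBall
    have hcV1 : closure V ⊆ ball 0 1 := by
      intro z hz
      have h5 := hcV hz
      rw [mem_closedBall_zero_iff] at h5
      rw [mem_ball_zero_iff]
      exact lt_of_le_of_ne h5 (hno z hz)
    have hcc : IsCompact (closure V) :=
      (isCompact_closedBall (0 : ℂ) 1).of_isClosed_subset isClosed_closure hcV
    have hgc : IsClosed (g '' closure V) :=
      (hcc.image_of_continuousOn (hg.continuousOn.mono hcV1)).isClosed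
    have hB : closedBall c d ⊆ g '' closure V := by
      rw [← closure_ball c hd0.ne']
      refine closure_minimal ?_ hgc
      intro x hx
      obtain ⟨z, hz, rfl⟩ := hBG hx
      exact ⟨z, subset_closure ⟨g z, hx, hgl hz⟩, rfl⟩
    obtain ⟨z, hz, hzb⟩ := hB (show b' ∈ closedBall c d by rw [mem_closedBall, dist_comm])
    exact hb' ⟨z, hcV1 hz, hzb⟩
  refine ⟨ζ, hζ, ?_⟩
  have hζω : ζ ∉ closure (ω '' ball 0 1) := by
    intro hmem
    refine length_area' hg hi hM ((convex_ball 0 1).isPreconnected.image ω hω.continuousOn) hVc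
      hωm.image_subset hV1 hζ hmem hζV (e := r / 3) (by positivity) ?_
    rintro _ ⟨z, hz, rfl⟩ v hv
    rw [hgω z hz, ← dist_eq_norm]
    have h6 : r ≤ dist (f z) b := by
      by_contra hh
      push Not at hh
      exact hr hh ⟨z, ball_subset_closedBall hz, rfl⟩
    have h7 := hgV v hv
    rw [mem_ball] at h7
    have h8 := dist_triangle4 (f z) (g v) c b
    rw [dist_comm c b] at h8
    linarith
  obtain ⟨η, hη, hη'⟩ := Metric.isOpen_iff.1 isClosed_closure.isOpen_compl ζ hζω
  refine ⟨η, hη, fun z hz => ?_⟩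
  by_contra hh
  push Not at hh
  exact hη' (by rw [mem_ball, dist_eq_norm]; exact hh) (subset_closure ⟨z, hz, rfl⟩)

/-! ### Factorizations through univalent functions -/

/-- A factorization `f = g ∘ ω` on the unit disk, where `g z = α z exp (G z)` is univalent and
bounded by `M`, the coefficients of `G` satisfy `PP`, and `ω` is a self-map of the disk
fixing `0`. -/
structure Tri (T : ℕ → ℝ → ℝ) (f : ℂ → ℂ) (M : ℝ) (α : ℂ) (G ω : ℂ → ℂ) : Prop where
  anG : AnalyticOnNhd ℂ G (ball 0 1)
  G0 : G 0 = 0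
  inj : InjOn (fun z => α * z * Complex.exp (G z)) (ball 0 1)
  bdd : ∀ z ∈ ball (0 : ℂ) 1, ‖α * z * Complex.exp (G z)‖ ≤ M
  pp : PP T (tc G)
  anω : AnalyticOnNhd ℂ ω (ball 0 1)
  maps : MapsTo ω (ball 0 1) (ball 0 1)
  ω0 : ω 0 = 0
  comp : ∀ z ∈ ball (0 : ℂ) 1, α * ω z * Complex.exp (G (ω z)) = f z

section TriLemmas
variable {T : ℕ → ℝ → ℝ} {S : ℕ → ℝ → ℝ} {ε : ℝ} {f : ℂ → ℂ} {M : ℝ} {α : ℂ} {G ω : ℂ → ℂ}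

lemma zero_mem_B : (0 : ℂ) ∈ ball (0 : ℂ) 1 := by simp

lemma mulexp_hasDerivAt (hG : AnalyticAt ℂ G 0) (hG0 : G 0 = 0) (α : ℂ) :
    HasDerivAt (fun z => α * z * Complex.exp (G z)) α 0 := by
  have h1 : HasDerivAt (fun z : ℂ => α * z) α 0 := by
    simpa using (hasDerivAt_id (0 : ℂ)).const_mul α
  have h2 := h1.mul hG.differentiableAt.hasDerivAt.cexp
  refine h2.congr_deriv ?_
  simp [hG0]

lemma Tri.an (h : Tri T f M α G ω) :
    AnalyticOnNhd ℂ (fun z => α * z * Complex.exp (G z)) (ball 0 1) := fun z hz =>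
  (analyticAt_const.mul analyticAt_id).mul (h.anG z hz).cexp

lemma Tri.deriv_eq (h : Tri T f M α G ω) (hd : deriv f 0 = 1) : α * deriv ω 0 = 1 := by
  have h1 := mulexp_hasDerivAt (h.anG 0 zero_mem_B) h.G0 α
  have h2 : HasDerivAt ω (deriv ω 0) 0 := (h.anω 0 zero_mem_B).differentiableAt.hasDerivAt
  rw [← h.ω0] at h1
  have h3 := h1.comp (0 : ℂ) h2
  have h4 : ((fun z => α * z * Complex.exp (G z)) ∘ ω) =ᶠ[𝓝 0] f := by
    filter_upwards [ball_mem_nhds (0 : ℂ) one_pos] with z hz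
    exact h.comp z hz
  rw [← hd, ← h4.deriv_eq, h3.deriv]

lemma Tri.one_le (h : Tri T f M α G ω) (hd : deriv f 0 = 1) : 1 ≤ ‖α‖ := by
  have h1 := h.deriv_eq hd
  have h2 : ‖deriv ω 0‖ ≤ 1 := by
    refine Complex.norm_deriv_le_one_of_mapsTo_ball (R := 1) h.anω.differentiableOn ?_ one_pos
    rw [h.ω0]
    exact h.maps.mono_right ball_subset_closedBall
  have h3 : ‖α‖ * ‖deriv ω 0‖ = 1 := by rw [← norm_mul, h1, norm_one]
  nlinarith [norm_nonneg α, norm_nonneg (deriv ω 0)]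

lemma Tri.rotate (h : Tri T f M α G ω) {ζ : ℂ} (hζ : ‖ζ‖ = 1) :
    Tri T f M (α * ζ) (fun z => G (ζ * z)) (fun z => ζ⁻¹ * ω z) := by
  have hζ0 : ζ ≠ 0 := by intro h0; simp [h0] at hζ
  have hm : ∀ z ∈ ball (0 : ℂ) 1, ζ * z ∈ ball (0 : ℂ) 1 := by
    intro z hz; simpa [hζ] using hz
  have hc : ∀ z, ζ * (ζ⁻¹ * z) = z := fun z => by field_simp
  refine ⟨?_, by simp [h.G0], ?_, ?_, ?_, ?_, ?_, by simp [h.ω0], ?_⟩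
  · intro z hz
    exact (h.anG _ (hm z hz)).comp_of_eq (analyticAt_const.mul analyticAt_id) rfl
  · intro x hx y hy hxy
    have := h.inj (hm x hx) (hm y hy) (by simpa [mul_assoc] using hxy)
    exact mul_left_cancel₀ hζ0 this
  · intro z hz
    simpa [mul_assoc] using h.bdd _ (hm z hz)
  · exact PP_rotate hζ h.pp (fun k _ => tc_comp_mul (h.anG 0 zero_mem_B) ζ k)
  · intro z hz
    exact analyticAt_const.mul (h.anω z hz)
  · intro z hz
    have := h.maps hz
    simpa [hζ] using this
  · intro z hz
    have := h.comp z hz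
    simp only [hc]
    rw [← this]; field_simp

lemma LL_exp {w : ℝ} (h0 : 0 < w) (h1 : w ≤ 1) {z : ℂ} (hz : ‖z‖ < 1) (α : ℂ) (G : ℂ → ℂ) :
    α * w * z * Complex.exp (LL G w z) = α * vv z w * Complex.exp (G (vv z w)) := by
  have hs := uu_slit hz h0 h1
  have hv := vv_norm_lt hs
  have e1 : 1 + vv z w ≠ 0 := one_add_ne_of_norm hv
  have e2 : 1 + z ≠ 0 := one_add_ne_of_norm hz
  have hk := vv_koebe hs
  have : Complex.exp (LL G w z) = Complex.exp (G (vv z w)) * (1 + vv z w) ^ 2 / (1 + z) ^ 2 := by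
    unfold LL
    rw [Complex.exp_sub, Complex.exp_add, two_mul, two_mul, Complex.exp_add, Complex.exp_add,
      Complex.exp_log e1, Complex.exp_log e2, pow_two, pow_two]
  rw [this]
  have h2 : vv z w = w * z / (1 + z) ^ 2 * (1 + vv z w) ^ 2 := by
    rw [← hk]; field_simp
  calc α * w * z * (Complex.exp (G (vv z w)) * (1 + vv z w) ^ 2 / (1 + z) ^ 2)
      = α * (w * z / (1 + z) ^ 2 * (1 + vv z w) ^ 2) * Complex.exp (G (vv z w)) := by ring
    _ = _ := by rw [← h2]

lemma cay_inj {x y : ℂ} (hx : 1 + x ≠ 0) (hy : 1 + y ≠ 0) (h : cay x = cay y) : x = y := by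
  rw [← cay_cay hx, ← cay_cay hy, h]

lemma vv_inj {w : ℝ} (h0 : 0 < w) (h1 : w ≤ 1) {x y : ℂ} (hx : ‖x‖ < 1) (hy : ‖y‖ < 1)
    (h : vv x w = vv y w) : x = y := by
  have sx := uu_slit hx h0 h1
  have sy := uu_slit hy h0 h1
  have e : uu x w = uu y w := by rw [← ss_sq sx, ← ss_sq sy, ← cay_vv sx, ← cay_vv sy, h]
  rw [uu_eq (one_add_ne_of_norm hx), uu_eq (one_add_ne_of_norm hy)] at e
  have hw : (w : ℂ) ≠ 0 := by exact_mod_cast h0.ne'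
  have e2 : cay x ^ 2 = cay y ^ 2 := mul_left_cancel₀ hw (add_left_cancel e)
  refine cay_inj (one_add_ne_of_norm hx) (one_add_ne_of_norm hy) ?_
  rw [← csq_of_sq (cay_re_pos hx), ← csq_of_sq (cay_re_pos hy), e2]

/-- If `s` lies in the right half plane outside the disk of radius `√a`, then `s² - a` avoids the
negative real axis. -/
lemma sq_sub_slit {s : ℂ} (hs : 0 < s.re) {a : ℝ} (ha : a < ‖s‖ ^ 2) :
    s ^ 2 - (a : ℂ) ∈ slitPlane := by
  rw [Complex.mem_slitPlane_iff]
  by_cases him : s.im = 0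
  · left
    rw [Complex.sq_norm, Complex.normSq_apply, him] at ha
    simp [pow_two, him]
    linarith
  · right
    simp [pow_two]
    intro h
    exact mul_ne_zero hs.ne' him (by linarith)

/-- If the image of `ω` stays away from the boundary point `1`, then `ω` factors through the slit
map `vv · w` for some `w < 1`. This replaces `g` by `g ∘ vv · w` and shrinks the leading
coefficient. -/
lemma Tri.step_one (W : WeightSystem ε T S) (h : Tri T f M α G ω) (hα : α ≠ 0) {η : ℝ} (hη : 0 < η)
    (hfar : ∀ z ∈ ball (0 : ℂ) 1, η ≤ ‖ω z - 1‖) :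
    ∃ β G' ω', ‖β‖ < ‖α‖ ∧ Tri T f M β G' ω' := by
  set a : ℝ := min (1 / 2) (η ^ 2 / 8) with ha
  have ha0 : 0 < a := by rw [ha]; positivity
  have ha1 : a ≤ 1 / 2 := min_le_left _ _
  have ha2 : a ≤ η ^ 2 / 8 := min_le_right _ _
  set w : ℝ := 1 - a with hw
  have hw0 : 0 < w := by linarith
  have hw1 : w < 1 := by linarith
  have hwc : (w : ℂ) ≠ 0 := by exact_mod_cast hw0.ne'
  have hexp : Real.exp (-(-Real.log w)) = w := by rw [neg_neg, Real.exp_log hw0]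
  have hnorm : ∀ z ∈ ball (0 : ℂ) 1, ‖ω z‖ < 1 := fun z hz => by simpa using h.maps hz
  -- in half plane coordinates the slit map is `s ↦ √(a + (1 - a) s²)`, which is inverted on the image
  -- of `ω` because `|cay ω| ≥ η / 2`
  have hq1 : ∀ z ∈ ball (0 : ℂ) 1, cay (ω z) ^ 2 - (a : ℂ) ∈ slitPlane := by
    intro z hz
    have hn := hnorm z hz
    refine sq_sub_slit (cay_re_pos hn) ?_
    have h1 : η / 2 ≤ ‖cay (ω z)‖ := by
      have e1 : ‖1 + ω z‖ ≤ 2 := by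
        calc ‖1 + ω z‖ ≤ ‖(1 : ℂ)‖ + ‖ω z‖ := norm_add_le _ _
          _ ≤ 2 := by rw [norm_one]; linarith
      have e2 : 0 < ‖1 + ω z‖ := norm_pos_iff.2 (one_add_ne_of_norm hn)
      have e3 := hfar z hz
      rw [norm_sub_rev] at e3
      unfold cay
      rw [norm_div, le_div_iff₀ e2]
      nlinarith
    nlinarith [mul_self_le_mul_self (by positivity) h1]
  have hq : ∀ z ∈ ball (0 : ℂ) 1, (cay (ω z) ^ 2 - (a : ℂ)) / w ∈ slitPlane := by
    intro z hz
    have := slitPlane_smul (hq1 z hz) (inv_pos.2 hw0)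
    rw [div_eq_inv_mul]; push_cast at this; exact this
  set ω' : ℂ → ℂ := fun z => cay (csq ((cay (ω z) ^ 2 - (a : ℂ)) / w)) with hω'
  have hω'n : ∀ z ∈ ball (0 : ℂ) 1, ‖ω' z‖ < 1 := fun z hz => cay_norm_lt (csq_re_pos (hq z hz))
  have hvω : ∀ z ∈ ball (0 : ℂ) 1, vv (ω' z) w = ω z := by
    intro z hz
    have hs := csq_re_pos (hq z hz)
    have e1 : cay (ω' z) = csq ((cay (ω z) ^ 2 - (a : ℂ)) / w) := cay_cay (one_add_ne_of_re hs)
    have e2 : uu (ω' z) w = cay (ω z) ^ 2 := by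
      rw [uu_eq (one_add_ne_of_norm (hω'n z hz)), e1, csq_sq (slitPlane_ne_zero (hq z hz)),
        mul_div_cancel₀ _ hwc, hw]
      push_cast; ring
    unfold vv ss
    rw [e2, csq_of_sq (cay_re_pos (hnorm z hz)), cay_cay (one_add_ne_of_norm (hnorm z hz))]
  have hvm : ∀ z ∈ ball (0 : ℂ) 1, vv z w ∈ ball (0 : ℂ) 1 := fun z hz => by
    simpa using vv_norm_lt (uu_slit (by simpa using hz) hw0 hw1.le)
  refine ⟨α * w, LL G w, ω', ?_, LL_analyticOn h.anG hw0 hw1.le, LL_zero h.G0 _, ?_, ?_, ?_, ?_, ?_,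
    ?_, ?_⟩
  · rw [norm_mul, Complex.norm_real, Real.norm_of_nonneg hw0.le]
    have := norm_pos_iff.2 hα
    nlinarith
  · intro x hx y hy hxy
    have hx' : ‖x‖ < 1 := by simpa using hx
    have hy' : ‖y‖ < 1 := by simpa using hy
    simp only [LL_exp hw0 hw1.le hx', LL_exp hw0 hw1.le hy'] at hxy
    exact vv_inj hw0 hw1.le hx' hy' (h.inj (hvm x hx) (hvm y hy) hxy)
  · intro z hz
    rw [LL_exp hw0 hw1.le (by simpa using hz)]
    exact h.bdd _ (hvm z hz)
  · have := PP_step W h.anG h.pp (δ := -Real.log w) (by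
      have := Real.log_nonpos hw0.le hw1.le; linarith)
    rwa [hexp] at this
  · refine DifferentiableOn.analyticOnNhd (fun z hz => ?_) isOpen_ball
    have d1 := (h.anω z hz).differentiableAt
    have d2 : DifferentiableAt ℂ (fun z => cay (ω z)) z :=
      (cay_hasDerivAt (one_add_ne_of_norm (hnorm z hz))).differentiableAt.comp z d1
    have d3 : DifferentiableAt ℂ (fun z => (cay (ω z) ^ 2 - (a : ℂ)) / w) z :=
      ((d2.pow 2).sub_const _).div_const _
    have d4 : DifferentiableAt ℂ (fun z => csq ((cay (ω z) ^ 2 - (a : ℂ)) / w)) z :=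
      DifferentiableAt.comp (g := csq) z (csq_hasDerivAt (hq z hz)).differentiableAt d3
    exact ((cay_hasDerivAt (one_add_ne_of_re (csq_re_pos (hq z hz)))).differentiableAt.comp z
      d4).differentiableWithinAt
  · intro z hz; simpa using hω'n z hz
  · have e : cay (ω 0) = 1 := by simp [h.ω0, cay]
    have e2 : ((1 : ℂ) ^ 2 - (a : ℂ)) / w = 1 := by
      rw [div_eq_one_iff_eq hwc, hw]; push_cast; ring
    simp only [hω', e, e2]
    simp [csq, cay]
  · intro z hz
    rw [LL_exp hw0 hw1.le (hω'n z hz), hvω z hz]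
    exact h.comp z hz

/-- As long as `‖α‖ > 1`, the factorization can be improved: rotate the free boundary point to `1`
and split off a slit map. -/
lemma Tri.step (W : WeightSystem ε T S) {R : ℝ} (hR : 1 < R) (hf : AnalyticOnNhd ℂ f (ball 0 R))
    (hfi : InjOn f (ball 0 R)) (hd : deriv f 0 = 1) (h : Tri T f M α G ω) (hα : 1 < ‖α‖) :
    ∃ β G' ω', ‖β‖ < ‖α‖ ∧ Tri T f M β G' ω' := by
  have h1 := h.deriv_eq hd
  have h3 : ‖α‖ * ‖deriv ω 0‖ = 1 := by rw [← norm_mul, h1, norm_one]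
  have h4 : ‖deriv ω 0‖ < 1 := by nlinarith [norm_nonneg (deriv ω 0)]
  obtain ⟨ζ, hζ, η, hη, hfar⟩ := free_point hR hf hfi h.an h.inj h.bdd h.anω h.maps h.ω0 h.comp h4
  have hζ0 : ζ ≠ 0 := by intro h0; simp [h0] at hζ
  have hα0 : α ≠ 0 := by intro h0; simp [h0] at hα; linarith
  obtain ⟨β, G', ω', hlt, ht⟩ := (h.rotate hζ).step_one W (mul_ne_zero hα0 hζ0) hη (by
    intro z hz
    have e : ζ⁻¹ * ω z - 1 = ζ⁻¹ * (ω z - ζ) := by field_simp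
    rw [e, norm_mul, norm_inv, hζ, inv_one, one_mul]
    exact hfar z hz)
  refine ⟨β, G', ω', ?_, ht⟩
  simpa [hζ] using hlt

end TriLemmas

/-! ### Minimal factorizations and the estimates for all of `𝒮` -/

/-- Locally uniform convergence to a continuous limit is joint convergence in the index and the
point. -/
lemma locUnif_iff {F : ℕ → ℂ → ℂ} {f : ℂ → ℂ} (hf : ContinuousOn f (ball 0 1)) :
    TendstoLocallyUniformlyOn F f Filter.atTop (ball 0 1) ↔
      ∀ x ∈ ball (0 : ℂ) 1, Filter.Tendsto (fun p : ℕ × ℂ => F p.1 p.2) (Filter.atTop ×ˢ 𝓝 x)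
        (𝓝 (f x)) := by
  rw [tendstoLocallyUniformlyOn_iff_filter]
  refine forall₂_congr fun x hx => ?_
  have hx' : 𝓝[ball (0 : ℂ) 1] x = 𝓝 x := isOpen_ball.nhdsWithin_eq hx
  have hc : Filter.Tendsto (fun p : ℕ × ℂ => f p.2) (Filter.atTop ×ˢ 𝓝 x) (𝓝 (f x)) :=
    (hf.continuousAt (isOpen_ball.mem_nhds hx)).tendsto.comp Filter.tendsto_snd
  rw [hx', tendstoUniformlyOnFilter_iff_tendsto]
  constructor
  · intro h
    exact hc.congr_uniformity h
  · intro h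
    have := hc.prodMk_nhds h
    exact this.mono_right (nhds_le_uniformity _)

section TriLimits
variable {T : ℕ → ℝ → ℝ} {S : ℕ → ℝ → ℝ} {ε : ℝ} {f : ℂ → ℂ} {M : ℝ}

lemma Tri_closed {α : ℕ → ℂ} {G ω : ℕ → ℂ → ℂ} (h : ∀ n, Tri T f M (α n) (G n) (ω n))
    (hd : deriv f 0 = 1) {a : ℂ} {G' ω' : ℂ → ℂ} (hα : Filter.Tendsto α Filter.atTop (𝓝 a))
    (hG : TendstoLocallyUniformlyOn G G' Filter.atTop (ball 0 1))
    (hω : TendstoLocallyUniformlyOn ω ω' Filter.atTop (ball 0 1))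
    (aG : AnalyticOnNhd ℂ G' (ball 0 1)) (aω : AnalyticOnNhd ℂ ω' (ball 0 1)) :
    Tri T f M a G' ω' := by
  have hG' := (locUnif_iff aG.continuousOn).1 hG
  have G0 : G' 0 = 0 := by
    refine tendsto_nhds_unique (hG.tendsto_at zero_mem_B) ?_
    simp [(h _).G0]
  have ω0 : ω' 0 = 0 := by
    refine tendsto_nhds_unique (hω.tendsto_at zero_mem_B) ?_
    simp [(h _).ω0]
  have maps : MapsTo ω' (ball 0 1) (ball 0 1) := by
    intro z hz
    have hz' : ‖z‖ < 1 := by simpa using hz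
    have : ‖ω' z‖ ≤ ‖z‖ := by
      refine le_of_tendsto (hω.tendsto_at hz).norm (Filter.Eventually.of_forall fun n => ?_)
      exact Complex.norm_le_norm_of_mapsTo_ball (R := 1) (h n).anω.differentiableOn
        ((h n).maps.mono_right ball_subset_closedBall) (h n).ω0 hz'
    simpa using this.trans_lt hz'
  have ha : 1 ≤ ‖a‖ := ge_of_tendsto hα.norm (Filter.Eventually.of_forall fun n => (h n).one_le hd)
  have ang : AnalyticOnNhd ℂ (fun z => a * z * Complex.exp (G' z)) (ball 0 1) := fun z hz =>
    (analyticAt_const.mul analyticAt_id).mul (aG z hz).cexp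
  refine ⟨aG, G0, ?_, ?_, ?_, aω, maps, ω0, ?_⟩
  · refine hurwitz_injOn (fun n => (h n).an) (fun n => (h n).inj) ?_ ang ?_
    · rw [locUnif_iff ang.continuousOn]
      intro x hx
      exact ((hα.comp Filter.tendsto_fst).mul Filter.tendsto_snd).mul
        ((Complex.continuous_exp.tendsto _).comp (hG' x hx))
    · rw [(mulexp_hasDerivAt (aG 0 zero_mem_B) G0 a).deriv]
      intro h0; rw [h0, norm_zero] at ha; linarith
  · intro z hz
    refine le_of_tendsto (((hα.mul tendsto_const_nhds).mul
      ((Complex.continuous_exp.tendsto _).comp (hG.tendsto_at hz))).norm)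
      (Filter.Eventually.of_forall fun n => (h n).bdd z hz)
  · exact PP_closed (fun n => (h n).pp) (fun k _ => tendsto_tc (fun n => (h n).anG) hG k)
  · intro z hz
    have h1 : Filter.Tendsto (fun n => ω n z) Filter.atTop (𝓝 (ω' z)) := hω.tendsto_at hz
    have h2 : Filter.Tendsto (fun n => G n (ω n z)) Filter.atTop (𝓝 (G' (ω' z))) :=
      (hG' _ (maps hz)).comp (Filter.tendsto_id.prodMk h1)
    refine tendsto_nhds_unique ((hα.mul h1).mul ((Complex.continuous_exp.tendsto _).comp h2)) ?_
    refine tendsto_const_nhds.congr fun n => ?_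
    exact ((h n).comp z hz).symm

/-- Among all factorizations there is one with minimal `‖α‖`, by compactness. -/
lemma Tri.exists_min (W : WeightSystem ε T S) (h0 : 0 < ε) (h1 : ε ≤ 1 / 4) {α₀ : ℂ}
    {G₀ ω₀ : ℂ → ℂ} (h : Tri T f M α₀ G₀ ω₀) (hd : deriv f 0 = 1) :
    ∃ α G ω, Tri T f M α G ω ∧ ∀ β G' ω', Tri T f M β G' ω' → ‖α‖ ≤ ‖β‖ := by
  set A : Set ℝ := {r | ∃ α G ω, ‖α‖ = r ∧ Tri T f M α G ω} with hA
  have hne : A.Nonempty := ⟨_, α₀, G₀, ω₀, rfl, h⟩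
  have hb : BddBelow A := ⟨0, by rintro r ⟨α, G, ω, rfl, -⟩; exact norm_nonneg _⟩
  obtain ⟨u, hanti, hu, huA⟩ := exists_seq_tendsto_sInf hne hb
  choose α G ω hn ht using huA
  obtain ⟨a, -, φ, hφ, ha⟩ := tendsto_subseq_of_bounded (isBounded_closedBall (x := (0 : ℂ)) (r := u 0))
    (x := α) (fun n => by simpa [hn] using hanti (Nat.zero_le n))
  obtain ⟨ψ, hψ, G', aG, hG⟩ := exists_subseq (F := fun n => G (φ n)) (A := 10)
    (fun n => (ht _).anG) (by
      intro n k
      rcases Nat.eq_zero_or_pos k with rfl | hk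
      · simp [tc_zero, (ht _).G0]
      · exact PP_bound W h0 h1 (ht _).pp hk)
  obtain ⟨χ, hχ, ω', aω, hω⟩ := exists_subseq (F := fun n => ω (φ (ψ n))) (A := 1)
    (fun n => (ht _).anω) (by
      intro n k
      refine norm_tc_le (ht _).anω (fun z hz => ?_) k
      have : ‖ω (φ (ψ n)) z‖ < 1 := by simpa using (ht (φ (ψ n))).maps hz
      exact this.le)
  have hlim : Filter.Tendsto (fun n => α (φ (ψ (χ n)))) Filter.atTop (𝓝 a) :=
    ha.comp (hψ.tendsto_atTop.comp hχ.tendsto_atTop)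
  have hG2 : TendstoLocallyUniformlyOn (fun n => G (φ (ψ (χ n)))) G' Filter.atTop (ball 0 1) := by
    intro v hv x hx
    obtain ⟨t, ht, hh⟩ := hG v hv x hx
    exact ⟨t, ht, hχ.tendsto_atTop.eventually hh⟩
  refine ⟨a, G', ω', Tri_closed (fun n => ht (φ (ψ (χ n)))) hd hlim hG2 hω aG aω, ?_⟩
  intro β G'' ω'' hβ
  have e : ‖a‖ = sInf A := by
    refine tendsto_nhds_unique hlim.norm ?_
    simp only [hn]
    exact hu.comp (hφ.tendsto_atTop.comp (hψ.tendsto_atTop.comp hχ.tendsto_atTop))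
  rw [e]
  exact csInf_le hb ⟨β, G'', ω'', rfl, hβ⟩

/-- If the leading coefficient is unimodular, then `ω` is a rotation by the Schwarz lemma, so `f`
itself is a rotation of `g` and inherits `PP`. -/
lemma Tri.finish {α : ℂ} {G ω H : ℂ → ℂ} (h : Tri T f M α G ω) (hd : deriv f 0 = 1)
    (hα : ‖α‖ = 1) (hH : AnalyticOnNhd ℂ H (ball 0 1)) (hH0 : H 0 = 0)
    (hf : ∀ z ∈ ball (0 : ℂ) 1, f z = z * Complex.exp (H z)) : PP T (tc H) := by
  have h1 := h.deriv_eq hd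
  have hα0 : α ≠ 0 := by intro h0; simp [h0] at hα
  have hdω : deriv ω 0 = α⁻¹ := by field_simp; rw [mul_comm]; exact h1
  have hs := Complex.affine_of_mapsTo_ball_of_norm_dslope_eq_div (f := ω) (c := 0) (R₁ := 1)
    (R₂ := 1) (z₀ := 0) h.anω.differentiableOn
    (by rw [h.ω0]; exact h.maps.mono_right ball_subset_closedBall) zero_mem_B
    (by rw [dslope_same, hdω, norm_inv, hα]; norm_num)
  have hω : ∀ z ∈ ball (0 : ℂ) 1, ω z = α⁻¹ * z := by
    intro z hz
    have := hs hz
    simpa [dslope_same, hdω, h.ω0, mul_comm] using this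
  have hinv : ‖α⁻¹‖ = 1 := by rw [norm_inv, hα, inv_one]
  have aK : AnalyticOnNhd ℂ (fun z => G (α⁻¹ * z)) (ball 0 1) := by
    intro z hz
    refine (h.anG (α⁻¹ * z) ?_).comp_of_eq (analyticAt_const.mul analyticAt_id) rfl
    simpa [hα] using hz
  have hexp : ∀ z ∈ ball (0 : ℂ) 1, z ≠ 0 → Complex.exp (H z) = Complex.exp (G (α⁻¹ * z)) := by
    intro z hz hz0
    have e := h.comp z hz
    rw [hω z hz, hf z hz, mul_inv_cancel_left₀ hα0] at e
    exact (mul_left_cancel₀ hz0 e).symm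
  -- near `0` both exponents have imaginary part below `π`, so they coincide
  have hnear : H =ᶠ[𝓝 0] fun z => G (α⁻¹ * z) := by
    have c1 := (hH 0 zero_mem_B).continuousAt
    have c2 := (aK 0 zero_mem_B).continuousAt
    have p1 : ∀ᶠ z in 𝓝 (0 : ℂ), ‖H z‖ < 1 := by
      have := c1.norm; refine this.eventually_lt continuousAt_const ?_; simp [hH0]
    have p2 : ∀ᶠ z in 𝓝 (0 : ℂ), ‖G (α⁻¹ * z)‖ < 1 := by
      have := c2.norm; refine this.eventually_lt continuousAt_const ?_; simp [h.G0]
    filter_upwards [p1, p2, ball_mem_nhds (0 : ℂ) one_pos] with z q1 q2 hz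
    by_cases hz0 : z = 0
    · simp [hz0, hH0, h.G0]
    · have i1 := (Complex.abs_im_le_norm (H z)).trans_lt q1
      have i2 := (Complex.abs_im_le_norm (G (α⁻¹ * z))).trans_lt q2
      rw [abs_lt] at i1 i2
      have hpi := Real.pi_gt_three
      rw [← Complex.log_exp (x := H z) (by linarith) (by linarith), hexp z hz hz0,
        Complex.log_exp (by linarith) (by linarith)]
  refine PP_rotate hinv h.pp fun k _ => ?_
  rw [tc_congr hnear, tc_comp_mul (h.anG 0 zero_mem_B)]

/-- The estimates for functions univalent on a larger disk: a minimal factorization, starting the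
search from the trivial one `f = M · (f / M)`, has `‖α‖ = 1`. -/
lemma PP_of_big_disk (W : WeightSystem ε T S) (h0 : 0 < ε) (h1 : ε ≤ 1 / 4) {R : ℝ} (hR : 1 < R)
    (hf : AnalyticOnNhd ℂ f (ball 0 R)) (hfi : InjOn f (ball 0 R)) (hd : deriv f 0 = 1)
    {H : ℂ → ℂ} (hH : AnalyticOnNhd ℂ H (ball 0 1)) (hH0 : H 0 = 0)
    (hfH : ∀ z ∈ ball (0 : ℂ) 1, f z = z * Complex.exp (H z)) : PP T (tc H) := by
  have hf0 : f 0 = 0 := by simpa using hfH 0 zero_mem_B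
  obtain ⟨M, hM⟩ : ∃ M, ∀ z ∈ closedBall (0 : ℂ) 1, ‖f z‖ ≤ M :=
    (isCompact_closedBall (0 : ℂ) 1).exists_bound_of_continuousOn
      (hf.continuousOn.mono (closedBall_subset_ball hR))
  set M' : ℝ := max M 0 + 1 with hM'
  have hM'0 : 0 < M' := by have := le_max_right M 0; linarith
  have hM'c : (M' : ℂ) ≠ 0 := by exact_mod_cast hM'0.ne'
  have hlt : ∀ z ∈ ball (0 : ℂ) 1, ‖f z‖ < M' := fun z hz => by
    have := hM z (ball_subset_closedBall hz)
    have := le_max_left M 0; linarith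
  have hanf : AnalyticOnNhd ℂ f (ball 0 1) := hf.mono (ball_subset_ball hR.le)
  have htc : tc (fun _ : ℂ => (0 : ℂ)) = fun _ => 0 := by
    funext k; simp [tc]
  have hinit : Tri T f M' (M' : ℂ) (fun _ => 0) (fun z => f z / M') := by
    refine ⟨fun _ _ => analyticAt_const, rfl, ?_, ?_, ?_, ?_, ?_, by simp [hf0], ?_⟩
    · intro x _ y _ hxy
      simpa [hM'0.ne'] using hxy
    · intro z hz
      have : ‖z‖ < 1 := by simpa using hz
      simp [abs_of_pos hM'0]
      nlinarith
    · rw [htc]; exact PP_zero W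
    · intro z hz; exact (hanf z hz).div analyticAt_const hM'c
    · intro z hz
      have := hlt z hz
      simp [abs_of_pos hM'0, div_lt_one hM'0, this]
    · intro z hz; simp; field_simp
  obtain ⟨α, G, ω, ht, hmin⟩ := hinit.exists_min W h0 h1 hd
  have hα : ‖α‖ = 1 := by
    refine le_antisymm ?_ (ht.one_le hd)
    by_contra hgt
    obtain ⟨β, G', ω', hlt, hβ⟩ := ht.step W hR hf hfi hd (not_le.1 hgt)
    exact absurd (hmin β G' ω' hβ) (not_le.2 hlt)
  exact ht.finish hd hα hH hH0 hfH

/-- Every normalized univalent function `f z = z exp (H z)` satisfies the system `PP`. -/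
theorem PP_of_univalent (W : WeightSystem ε T S) (h0 : 0 < ε) (h1 : ε ≤ 1 / 4)
    (hf : AnalyticOnNhd ℂ f (ball 0 1)) (hfi : InjOn f (ball 0 1)) (hd : deriv f 0 = 1)
    {H : ℂ → ℂ} (hH : AnalyticOnNhd ℂ H (ball 0 1)) (hH0 : H 0 = 0)
    (hfH : ∀ z ∈ ball (0 : ℂ) 1, f z = z * Complex.exp (H z)) : PP T (tc H) := by
  have key : ∀ r : ℝ, 0 < r → r < 1 → PP T (tc (fun z => H (r * z))) := by
    intro r hr0 hr1
    have hrc : (r : ℂ) ≠ 0 := by exact_mod_cast hr0.ne'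
    have hm : ∀ z ∈ ball (0 : ℂ) r⁻¹, (r : ℂ) * z ∈ ball (0 : ℂ) 1 := by
      intro z hz
      have hz' : ‖z‖ < r⁻¹ := by simpa using hz
      have : r * ‖z‖ < 1 := by
        calc r * ‖z‖ < r * r⁻¹ := mul_lt_mul_of_pos_left hz' hr0
          _ = 1 := mul_inv_cancel₀ hr0.ne'
      simpa [abs_of_pos hr0] using this
    have hR : 1 < r⁻¹ := (one_lt_inv₀ hr0).2 hr1
    have hlin : ∀ z : ℂ, AnalyticAt ℂ (fun z : ℂ => (r : ℂ) * z) z := fun z =>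
      analyticAt_const.mul analyticAt_id
    have hm1 : ∀ z ∈ ball (0 : ℂ) 1, (r : ℂ) * z ∈ ball (0 : ℂ) 1 := fun z hz =>
      hm z (ball_subset_ball hR.le hz)
    refine PP_of_big_disk (f := fun z => f (r * z) / r) W h0 h1 hR ?_ ?_ ?_ ?_ ?_ ?_
    · intro z hz
      exact ((hf _ (hm z hz)).comp_of_eq (hlin z) rfl).div analyticAt_const hrc
    · intro x hx y hy hxy
      have e : f (r * x) = f (r * y) := by simpa [hr0.ne'] using hxy
      exact mul_left_cancel₀ hrc (hfi (hm x hx) (hm y hy) e)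
    · have d1 : HasDerivAt f 1 ((r : ℂ) * 0) := by
        rw [mul_zero, ← hd]; exact (hf 0 zero_mem_B).differentiableAt.hasDerivAt
      have d2 : HasDerivAt (fun z : ℂ => (r : ℂ) * z) r 0 := by
        simpa using (hasDerivAt_id (0 : ℂ)).const_mul (r : ℂ)
      have d3 := (HasDerivAt.comp (0 : ℂ) d1 d2).div_const (r : ℂ)
      rw [show (fun z => f (r * z) / r) = fun z => (f ∘ fun z => (r : ℂ) * z) z / r from rfl,
        d3.deriv]
      field_simp
    · intro z hz
      exact (hH _ (hm1 z hz)).comp_of_eq (hlin z) rfl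
    · simp [hH0]
    · intro z hz
      simp only [hfH _ (hm1 z hz)]
      field_simp
  have hr : ∀ n : ℕ, (0 : ℝ) < 1 - 1 / ((n : ℝ) + 2) ∧ 1 - 1 / ((n : ℝ) + 2) < 1 := by
    intro n
    have h2 : (0 : ℝ) < n + 2 := by positivity
    have : 1 / ((n : ℝ) + 2) < 1 := by rw [div_lt_one h2]; linarith [(n.cast_nonneg : (0 : ℝ) ≤ n)]
    have : 0 < 1 / ((n : ℝ) + 2) := by positivity
    constructor <;> linarith
  refine PP_closed (fun n => key _ (hr n).1 (hr n).2) fun k _ => ?_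
  simp only [tc_comp_mul (hH 0 zero_mem_B)]
  have hlim : Filter.Tendsto (fun n : ℕ => 1 - 1 / ((n : ℝ) + 2)) Filter.atTop (𝓝 1) := by
    have := (tendsto_one_div_add_atTop_nhds_zero_nat (𝕜 := ℝ)).comp (Filter.tendsto_add_atTop_nat 1)
    have h2 := tendsto_const_nhds (x := (1 : ℝ)).sub this
    rw [sub_zero] at h2
    refine h2.congr fun n => ?_
    simp only [Function.comp]
    push_cast
    rw [add_assoc, one_add_one_eq_two]
  have h3 : Filter.Tendsto (fun n : ℕ => ((1 - 1 / ((n : ℝ) + 2) : ℝ) : ℂ)) Filter.atTop (𝓝 1) := by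
    have := (Complex.continuous_ofReal.tendsto 1).comp hlim
    rwa [Complex.ofReal_one] at this
  simpa using (h3.pow k).mul_const (tc H k)

end TriLimits

/-! ### Bounds for the second and third coefficients -/

/-- An injective analytic function with `f 0 = 0`, `f' 0 = 1` has the form `z exp (H z)`. -/
lemma exists_log {f : ℂ → ℂ} (hf : AnalyticOnNhd ℂ f (ball 0 1)) (hfi : InjOn f (ball 0 1))
    (hf0 : f 0 = 0) (hd : deriv f 0 = 1) :
    ∃ H : ℂ → ℂ, AnalyticOnNhd ℂ H (ball 0 1) ∧ H 0 = 0 ∧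
      ∀ z ∈ ball (0 : ℂ) 1, f z = z * Complex.exp (H z) := by
  set q := dslope f 0 with hq
  have hqd : DifferentiableOn ℂ q (ball 0 1) :=
    (Complex.differentiableOn_dslope (ball_mem_nhds (0 : ℂ) one_pos)).2 hf.differentiableOn
  have hqa : AnalyticOnNhd ℂ q (ball 0 1) := hqd.analyticOnNhd isOpen_ball
  have hq0 : q 0 = 1 := by rw [hq, dslope_same, hd]
  have hqf : ∀ z, f z = z * q z := by
    intro z
    have := sub_smul_dslope f 0 z
    simpa [hf0] using this.symm
  have hqne : ∀ z ∈ ball (0 : ℂ) 1, q z ≠ 0 := by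
    intro z hz h0
    by_cases hz0 : z = 0
    · rw [hz0, hq0] at h0; exact one_ne_zero h0
    · exact hz0 (hfi hz zero_mem_B (by rw [hqf z, h0, mul_zero, hf0]))
  have hdd : DifferentiableOn ℂ (fun z => deriv q z / q z) (ball 0 1) := by
    intro z hz
    exact ((hqa.deriv z hz).differentiableAt.div (hqa z hz).differentiableAt
      (hqne z hz)).differentiableWithinAt
  obtain ⟨P, hP⟩ := hdd.isExactOn_ball
  have hPa : AnalyticOnNhd ℂ P (ball 0 1) := DifferentiableOn.analyticOnNhd
    (fun z hz => (hP z hz).differentiableAt.differentiableWithinAt) isOpen_ball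
  refine ⟨fun z => P z - P 0, fun z hz => (hPa z hz).sub analyticAt_const, by simp, ?_⟩
  have hder : ∀ z ∈ ball (0 : ℂ) 1,
      HasDerivAt (fun z => q z * Complex.exp (-(P z - P 0))) 0 z := by
    intro z hz
    have h1 := (hqa z hz).differentiableAt.hasDerivAt
    have h2 := (((hP z hz).sub_const (P 0)).neg).cexp
    refine (h1.mul h2).congr_deriv ?_
    have := hqne z hz
    field_simp
    simp
  intro z hz
  have hc : q z * Complex.exp (-(P z - P 0)) = q 0 * Complex.exp (-(P 0 - P 0)) :=
    isOpen_ball.is_const_of_deriv_eq_zero (convex_ball (0 : ℂ) 1).isPreconnected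
      (fun w hw => (hder w hw).differentiableAt.differentiableWithinAt)
      (fun w hw => (hder w hw).deriv) hz zero_mem_B
  rw [hq0, sub_self, neg_zero, Complex.exp_zero, mul_one, Complex.exp_neg] at hc
  rw [hqf z]
  congr 1
  field_simp at hc
  exact hc

/-- Second and third derivatives at `0` from a chain of derivatives on the disk. -/
lemma deriv_chain {F F₁ F₂ F₃ : ℂ → ℂ} (h1 : ∀ z ∈ ball (0 : ℂ) 1, HasDerivAt F (F₁ z) z)
    (h2 : ∀ z ∈ ball (0 : ℂ) 1, HasDerivAt F₁ (F₂ z) z)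
    (h3 : ∀ z ∈ ball (0 : ℂ) 1, HasDerivAt F₂ (F₃ z) z) {z : ℂ} (hz : z ∈ ball (0 : ℂ) 1) :
    deriv F z = F₁ z ∧ deriv (deriv F) z = F₂ z ∧ deriv (deriv (deriv F)) z = F₃ z := by
  have e1 : ∀ z ∈ ball (0 : ℂ) 1, deriv F z = F₁ z := fun z hz => (h1 z hz).deriv
  have e2 : ∀ z ∈ ball (0 : ℂ) 1, deriv (deriv F) z = F₂ z := fun z hz => by
    rw [← (h2 z hz).deriv]
    exact Filter.EventuallyEq.deriv_eq
      (Filter.eventually_of_mem (isOpen_ball.mem_nhds hz) e1)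
  have e3 : ∀ z ∈ ball (0 : ℂ) 1, deriv (deriv (deriv F)) z = F₃ z := fun z hz => by
    rw [← (h3 z hz).deriv]
    exact Filter.EventuallyEq.deriv_eq
      (Filter.eventually_of_mem (isOpen_ball.mem_nhds hz) e2)
  exact ⟨e1 z hz, e2 z hz, e3 z hz⟩

section Bounds
variable {T : ℕ → ℝ → ℝ} {S : ℕ → ℝ → ℝ} {ε : ℝ}

lemma mulexp_derivs {f H : ℂ → ℂ} (hH : AnalyticOnNhd ℂ H (ball 0 1)) (hH0 : H 0 = 0)
    (hfH : ∀ z ∈ ball (0 : ℂ) 1, f z = z * Complex.exp (H z)) :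
    deriv (deriv f) 0 = 2 * tc H 1 ∧
      deriv (deriv (deriv f)) 0 = 6 * (tc H 2 + tc H 1 ^ 2 / 2) := by
  set H₁ := deriv H with hH1
  set H₂ := deriv H₁ with hH2
  set H₃ := deriv H₂ with hH3
  have d0 : ∀ z ∈ ball (0 : ℂ) 1, HasDerivAt H (H₁ z) z := fun z hz =>
    (hH z hz).differentiableAt.hasDerivAt
  have d1 : ∀ z ∈ ball (0 : ℂ) 1, HasDerivAt H₁ (H₂ z) z := fun z hz =>
    (hH.deriv z hz).differentiableAt.hasDerivAt
  have d2 : ∀ z ∈ ball (0 : ℂ) 1, HasDerivAt H₂ (H₃ z) z := fun z hz =>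
    (hH.deriv.deriv z hz).differentiableAt.hasDerivAt
  have hE : ∀ z ∈ ball (0 : ℂ) 1,
      HasDerivAt (fun z => Complex.exp (H z)) (Complex.exp (H z) * H₁ z) z := fun z hz =>
    (d0 z hz).cexp
  have c1 : tc H 1 = H₁ 0 := by simp [tc, hH1]
  have c2 : tc H 2 = H₂ 0 / 2 := by simp [tc, hH1, hH2, iteratedDeriv_succ, Nat.factorial]
  have key := deriv_chain (F := f)
    (F₁ := fun z => Complex.exp (H z) * (1 + z * H₁ z))
    (F₂ := fun z => Complex.exp (H z) * (2 * H₁ z + z * H₁ z ^ 2 + z * H₂ z))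
    (F₃ := fun z => Complex.exp (H z) * (H₁ z * (2 * H₁ z + z * H₁ z ^ 2 + z * H₂ z) +
      (2 * H₂ z + (H₁ z ^ 2 + z * (2 * H₁ z * H₂ z)) + (H₂ z + z * H₃ z)))) ?_ ?_ ?_ zero_mem_B
  · obtain ⟨-, k2, k3⟩ := key
    rw [k2, k3, c1, c2]
    simp [hH0]
    ring
  · intro z hz
    have := (hasDerivAt_id z).mul (hE z hz)
    refine (this.congr_deriv ?_).congr_of_eventuallyEq
      (Filter.eventually_of_mem (isOpen_ball.mem_nhds hz) hfH)
    simp; ring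
  · intro z hz
    refine ((hE z hz).mul (((hasDerivAt_id z).mul (d1 z hz)).const_add 1)).congr_deriv ?_
    simp; ring
  · intro z hz
    refine ((hE z hz).mul ((((d1 z hz).const_mul 2).add ((hasDerivAt_id z).mul
      ((d1 z hz).pow 2))).add ((hasDerivAt_id z).mul (d2 z hz)))).congr_deriv ?_
    simp; ring

/-- The coefficient bounds `|a₂| ≤ 2` and `|a₃ - a₂²| ≤ 1` on the class `𝒮`. -/
lemma coeff_bounds (W : WeightSystem ε T S) (h0 : 0 < ε) (h1 : ε ≤ 1 / 4) {f : ℂ → ℂ}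
    (hf : AnalyticOnNhd ℂ f (ball 0 1)) (hfi : InjOn f (ball 0 1)) (hf0 : f 0 = 0)
    (hd : deriv f 0 = 1) :
    ‖deriv (deriv f) 0 / 2‖ ≤ 2 ∧
      ‖deriv (deriv (deriv f)) 0 / 6 - (deriv (deriv f) 0 / 2) ^ 2‖ ≤ 1 := by
  obtain ⟨H, hH, hH0, hfH⟩ := exists_log hf hfi hf0 hd
  have hP := PP_of_univalent W h0 h1 hf hfi hd hH hH0 hfH
  obtain ⟨k2, k3⟩ := mulexp_derivs hH hH0 hfH
  rw [k2, k3]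
  constructor
  · have := hP.one
    rwa [mul_div_cancel_left₀ _ (by norm_num : (2 : ℂ) ≠ 0)]
  · have := hP.two
    convert this using 2
    ring

end Bounds

/-! ### Translates by disk automorphisms -/

/-- The disk automorphism `z ↦ (z + x) / (1 + x z)`. -/
noncomputable def mob (x : ℝ) (z : ℂ) : ℂ := (z + x) / (1 + x * z)

section Mob
variable {x : ℝ} {z : ℂ}

lemma mob_den (h0 : 0 ≤ x) (h1 : x < 1) (hz : z ∈ ball (0 : ℂ) 1) : 1 + (x : ℂ) * z ≠ 0 := by
  refine one_add_ne_of_norm ?_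
  have hz' : ‖z‖ < 1 := by simpa using hz
  rw [norm_mul, Complex.norm_real, Real.norm_of_nonneg h0]
  nlinarith [norm_nonneg z]

lemma mob_mem (h0 : 0 ≤ x) (h1 : x < 1) (hz : z ∈ ball (0 : ℂ) 1) : mob x z ∈ ball (0 : ℂ) 1 := by
  have hz' : ‖z‖ < 1 := by simpa using hz
  have hd := mob_den h0 h1 hz
  have hsq : ‖z‖ ^ 2 < 1 := by nlinarith [norm_nonneg z]
  rw [mem_ball_zero_iff, mob, norm_div, div_lt_one (norm_pos_iff.2 hd)]
  refine lt_of_pow_lt_pow_left₀ 2 (norm_nonneg _) ?_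
  rw [Complex.sq_norm, Complex.normSq_apply] at hsq
  rw [Complex.sq_norm, Complex.sq_norm, Complex.normSq_apply, Complex.normSq_apply]
  simp
  have : 0 < (1 - x ^ 2) * (1 - (z.re * z.re + z.im * z.im)) :=
    mul_pos (by nlinarith) (by linarith)
  nlinarith

lemma mob_inj (h0 : 0 ≤ x) (h1 : x < 1) : InjOn (mob x) (ball 0 1) := by
  intro z hz w hw h
  have d1 := mob_den h0 h1 hz
  have d2 := mob_den h0 h1 hw
  unfold mob at h
  rw [div_eq_div_iff d1 d2] at h
  have h2 : (1 - (x : ℂ) ^ 2) * (z - w) = 0 := by linear_combination h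
  have hx : (1 - (x : ℂ) ^ 2) ≠ 0 := by
    have : (1 - x ^ 2 : ℝ) ≠ 0 := by nlinarith
    exact_mod_cast this
  exact sub_eq_zero.1 ((mul_eq_zero.1 h2).resolve_left hx)

lemma mob_hasDerivAt (h0 : 0 ≤ x) (h1 : x < 1) (hz : z ∈ ball (0 : ℂ) 1) :
    HasDerivAt (mob x) ((1 - (x : ℂ) ^ 2) / (1 + x * z) ^ 2) z := by
  have d1 := mob_den h0 h1 hz
  have a : HasDerivAt (fun z : ℂ => z + x) 1 z := (hasDerivAt_id z).add_const _
  have b : HasDerivAt (fun z : ℂ => 1 + x * z) x z := by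
    simpa using ((hasDerivAt_id z).const_mul (x : ℂ)).const_add 1
  refine (a.div b d1).congr_deriv ?_
  field_simp; ring

lemma mobpow_hasDerivAt (h0 : 0 ≤ x) (h1 : x < 1) (hz : z ∈ ball (0 : ℂ) 1) (n : ℕ) (c : ℂ) :
    HasDerivAt (fun z => c / (1 + x * z) ^ (n + 1)) (-(n + 1) * x * c / (1 + x * z) ^ (n + 2)) z := by
  have d1 := mob_den h0 h1 hz
  have b : HasDerivAt (fun z : ℂ => 1 + x * z) x z := by
    simpa using ((hasDerivAt_id z).const_mul (x : ℂ)).const_add 1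
  refine ((hasDerivAt_const z c).div (b.pow (n + 1)) (pow_ne_zero _ d1)).congr_deriv ?_
  simp
  field_simp
  ring

end Mob

section Extremal
variable {T : ℕ → ℝ → ℝ} {S : ℕ → ℝ → ℝ} {ε : ℝ} {f : ℂ → ℂ}

/-- The coefficient bounds for the normalized translates of `f` along `mob x`, expressed through
the derivatives of `f` at `x`. -/
lemma translate_bounds (W : WeightSystem ε T S) (h0 : 0 < ε) (h1 : ε ≤ 1 / 4)
    (hf : AnalyticOnNhd ℂ f (ball 0 1)) (hfi : InjOn f (ball 0 1)) {x : ℝ} (hx0 : 0 ≤ x)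
    (hx1 : x < 1) {y : ℂ}
    (hy : y = (1 - (x : ℂ) ^ 2) / 2 * (deriv (deriv f) x / deriv f x) - x) :
    ‖y‖ ≤ 2 ∧ ‖((1 - (x : ℂ) ^ 2) ^ 2 * (deriv (deriv (deriv f)) x / deriv f x) / 6 -
      x * (1 - (x : ℂ) ^ 2) * (deriv (deriv f) x / deriv f x) + x ^ 2) - y ^ 2‖ ≤ 1 := by
  set K : ℂ := 1 - (x : ℂ) ^ 2 with hK
  have hK0 : K ≠ 0 := by
    have : (1 - x ^ 2 : ℝ) ≠ 0 := by nlinarith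
    rw [hK]; exact_mod_cast this
  have hxm : (x : ℂ) ∈ ball (0 : ℂ) 1 := by simp [abs_of_nonneg hx0, hx1]
  set f₁ := deriv f with hf1
  set f₂ := deriv f₁ with hf2
  set f₃ := deriv f₂ with hf3
  have hne : f₁ x ≠ 0 := injOn_deriv_ne_zero one_pos hf hfi hxm
  have d0 : ∀ z ∈ ball (0 : ℂ) 1, HasDerivAt f (f₁ z) z := fun z hz =>
    (hf z hz).differentiableAt.hasDerivAt
  have d1 : ∀ z ∈ ball (0 : ℂ) 1, HasDerivAt f₁ (f₂ z) z := fun z hz =>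
    (hf.deriv z hz).differentiableAt.hasDerivAt
  have d2 : ∀ z ∈ ball (0 : ℂ) 1, HasDerivAt f₂ (f₃ z) z := fun z hz =>
    (hf.deriv.deriv z hz).differentiableAt.hasDerivAt
  have hm0 : mob x 0 = x := by simp [mob]
  set F : ℂ → ℂ := fun z => (f (mob x z) - f x) / (K * f₁ x) with hF
  have hKf : K * f₁ x ≠ 0 := mul_ne_zero hK0 hne
  have key : ∀ z ∈ ball (0 : ℂ) 1, _ := fun z hz => deriv_chain (F := F)
    (F₁ := fun z => f₁ (mob x z) * (K / (1 + x * z) ^ 2) / (K * f₁ x))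
    (F₂ := fun z => (f₂ (mob x z) * (K / (1 + x * z) ^ 2) * (K / (1 + x * z) ^ 2) +
      f₁ (mob x z) * (-2 * x * K / (1 + x * z) ^ 3)) / (K * f₁ x))
    (F₃ := fun z => (((f₃ (mob x z) * (K / (1 + x * z) ^ 2) * (K / (1 + x * z) ^ 2) +
      f₂ (mob x z) * (-2 * x * K / (1 + x * z) ^ 3)) * (K / (1 + x * z) ^ 2) +
      f₂ (mob x z) * (K / (1 + x * z) ^ 2) * (-2 * x * K / (1 + x * z) ^ 3)) +
      (f₂ (mob x z) * (K / (1 + x * z) ^ 2) * (-2 * x * K / (1 + x * z) ^ 3) +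
      f₁ (mob x z) * (-3 * x * (-2 * x * K) / (1 + x * z) ^ 4))) / (K * f₁ x))
    (by
      intro z hz
      exact (((d0 _ (mob_mem hx0 hx1 hz)).comp z (mob_hasDerivAt hx0 hx1 hz)).sub_const
        _).div_const _)
    (by
      intro z hz
      refine ((((d1 _ (mob_mem hx0 hx1 hz)).comp z (mob_hasDerivAt hx0 hx1 hz)).mul
        (mobpow_hasDerivAt hx0 hx1 hz 1 K)).div_const _).congr_deriv ?_
      norm_num [← hK])
    (by
      intro z hz
      have p2 : HasDerivAt (fun z : ℂ => K / (1 + x * z) ^ 2) (-2 * x * K / (1 + x * z) ^ 3) z :=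
        (mobpow_hasDerivAt hx0 hx1 hz 1 K).congr_deriv (by norm_num)
      have p3 : HasDerivAt (fun z : ℂ => -2 * x * K / (1 + x * z) ^ 3)
          (-3 * x * (-2 * x * K) / (1 + x * z) ^ 4) z :=
        (mobpow_hasDerivAt hx0 hx1 hz 2 (-2 * x * K)).congr_deriv (by norm_num)
      have hm := mob_hasDerivAt hx0 hx1 hz
      exact ((((((d2 _ (mob_mem hx0 hx1 hz)).comp z hm).mul p2).mul p2).add
        (((d1 _ (mob_mem hx0 hx1 hz)).comp z hm).mul p3)).div_const _).congr_deriv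
          (by simp only [Function.comp, Pi.mul_apply, ← hK]))
    hz
  obtain ⟨k1, k2, k3⟩ := key 0 zero_mem_B
  simp only [hm0, mul_zero, add_zero, one_pow, div_one] at k1 k2 k3
  have hFan : AnalyticOnNhd ℂ F (ball 0 1) := DifferentiableOn.analyticOnNhd (fun z hz =>
    ((((d0 _ (mob_mem hx0 hx1 hz)).comp z (mob_hasDerivAt hx0 hx1 hz)).sub_const
        _).div_const _).differentiableAt.differentiableWithinAt) isOpen_ball
  have hFi : InjOn F (ball 0 1) := by
    intro a ha b hb hab
    have : f (mob x a) = f (mob x b) := by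
      simpa [hF, hK0, hne, div_left_inj' hKf] using hab
    exact mob_inj hx0 hx1 ha hb (hfi (mob_mem hx0 hx1 ha) (mob_mem hx0 hx1 hb) this)
  have hb := coeff_bounds W h0 h1 hFan hFi (by simp [hF, hm0]) (by
    rw [k1]; field_simp)
  rw [k2, k3] at hb
  have e2 : (f₂ x * K * K + f₁ x * (-2 * x * K)) / (K * f₁ x) / 2 = y := by
    rw [hy]; field_simp; ring
  rw [e2] at hb
  refine ⟨hb.1, ?_⟩
  convert hb.2 using 3
  field_simp; ring

end Extremal

/-! ### Extremality of the Koebe function -/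

section Extremal
variable {T : ℕ → ℝ → ℝ} {S : ℕ → ℝ → ℝ} {ε : ℝ} {f : ℂ → ℂ}

/-- The second coefficient of the translate of `f` by `mob z`, for real `z`. -/
noncomputable def sec (f : ℂ → ℂ) (z : ℂ) : ℂ :=
  (1 - z ^ 2) / 2 * (deriv (deriv f) z / deriv f z) - z

/-- Writing `y` for the second coefficient of the translate, the bound `|a₃ - a₂²| ≤ 1` controls
`(1 - x²) y' = 3 (a₃ - a₂²) + y² - 1`, so `2 - Re y` grows at most exponentially. -/
lemma sec_deriv_bound (W : WeightSystem ε T S) (h0 : 0 < ε) (h1 : ε ≤ 1 / 4)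
    (hf : AnalyticOnNhd ℂ f (ball 0 1)) (hfi : InjOn f (ball 0 1)) {x : ℝ} (hx0 : 0 ≤ x)
    (hx1 : x < 1) :
    ‖sec f x‖ ≤ 2 ∧ ∃ D : ℝ, HasDerivAt (fun x : ℝ => 2 - (sec f x).re) D x ∧
      (1 - x ^ 2) * D ≤ 8 * (2 - (sec f x).re) := by
  obtain ⟨b1, b2⟩ := translate_bounds W h0 h1 hf hfi hx0 hx1 (y := sec f x) rfl
  refine ⟨b1, ?_⟩
  have hxm : (x : ℂ) ∈ ball (0 : ℂ) 1 := by simp [abs_of_nonneg hx0, hx1]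
  set f₁ := deriv f with hf1
  set f₂ := deriv f₁ with hf2
  set f₃ := deriv f₂ with hf3
  have hne : f₁ x ≠ 0 := injOn_deriv_ne_zero one_pos hf hfi hxm
  have d1 : HasDerivAt f₁ (f₂ x) x := (hf.deriv x hxm).differentiableAt.hasDerivAt
  have d2 : HasDerivAt f₂ (f₃ x) x := (hf.deriv.deriv x hxm).differentiableAt.hasDerivAt
  have hY : HasDerivAt (sec f) (-(x : ℂ) * (f₂ x / f₁ x) + (1 - (x : ℂ) ^ 2) / 2 *
      ((f₃ x * f₁ x - f₂ x * f₂ x) / f₁ x ^ 2) - 1) x := by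
    have p : HasDerivAt (fun z : ℂ => (1 - z ^ 2) / 2) (-(x : ℂ)) x := by
      refine (((hasDerivAt_id (x : ℂ)).pow 2).const_sub 1 |>.div_const 2).congr_deriv ?_
      simp
      ring
    refine ((p.mul (d2.div d1 hne)).sub (hasDerivAt_id (x : ℂ))).congr_deriv ?_
    simp
  set Y' : ℂ := -(x : ℂ) * (f₂ x / f₁ x) + (1 - (x : ℂ) ^ 2) / 2 *
      ((f₃ x * f₁ x - f₂ x * f₂ x) / f₁ x ^ 2) - 1 with hY'
  set y : ℂ := sec f x with hy
  set A : ℂ := ((1 - (x : ℂ) ^ 2) ^ 2 * (f₃ x / f₁ x) / 6 -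
      x * (1 - (x : ℂ) ^ 2) * (f₂ x / f₁ x) + x ^ 2) with hA
  have hid : ((1 - x ^ 2 : ℝ) : ℂ) * Y' = 3 * (A - y ^ 2) + y ^ 2 - 1 := by
    rw [hy, hA, hY', sec, ← hf1, ← hf2]
    push_cast
    field_simp
    ring
  refine ⟨-Y'.re, hY.real_of_complex.const_sub 2, ?_⟩
  have hre := congrArg Complex.re hid
  rw [Complex.re_ofReal_mul] at hre
  have hA1 : -1 ≤ (A - y ^ 2).re := by
    have := (Complex.abs_re_le_norm (A - y ^ 2)).trans b2
    exact (abs_le.1 this).1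
  have hsq : y.re * y.re + y.im * y.im ≤ 4 := by
    rw [← Complex.normSq_apply, ← Complex.sq_norm]
    nlinarith [norm_nonneg y]
  have hyre : (y ^ 2).re = y.re * y.re - y.im * y.im := by rw [pow_two, Complex.mul_re]
  have hr : (3 * (A - y ^ 2) + y ^ 2 - 1).re = 3 * (A - y ^ 2).re + (y ^ 2).re - 1 := by
    simp
  rw [hr, hyre] at hre
  have hy2 : y.re ≤ 2 := by nlinarith [mul_self_nonneg y.im]
  nlinarith

/-- Grönwall's inequality propagates `sec f 0 = 2` along the radius `[0, 1)`. -/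
lemma sec_eq_two (W : WeightSystem ε T S) (h0 : 0 < ε) (h1 : ε ≤ 1 / 4)
    (hf : AnalyticOnNhd ℂ f (ball 0 1)) (hfi : InjOn f (ball 0 1)) (hs : sec f 0 = 2) {b : ℝ}
    (hb0 : 0 ≤ b) (hb1 : b < 1) : sec f b = 2 := by
  have hB : ∀ x ∈ Icc 0 b, _ := fun x hx =>
    sec_deriv_bound W h0 h1 hf hfi hx.1 (hx.2.trans_lt hb1)
  have hle : ∀ x ∈ Icc 0 b, 0 ≤ 2 - (sec f (x : ℝ)).re := fun x hx => by
    have := (Complex.re_le_norm (sec f x)).trans (hB x hx).1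
    linarith
  set C : ℝ := 8 / (1 - b ^ 2) with hC
  have hb2 : 0 < 1 - b ^ 2 := by nlinarith
  have hE : ∀ x ∈ Icc 0 b, ∃ D, HasDerivAt
      (fun x : ℝ => (2 - (sec f x).re) * Real.exp (-(C * x))) D x ∧ D ≤ 0 := by
    intro x hx
    obtain ⟨-, D, hD, hDle⟩ := hB x hx
    have he : HasDerivAt (fun x : ℝ => Real.exp (-(C * x))) (Real.exp (-(C * x)) * (-C)) x := by
      have : HasDerivAt (fun x : ℝ => -(C * x)) (-C) x := by
        exact (((hasDerivAt_id x).const_mul C).neg).congr_deriv (by simp)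
      exact this.exp
    refine ⟨_, hD.mul he, ?_⟩
    have hx2 : 1 - b ^ 2 ≤ 1 - x ^ 2 := by nlinarith [hx.1, hx.2]
    have hd := hle x hx
    have hDC : D ≤ C * (2 - (sec f x).re) := by
      have k1 : D ≤ 8 * (2 - (sec f x).re) / (1 - x ^ 2) := by
        rw [le_div_iff₀ (by linarith)]; linarith
      refine k1.trans ?_
      rw [hC, div_mul_eq_mul_div]
      exact div_le_div_of_nonneg_left (by linarith) hb2 hx2
    have hp := Real.exp_pos (-(C * x))
    nlinarith
  have hanti := antitoneOn_of_deriv_nonpos (convex_Icc (0 : ℝ) b)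
    (f := fun x : ℝ => (2 - (sec f x).re) * Real.exp (-(C * x)))
    (fun x hx => by obtain ⟨D, hD, -⟩ := hE x hx; exact hD.continuousAt.continuousWithinAt)
    (fun x hx => by
      obtain ⟨D, hD, -⟩ := hE x (interior_subset hx)
      exact hD.differentiableAt.differentiableWithinAt)
    (fun x hx => by
      obtain ⟨D, hD, hle⟩ := hE x (interior_subset hx)
      rw [hD.deriv]; exact hle)
  have hbm : b ∈ Icc 0 b := ⟨hb0, le_rfl⟩
  have := hanti ⟨le_rfl, hb0⟩ hbm hb0
  simp only [Complex.ofReal_zero, hs] at this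
  norm_num at this
  have hre : (sec f b).re = 2 := by
    have hp := Real.exp_pos (-(C * b))
    have h3 := hle b hbm
    nlinarith
  have hn := (hB b hbm).1
  have hsq : (sec f b).re * (sec f b).re + (sec f b).im * (sec f b).im ≤ 4 := by
    rw [← Complex.normSq_apply, ← Complex.sq_norm]
    nlinarith [norm_nonneg (sec f b)]
  have him : (sec f b).im = 0 := by
    rw [hre] at hsq
    nlinarith [mul_self_nonneg (sec f b).im]
  exact Complex.ext (by simp [hre]) (by simp [him])

/-- A function in `𝒮` with second coefficient `2` is the Koebe function. -/
lemma koebe_of_two (W : WeightSystem ε T S) (h0 : 0 < ε) (h1 : ε ≤ 1 / 4)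
    (hf : AnalyticOnNhd ℂ f (ball 0 1)) (hfi : InjOn f (ball 0 1)) (hf0 : f 0 = 0)
    (hd : deriv f 0 = 1) (hdd : deriv (deriv f) 0 = 4) {z : ℂ} (hz : z ∈ ball (0 : ℂ) 1) :
    f z = z / (1 - z) ^ 2 := by
  have hs : sec f 0 = 2 := by simp [sec, hd, hdd]; norm_num
  have hreal : ∀ x : ℝ, 0 ≤ x → x < 1 →
      (1 - (x : ℂ) ^ 2) * deriv (deriv f) x = (4 + 2 * x) * deriv f x := by
    intro x hx0 hx1
    have h2 := sec_eq_two W h0 h1 hf hfi hs hx0 hx1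
    have hxm : (x : ℂ) ∈ ball (0 : ℂ) 1 := by simp [abs_of_nonneg hx0, hx1]
    have hne : deriv f x ≠ 0 := injOn_deriv_ne_zero one_pos hf hfi hxm
    unfold sec at h2
    field_simp at h2
    linear_combination h2
  have hode : EqOn (fun z => (1 - z ^ 2) * deriv (deriv f) z) (fun z => (4 + 2 * z) * deriv f z)
      (ball 0 1) := by
    refine AnalyticOnNhd.eqOn_of_preconnected_of_frequently_eq (z₀ := 0) ?_ ?_
      (convex_ball (0 : ℂ) 1).isPreconnected zero_mem_B ?_
    · intro z hz
      exact (analyticAt_const.sub (analyticAt_id.pow 2)).mul (hf.deriv.deriv z hz)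
    · intro z hz
      exact (analyticAt_const.add (analyticAt_const.mul analyticAt_id)).mul (hf.deriv z hz)
    · have ht : Filter.Tendsto (fun n : ℕ => ((1 / ((n : ℝ) + 2) : ℝ) : ℂ)) Filter.atTop
          (𝓝[≠] 0) := by
        refine tendsto_nhdsWithin_iff.2 ⟨?_, Filter.Eventually.of_forall fun n => ?_⟩
        · have h3 := (tendsto_one_div_add_atTop_nhds_zero_nat (𝕜 := ℝ)).comp
            (Filter.tendsto_add_atTop_nat 1)
          have h4 := (Complex.continuous_ofReal.tendsto 0).comp h3
          rw [Complex.ofReal_zero] at h4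
          refine h4.congr fun n => ?_
          simp only [Function.comp]
          push_cast
          rw [add_assoc, one_add_one_eq_two]
        · have : (1 / ((n : ℝ) + 2) : ℝ) ≠ 0 := by positivity
          exact Complex.ofReal_ne_zero.2 this
      refine ht.frequently (Filter.Frequently.of_forall fun n => ?_)
      refine hreal _ (by positivity) ?_
      rw [div_lt_one (by positivity)]
      linarith [(n.cast_nonneg : (0 : ℝ) ≤ n)]
  have n1 : ∀ z ∈ ball (0 : ℂ) 1, 1 + z ≠ 0 := fun z hz => one_add_ne_of_norm (by simpa using hz)
  have n2 : ∀ z ∈ ball (0 : ℂ) 1, 1 - z ≠ 0 := fun z hz => one_sub_ne_of_norm (by simpa using hz)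
  have q1 : ∀ z : ℂ, HasDerivAt (fun z : ℂ => 1 + z) 1 z := fun z => (hasDerivAt_id z).const_add 1
  have q2 : ∀ z : ℂ, HasDerivAt (fun z : ℂ => 1 - z) (-1) z := fun z =>
    (hasDerivAt_id z).const_sub 1
  -- the Koebe function has derivative `(1 + z)/(1 - z)³`, the integrating factor of the equation
  have hder1 : ∀ z ∈ ball (0 : ℂ) 1,
      HasDerivAt (fun z => deriv f z * (1 - z) ^ 3 / (1 + z)) 0 z := by
    intro z hz
    have a1 := (hf.deriv z hz).differentiableAt.hasDerivAt
    refine ((a1.mul ((q2 z).pow 3)).div (q1 z) (n1 z hz)).congr_deriv ?_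
    have e := hode hz
    simp only at e
    have := n1 z hz
    field_simp
    simp
    linear_combination (1 - z) ^ 2 * e
  have hf' : ∀ z ∈ ball (0 : ℂ) 1, deriv f z = (1 + z) / (1 - z) ^ 3 := by
    intro z hz
    have hc : deriv f z * (1 - z) ^ 3 / (1 + z) = deriv f 0 * (1 - 0) ^ 3 / (1 + 0) :=
      isOpen_ball.is_const_of_deriv_eq_zero (convex_ball (0 : ℂ) 1).isPreconnected
        (fun w hw => (hder1 w hw).differentiableAt.differentiableWithinAt)
        (fun w hw => (hder1 w hw).deriv) hz zero_mem_B
    have := n1 z hz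
    have := n2 z hz
    rw [hd] at hc
    field_simp at hc ⊢
    linear_combination hc
  have hder2 : ∀ z ∈ ball (0 : ℂ) 1, HasDerivAt (fun z => f z - z / (1 - z) ^ 2) 0 z := by
    intro z hz
    have a1 := (hf z hz).differentiableAt.hasDerivAt
    have a2 := (hasDerivAt_id z).div ((q2 z).pow 2) (pow_ne_zero 2 (n2 z hz))
    refine (a1.sub a2).congr_deriv ?_
    rw [hf' z hz]
    have := n2 z hz
    simp
    field_simp
    ring
  have hc : f z - z / (1 - z) ^ 2 = f 0 - 0 / (1 - 0) ^ 2 :=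
    isOpen_ball.is_const_of_deriv_eq_zero (convex_ball (0 : ℂ) 1).isPreconnected
      (fun w hw => (hder2 w hw).differentiableAt.differentiableWithinAt)
      (fun w hw => (hder2 w hw).deriv) hz zero_mem_B
  rw [hf0, zero_div, sub_zero] at hc
  exact sub_eq_zero.1 hc

/-- Equality in `|a₂| ≤ 2` forces a rotation of the Koebe function. -/
lemma koebe_of_norm_two (W : WeightSystem ε T S) (h0 : 0 < ε) (h1 : ε ≤ 1 / 4)
    (hf : AnalyticOnNhd ℂ f (ball 0 1)) (hfi : InjOn f (ball 0 1)) (hf0 : f 0 = 0)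
    (hd : deriv f 0 = 1) (hdd : ‖deriv (deriv f) 0‖ = 4) :
    ∃ θ : ℝ, EqOn f (fun z => z / (1 - Complex.exp (θ * Complex.I) * z) ^ 2) (ball 0 1) := by
  set a : ℂ := deriv (deriv f) 0 with ha
  have ha0 : a ≠ 0 := by intro h; rw [h, norm_zero] at hdd; norm_num at hdd
  set ζ : ℂ := 4 / a with hζ
  have hζn : ‖ζ‖ = 1 := by rw [hζ, norm_div, hdd]; norm_num
  have hζ0 : ζ ≠ 0 := div_ne_zero (by norm_num) ha0
  have hm : ∀ z ∈ ball (0 : ℂ) 1, ζ * z ∈ ball (0 : ℂ) 1 := by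
    intro z hz; simpa [hζn] using hz
  have hl : ∀ z : ℂ, HasDerivAt (fun z => ζ * z) ζ z := fun z => by
    simpa using (hasDerivAt_id z).const_mul ζ
  have hk : ∀ z ∈ ball (0 : ℂ) 1, f (ζ * z) / ζ = z / (1 - z) ^ 2 := by
    have key : ∀ z ∈ ball (0 : ℂ) 1, _ := fun z hz => deriv_chain (F := fun z => f (ζ * z) / ζ)
      (F₁ := fun z => deriv f (ζ * z)) (F₂ := fun z => deriv (deriv f) (ζ * z) * ζ)
      (F₃ := fun z => deriv (deriv (deriv f)) (ζ * z) * ζ * ζ)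
      (fun z hz => (((hf _ (hm z hz)).differentiableAt.hasDerivAt.comp z (hl z)).div_const
        ζ).congr_deriv (by field_simp))
      (fun z hz => (hf.deriv _ (hm z hz)).differentiableAt.hasDerivAt.comp z (hl z))
      (fun z hz => ((hf.deriv.deriv _ (hm z hz)).differentiableAt.hasDerivAt.comp z
        (hl z)).mul_const ζ) hz
    obtain ⟨k1, k2, -⟩ := key 0 zero_mem_B
    simp only [mul_zero] at k1 k2
    intro z hz
    refine koebe_of_two W h0 h1 (f := fun z => f (ζ * z) / ζ) ?_ ?_ (by simp [hf0])
      (by rw [k1, hd]) (by rw [k2, ← ha, hζ]; field_simp) hz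
    · intro w hw
      exact ((hf _ (hm w hw)).comp_of_eq (analyticAt_const.mul analyticAt_id) rfl).div
        analyticAt_const hζ0
    · intro u hu v hv huv
      have e : f (ζ * u) = f (ζ * v) := by simpa [div_left_inj' hζ0] using huv
      exact mul_left_cancel₀ hζ0 (hfi (hm u hu) (hm v hv) e)
  have hinv : ‖ζ⁻¹‖ = 1 := by rw [norm_inv, hζn, inv_one]
  refine ⟨(ζ⁻¹).arg, fun u hu => ?_⟩
  have harg : Complex.exp ((ζ⁻¹).arg * Complex.I) = ζ⁻¹ := by
    have := Complex.norm_mul_exp_arg_mul_I (ζ⁻¹)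
    rwa [hinv, Complex.ofReal_one, one_mul] at this
  have hum : ζ⁻¹ * u ∈ ball (0 : ℂ) 1 := by simpa [hζn] using hu
  have e := hk _ hum
  rw [mul_inv_cancel_left₀ hζ0, div_eq_iff hζ0] at e
  simp only [harg, e]
  field_simp

end Extremal

/-! ### The value of the sum of weights -/

lemma summable_weights : Summable (fun n : ℕ => 1 / (((n : ℝ) + 1) ^ 2 + 4 / 3)) := by
  have h := (summable_nat_add_iff 1).2 (Real.summable_one_div_nat_pow.2 (by norm_num : 1 < 2))
  refine Summable.of_nonneg_of_le (fun n => by positivity) (fun n => ?_) h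
  push_cast
  exact one_div_le_one_div_of_le (by positivity) (by linarith)

/-- The Mittag-Leffler expansion of the cotangent at the point `2i/√3`. -/
lemma tsum_weights : ∑' n : ℕ, 1 / (((n : ℝ) + 1) ^ 2 + 4 / 3) =
    ((2 * Real.pi / Real.sqrt 3) * (Real.cosh (2 * Real.pi / Real.sqrt 3) /
      Real.sinh (2 * Real.pi / Real.sqrt 3)) - 1) / (8 / 3) := by
  set b : ℝ := 2 / Real.sqrt 3 with hb
  have h3 : (0 : ℝ) < Real.sqrt 3 := Real.sqrt_pos.2 (by norm_num)
  have hb0 : 0 < b := by rw [hb]; positivity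
  have hb2 : b ^ 2 = 4 / 3 := by rw [hb, div_pow, Real.sq_sqrt (by norm_num)]; norm_num
  have hbπ : 2 * Real.pi / Real.sqrt 3 = Real.pi * b := by rw [hb]; ring
  rw [hbπ]
  have hbc : (b : ℂ) ≠ 0 := by exact_mod_cast hb0.ne'
  have hb2c : (b : ℂ) ^ 2 = 4 / 3 := by
    rw [← Complex.ofReal_pow, hb2]; norm_num
  have hx : ((b : ℂ) * Complex.I) ∈ Complex.integerComplement := by
    rintro ⟨n, hn⟩
    have := congrArg Complex.im hn
    simp at this
    exact hb0.ne this
  have hs := cot_series_rep' hx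
  have hsinh : 0 < Real.sinh (Real.pi * b) := Real.sinh_pos_iff.2 (by positivity)
  have hsc : (Real.sinh (Real.pi * b) : ℂ) ≠ 0 := by exact_mod_cast hsinh.ne'
  have hcot : Complex.cot (Real.pi * (b * Complex.I)) =
      -Complex.I * (Real.cosh (Real.pi * b) / Real.sinh (Real.pi * b) : ℝ) := by
    have e : (Real.pi : ℂ) * (b * Complex.I) = ((Real.pi * b : ℝ) : ℂ) * Complex.I := by
      push_cast; ring
    rw [e, Complex.cot, Complex.cos_mul_I, Complex.sin_mul_I, ← Complex.ofReal_cosh,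
      ← Complex.ofReal_sinh]
    push_cast at hsc ⊢
    field_simp
    simp
  have hterm : ∀ n : ℕ, (1 / ((b : ℂ) * Complex.I - (n + 1)) + 1 / ((b : ℂ) * Complex.I + (n + 1))) =
      (-2 * b * Complex.I) * ((1 / (((n : ℝ) + 1) ^ 2 + 4 / 3) : ℝ) : ℂ) := by
    intro n
    have hp : (((n : ℝ) + 1) ^ 2 + 4 / 3 : ℝ) ≠ 0 := by positivity
    have hpc : ((n : ℂ) + 1) ^ 2 + 4 / 3 ≠ 0 := by
      have := Complex.ofReal_ne_zero.2 hp
      push_cast at this; exact this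
    have n0 : ((n : ℝ) + 1) ≠ 0 := by positivity
    have m1 : (b : ℂ) * Complex.I - (n + 1) ≠ 0 := by
      intro h; have := congrArg Complex.re h; simp at this; apply n0; linarith
    have m2 : (b : ℂ) * Complex.I + (n + 1) ≠ 0 := by
      intro h; have := congrArg Complex.re h; simp at this; apply n0; linarith
    rw [one_div_add_one_div m1 m2]
    push_cast
    rw [mul_one_div, div_eq_div_iff (mul_ne_zero m1 m2) hpc]
    have hI : Complex.I ^ 2 = -1 := Complex.I_sq
    linear_combination (2 * (b : ℂ) * Complex.I) * ((b : ℂ) ^ 2 * hI - hb2c)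
  rw [tsum_congr hterm, tsum_mul_left, ← Complex.ofReal_tsum, hcot] at hs
  have him := congrArg Complex.im hs
  set X : ℝ := ∑' n : ℕ, 1 / (((n : ℝ) + 1) ^ 2 + 4 / 3) with hX
  set C : ℝ := Real.cosh (Real.pi * b) / Real.sinh (Real.pi * b) with hC
  have e1 : (Real.pi : ℂ) * (-Complex.I * (C : ℂ)) - 1 / ((b : ℂ) * Complex.I) =
      ((1 / b - Real.pi * C : ℝ) : ℂ) * Complex.I := by
    push_cast
    field_simp
    rw [Complex.I_sq]; ring
  have e2 : -2 * (b : ℂ) * Complex.I * (X : ℂ) = ((-2 * b * X : ℝ) : ℂ) * Complex.I := by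
    push_cast; ring
  rw [e1, e2] at him
  simp only [Complex.im_ofReal_mul, Complex.I_im, mul_one] at him
  rw [eq_div_iff (by norm_num)]
  field_simp at him
  linear_combination him - 2 * X * hb2

/-! ### Summation -/

/-- At time `0` the functional is four times the difference of the two partial sums, corrected by
the deficit `ε` in the first weight. -/
lemma EE_eval {ε : ℝ} {T S : ℕ → ℝ → ℝ} (W : WeightSystem ε T S) {c γ : ℕ → ℂ}
    (hc : ∀ k, 1 ≤ k → c k = 2 * γ k) (N : ℕ) (hN : 1 ≤ N) :
    EE T c N 0 = 4 * (∑ n ∈ Finset.range N,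
        (((n : ℝ) + 1) ^ 2 / (((n : ℝ) + 1) ^ 2 + 4 / 3)) * ‖γ (n + 1)‖ ^ 2 -
      ∑ n ∈ Finset.range N, 1 / (((n : ℝ) + 1) ^ 2 + 4 / 3)) - 4 * ε * (‖γ 1‖ ^ 2 - 1) := by
  unfold EE
  have hn : ∀ k, 1 ≤ k → ‖c k‖ ^ 2 = 4 * ‖γ k‖ ^ 2 := by
    intro k hk
    rw [hc k hk, norm_mul, mul_pow]; norm_num
  induction N, hN using Nat.le_induction with
  | base =>
    simp [W.T_zero 1 le_rfl, hn 1 le_rfl]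
    ring
  | succ N hN ih =>
    rw [Finset.sum_Icc_succ_top (by lia), ih, Finset.sum_range_succ, Finset.sum_range_succ,
      W.T_zero (N + 1) (by lia), hn (N + 1) (by lia), if_neg (by lia)]
    push_cast
    have h1 : ((N : ℝ) + 1) ≠ 0 := by positivity
    have h2 : ((N : ℝ) + 1) ^ 2 + 4 / 3 ≠ 0 := by positivity
    field_simp
    ring_nf

/-- The inequality and its equality case with the right-hand side written as a series. Letting
`N → ∞` in the estimate `EE ≤ 4 / N` gives the inequality with the extra term `ε (|γ₁|² - 1) ≤ 0`,
so equality forces `|γ₁| = 1`, that is `|a₂| = 2`. -/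
theorem main_aux {f g : ℂ → ℂ} {γ : ℕ → ℂ} (hf : AnalyticOnNhd ℂ f (ball 0 1))
    (hfi : InjOn f (ball 0 1)) (hf0 : f 0 = 0) (hd : deriv f 0 = 1)
    (hg : AnalyticOnNhd ℂ g (ball 0 1)) (hg0 : g 0 = 0)
    (hfg : ∀ z ∈ ball (0 : ℂ) 1, z ≠ 0 → Complex.exp (g z) = f z / z)
    (hγ : ∀ n : ℕ, 1 ≤ n → iteratedDeriv n g 0 = (n.factorial : ℂ) * (2 * γ n)) :
    (∑' n : ℕ, (((n : ℝ) + 1) ^ 2 / (((n : ℝ) + 1) ^ 2 + 4 / 3)) * ‖γ (n + 1)‖ ^ 2 ≤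
      ∑' n : ℕ, 1 / (((n : ℝ) + 1) ^ 2 + 4 / 3)) ∧
    (∑' n : ℕ, (((n : ℝ) + 1) ^ 2 / (((n : ℝ) + 1) ^ 2 + 4 / 3)) * ‖γ (n + 1)‖ ^ 2 =
      ∑' n : ℕ, 1 / (((n : ℝ) + 1) ^ 2 + 4 / 3) →
      ∃ θ : ℝ, EqOn f (fun z => z / (1 - Complex.exp (θ * Complex.I) * z) ^ 2) (ball 0 1)) := by
  obtain ⟨ε, h0, h1, T, S, W⟩ := exists_weightSystem
  have hfH : ∀ z ∈ ball (0 : ℂ) 1, f z = z * Complex.exp (g z) := by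
    intro z hz
    by_cases hz0 : z = 0
    · simp [hz0, hf0]
    · rw [hfg z hz hz0]; field_simp
  have hc : ∀ k, 1 ≤ k → tc g k = 2 * γ k := by
    intro k hk
    have : (k.factorial : ℂ) ≠ 0 := by exact_mod_cast k.factorial_ne_zero
    rw [tc, hγ k hk]; field_simp
  have hP := PP_of_univalent W h0 h1 hf hfi hd hg hg0 hfH
  have hγ1 : ‖γ 1‖ ≤ 1 := by
    have := hP.one
    rw [hc 1 le_rfl, norm_mul] at this
    norm_num at this
    linarith
  have hγ1' : ‖γ 1‖ ^ 2 - 1 ≤ 0 := by nlinarith [norm_nonneg (γ 1)]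
  set a : ℕ → ℝ := fun n => (((n : ℝ) + 1) ^ 2 / (((n : ℝ) + 1) ^ 2 + 4 / 3)) * ‖γ (n + 1)‖ ^ 2
    with ha
  set b : ℕ → ℝ := fun n => 1 / (((n : ℝ) + 1) ^ 2 + 4 / 3) with hb
  have hbs : Summable b := summable_weights
  have hB : ∀ N, ∑ n ∈ Finset.range N, b n ≤ ∑' n, b n := fun N =>
    hbs.sum_le_tsum _ (fun n _ => by rw [hb]; positivity)
  have hpart : ∀ N : ℕ, 1 ≤ N → ∑ n ∈ Finset.range N, a n ≤
      ∑' n, b n + ε * (‖γ 1‖ ^ 2 - 1) + 1 / N := by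
    intro N hN
    have h2 := hP.en 0 le_rfl N hN
    rw [EE_eval W hc N hN] at h2
    have h3 := hB N
    have h4 : (4 : ℝ) / N = 4 * (1 / N) := by ring
    rw [h4] at h2
    simp only [ha]
    simp only [hb] at h3 ⊢
    linarith
  have hann : ∀ n, 0 ≤ a n := fun n => by rw [ha]; positivity
  have has : Summable a := by
    refine summable_of_sum_range_le (c := ∑' n, b n + 1) hann fun N => ?_
    rcases Nat.eq_zero_or_pos N with rfl | hN
    · have := hB 0
      simp at this ⊢; linarith
    · have h2 := hpart N hN
      have h3 : (1 : ℝ) / N ≤ 1 := by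
        rw [div_le_one (by exact_mod_cast hN)]; exact_mod_cast hN
      have h4 := mul_nonneg h0.le (neg_nonneg.2 hγ1')
      linarith
  have hle : ∑' n, a n ≤ ∑' n, b n + ε * (‖γ 1‖ ^ 2 - 1) := by
    have hl : Filter.Tendsto (fun N : ℕ => ∑' n, b n + ε * (‖γ 1‖ ^ 2 - 1) + 1 / (N : ℝ))
        Filter.atTop (𝓝 (∑' n, b n + ε * (‖γ 1‖ ^ 2 - 1) + 0)) :=
      tendsto_const_nhds.add tendsto_one_div_atTop_nhds_zero_nat
    rw [add_zero] at hl
    exact le_of_tendsto_of_tendsto has.hasSum.tendsto_sum_nat hl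
      (Filter.eventually_atTop.2 ⟨1, hpart⟩)
  have hneg : ε * (‖γ 1‖ ^ 2 - 1) ≤ 0 := by nlinarith
  refine ⟨by linarith, fun heq => ?_⟩
  have hz : ‖γ 1‖ ^ 2 - 1 = 0 := by
    rw [heq] at hle
    nlinarith
  have hone : ‖γ 1‖ = 1 := by nlinarith [norm_nonneg (γ 1)]
  refine koebe_of_norm_two W h0 h1 hf hfi hf0 hd ?_
  rw [(mulexp_derivs hg hg0 hfH).1, hc 1 le_rfl, norm_mul, norm_mul, hone]
  norm_num

theorem logcoeff_nsq_over_nsq_add_four_thirds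
    (f : ℂ → ℂ) (γ : ℕ → ℂ) (hf : InClassS f) (hγ : IsLogCoeffs f γ) :
    (∑' n : ℕ, (((n : ℝ) + 1) ^ 2 / (((n : ℝ) + 1) ^ 2 + 4 / 3)) * ‖γ (n + 1)‖ ^ 2 ≤ ((2 * Real.pi / Real.sqrt 3) * (Real.cosh (2 * Real.pi / Real.sqrt 3) / Real.sinh (2 * Real.pi / Real.sqrt 3)) - 1) / (8 / 3)) ∧
    (∑' n : ℕ, (((n : ℝ) + 1) ^ 2 / (((n : ℝ) + 1) ^ 2 + 4 / 3)) * ‖γ (n + 1)‖ ^ 2 = ((2 * Real.pi / Real.sqrt 3) * (Real.cosh (2 * Real.pi / Real.sqrt 3) / Real.sinh (2 * Real.pi / Real.sqrt 3)) - 1) / (8 / 3) → IsKoebeRotation f) := by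
  obtain ⟨h1, h2, h3, h4⟩ := hf
  obtain ⟨g, hg, hg0, hfg, hγn⟩ := hγ
  rw [← tsum_weights]
  exact main_aux h1 h2 h3 h4 hg hg0 hfg hγn
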